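/- arXiv:2005.05492 — 9 statements merged into one kernel-verified Lean document; each statement's English description precedes it below -/
import Mathlib

section
/- Let n ≥ 3 and call a subset F of Ê_n a face if either F = Ê_n or there exists a linear functional ℓ on the real vector space of n×n real matrices with zero diagonal such that ℓ(x) ≥ 0 for all x ∈ Ê_n and F = {x ∈ Ê_n : ℓ(x) = 0}. Then for every bijection Φ from the set of faces of Ê_n to itself such that both Φ and Φ⁻¹ preserve inclusion, there exists a permutation π of Fin n such that either Φ(F) = {ψ(A) : A ∈ F} for all faces F, where ψ(A)_{π(i)π(j)} = A_{ij} for all i ≠ j, or Φ(F) = {ψ(A) : A ∈ F} for all faces F, where ψ(A)_{π(i)π(j)} = A_{ji} for all i ≠ j. (The combinatorial symmetry group of Ê_n is S_n × ℤ₂, generated by coordinate permutations and the transpose map.) -/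
/-- The cone of quasi-semimetrics on `n` points. -/
def QSM (n : ℕ) : Set (Fin n → Fin n → ℝ) :=
  {A | (∀ i, A i i = 0) ∧ (∀ i j : Fin n, i ≠ j → 0 ≤ A i j) ∧
    (∀ i j k : Fin n, i ≠ j → j ≠ k → i ≠ k → A i k ≤ A i j + A j k)}

/-- Faces of the cone `QSM n`: either the improper face `QSM n` itself, or the zero
set in `QSM n` of a linear functional which is nonnegative on `QSM n`. -/
def IsFace (n : ℕ) (F : Set (Fin n → Fin n → ℝ)) : Prop :=
  F = QSM n ∨ ∃ ℓ : (Fin n → Fin n → ℝ) →ₗ[ℝ] ℝ,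
    (∀ x ∈ QSM n, 0 ≤ ℓ x) ∧ F = {x ∈ QSM n | ℓ x = 0}

/-!
A symmetry of the face poset permutes the coatoms, which are the facets `A i j = 0` and
`A i k = A i j + A j k`, and it preserves the hull of two facets, that is, the set of facets
containing their intersection. Points of the cone given by the cuts `{p}` and `{p}ᶜ` show that the
members of a hull take their source and target from the two given facets, which bounds its size.
The facets of `A i j` and `A j i` have at least six facets in their hull, because
`A i j = A j i = 0` makes `i` and `j` indistinguishable from a third point, while any other partner
of `A i j` gives at most five. A triangle inequality has at least two partners with six facets in
the hull. So a symmetry acts on the arcs `i → j` and commutes with their reversal. The hull of two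
arcs contains a triangle inequality when they are consecutive, `i → j → k`, and only when one ends
where the other starts, so the action on arcs is induced by a permutation of the points, up to a
global reversal. This determines the action on triangle inequalities, and a face is determined by
the facets containing it.
-/

section PolyhedralCone

variable {𝕜 E ι : Type*} [Field 𝕜] [LinearOrder 𝕜] [IsStrictOrderedRing 𝕜] [AddCommGroup E]
  [Module 𝕜 E]

/-- The polyhedral cone cut out of the subspace `V` by the inequalities `0 ≤ f c x`. -/
def polyhedralCone (V : Submodule 𝕜 E) (f : ι → Module.Dual 𝕜 E) : PointedCone 𝕜 E :=
  V ⊓ PointedCone.dual LinearMap.id (Set.range f)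

lemma mem_polyhedralCone {V : Submodule 𝕜 E} {f : ι → Module.Dual 𝕜 E} {x : E} :
    x ∈ polyhedralCone V f ↔ x ∈ V ∧ ∀ c, 0 ≤ f c x := by
  simp [polyhedralCone]

-- A sum `x` of points of the face that dominates `y` in every inequality has `x - y` in the cone.
lemma eq_zero_iff_forall_tight [Finite ι] {V : Submodule 𝕜 E} {f : ι → Module.Dual 𝕜 E}
    {ℓ : Module.Dual 𝕜 E} (hℓ : ∀ x ∈ polyhedralCone V f, 0 ≤ ℓ x) {y : E}
    (hy : y ∈ polyhedralCone V f) :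
    ℓ y = 0 ↔ ∀ c, (∀ x ∈ polyhedralCone V f, ℓ x = 0 → f c x = 0) → f c y = 0 := by
  refine ⟨fun h c hc ↦ hc y hy h, fun h ↦ le_antisymm ?_ (hℓ y hy)⟩
  have exists_dominating (c : ι) : ∃ z ∈ polyhedralCone V f, ℓ z = 0 ∧ f c y ≤ f c z := by
    by_cases hc : ∀ x ∈ polyhedralCone V f, ℓ x = 0 → f c x = 0
    · exact ⟨0, zero_mem _, map_zero _, by rw [h c hc, map_zero]⟩
    · push Not at hc
      obtain ⟨z, hz, hℓz, hcz⟩ := hc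
      have hr : 0 ≤ f c y / f c z :=
        div_nonneg ((mem_polyhedralCone.1 hy).2 c) ((mem_polyhedralCone.1 hz).2 c)
      exact ⟨(f c y / f c z) • z, Submodule.smul_mem _ (⟨_, hr⟩ : {r : 𝕜 // 0 ≤ r}) hz,
        by simp [hℓz], by simp [hcz]⟩
  choose z hz hℓz hyz using exists_dominating
  have := Fintype.ofFinite ι
  have hx : ∑ c, z c ∈ polyhedralCone V f := Submodule.sum_mem _ fun c _ ↦ hz c
  have hxy : ∑ c, z c - y ∈ polyhedralCone V f := by
    refine mem_polyhedralCone.2 ⟨V.sub_mem (mem_polyhedralCone.1 hx).1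
      (mem_polyhedralCone.1 hy).1, fun c ↦ ?_⟩
    rw [map_sub, map_sum, sub_nonneg]
    exact (hyz c).trans (Finset.single_le_sum (f := fun d ↦ f c (z d))
      (fun d _ ↦ (mem_polyhedralCone.1 (hz d)).2 c) (Finset.mem_univ c))
  simpa [hℓz] using hℓ _ hxy

end PolyhedralCone

lemma forall_eq_or_forall_eq_of_forall_or {α β γ : Type*} {g : α → β} {h : α → γ}
    (hgh : ∀ a b, g a = g b ∨ h a = h b) : (∀ a b, g a = g b) ∨ ∀ a b, h a = h b := by
  by_contra! ⟨⟨a, b, hab⟩, c, d, hcd⟩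
  have h_ab := (hgh a b).resolve_left hab
  have g_cd := (hgh c d).resolve_right hcd
  grind

section OffDiagonal

variable {α β : Type*} {f : α → α → β}

lemma row_or_col_const (hα : ∀ i j : α, ∃ k, k ≠ i ∧ k ≠ j)
    (hconsec : ∀ i j k, i ≠ j → j ≠ k → i ≠ k → f j i = f j k ∨ f i j = f k j) (j : α) :
    (∃ p, ∀ i, i ≠ j → f j i = p) ∨ ∃ p, ∀ i, i ≠ j → f i j = p := by
  obtain ⟨k, hk, -⟩ := hα j j
  refine (forall_eq_or_forall_eq_of_forall_or (α := {i // i ≠ j}) (g := fun i ↦ f j i)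
    (h := fun i ↦ f i j) fun i k ↦ ?_).imp (fun h ↦ ⟨f j k, fun i hi ↦ h ⟨i, hi⟩ ⟨k, hk⟩⟩)
    fun h ↦ ⟨f k j, fun i hi ↦ h ⟨i, hi⟩ ⟨k, hk⟩⟩
  by_cases hik : i = k
  · exact .inl (by rw [hik])
  · exact hconsec i j k i.2 k.2.symm (Subtype.coe_ne_coe.2 hik)

lemma not_row_const_of_col_const (hα : ∀ i j : α, ∃ k, k ≠ i ∧ k ≠ j)
    (hf : ∀ i j, i ≠ j → f i j ≠ f j i)
    (hconst : ∀ j, (∃ p, ∀ i, i ≠ j → f j i = p) ∨ ∃ p, ∀ i, i ≠ j → f i j = p)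
    {j l : α} (hjl : j ≠ l) {q : β} (hq : ∀ i, i ≠ l → f i l = q) :
    ¬∃ p, ∀ i, i ≠ j → f j i = p := by
  rintro ⟨p, hp⟩
  obtain ⟨k, hkj, hkl⟩ := hα j l
  have hpq : p = q := (hp l hjl.symm).symm.trans (hq j hjl)
  rcases hconst k with ⟨r, hr⟩ | ⟨r, hr⟩
  · refine hf j k hkj.symm ?_
    rw [hp k hkj, hr j hkj.symm, ← hr l hkl.symm, hq k hkl, hpq]
  · refine hf l k hkl.symm ?_
    rw [hr l hkl.symm, ← hr j hkj.symm, hp k hkj, hq k hkl, hpq]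

lemma exists_injective_eq_left_or_eq_right (hα : ∀ i j : α, ∃ k, k ≠ i ∧ k ≠ j)
    (hf : ∀ i j, i ≠ j → f i j ≠ f j i)
    (hconsec : ∀ i j k, i ≠ j → j ≠ k → i ≠ k → f j i = f j k ∨ f i j = f k j) :
    ∃ π : α → β, π.Injective ∧
      ((∀ i j, i ≠ j → f i j = π i) ∨ ∀ i j, i ≠ j → f i j = π j) := by
  have hconst := row_or_col_const hα hconsec
  by_cases hrow : ∀ j, ∃ p, ∀ i, i ≠ j → f j i = p
  · choose π hπ using hrow
    refine ⟨π, fun i j hij ↦ by_contra fun hne ↦ hf i j hne ?_, .inl fun i j h ↦ hπ i j h.symm⟩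
    rw [hπ i j (Ne.symm hne), hπ j i hne, hij]
  · obtain ⟨l, hl⟩ := not_forall.1 hrow
    have hcol (j : α) : ∃ q, ∀ i, i ≠ j → f i j = q := by
      obtain ⟨q, hq⟩ := (hconst l).resolve_left hl
      by_cases hjl : j = l
      · exact ⟨q, hjl ▸ hq⟩
      · exact (hconst j).resolve_left (not_row_const_of_col_const hα hf hconst hjl hq)
    choose π hπ using hcol
    refine ⟨π, fun i j hij ↦ by_contra fun hne ↦ hf i j hne ?_, .inr fun i j h ↦ hπ j i h⟩
    rw [hπ i j (Ne.symm hne), hπ j i hne, hij]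

end OffDiagonal

namespace QSM

variable {n : ℕ}

/-! ### Defining inequalities and faces -/

/-- The linear inequalities defining `QSM n` inside the zero-diagonal matrices: `0 ≤ A i j`
(`nonneg`) and `A i k ≤ A i j + A j k` (`triangle`). -/
inductive Ineq (n : ℕ)
  | nonneg {i j : Fin n} (hij : i ≠ j) : Ineq n
  | triangle {i j k : Fin n} (hij : i ≠ j) (hjk : j ≠ k) (hik : i ≠ k) : Ineq n

/-- The linear functional `A ↦ A i j`. -/
def entry (i j : Fin n) : Module.Dual ℝ (Fin n → Fin n → ℝ) :=
  LinearMap.proj j ∘ₗ LinearMap.proj i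

/-- The subspace of matrices with zero diagonal. -/
def zeroDiag (n : ℕ) : Submodule ℝ (Fin n → Fin n → ℝ) :=
  LinearMap.ker (LinearMap.pi fun i ↦ entry i i)

lemma mem_zeroDiag {A : Fin n → Fin n → ℝ} : A ∈ zeroDiag n ↔ ∀ i, A i i = 0 := by
  simp [zeroDiag, funext_iff, entry]

namespace Ineq

/-- The functional whose nonnegativity is the given inequality. -/
def slack : Ineq n → Module.Dual ℝ (Fin n → Fin n → ℝ)
  | @nonneg _ i j _ => entry i j
  | @triangle _ i j k _ _ _ => entry i j + entry j k - entry i k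

@[simp]
lemma slack_nonneg {i j : Fin n} (hij : i ≠ j) (A : Fin n → Fin n → ℝ) :
    (nonneg hij).slack A = A i j := rfl

@[simp]
lemma slack_triangle {i j k : Fin n} (hij : i ≠ j) (hjk : j ≠ k) (hik : i ≠ k)
    (A : Fin n → Fin n → ℝ) :
    (triangle hij hjk hik).slack A = A i j + A j k - A i k := rfl

/-- The indices of an inequality, as an element of a type with decidable equality. -/
def indices : Ineq n → Fin n × Fin n ⊕ Fin n × Fin n × Fin n
  | @nonneg _ i j _ => .inl (i, j)
  | @triangle _ i j k _ _ _ => .inr (i, j, k)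

lemma indices_injective : (indices (n := n)).Injective := by
  rintro (_ | _) (_ | _) h <;> simp_all [indices]

instance : Finite (Ineq n) := .of_injective indices indices_injective

/-- The point `p` for which the cut `{p}` violates tightness of the inequality; see
`slack_cut_singleton`. -/
def source : Ineq n → Fin n
  | @nonneg _ i _ _ => i
  | @triangle _ _ j _ _ _ _ => j

/-- The point `p` for which the cut `{p}ᶜ` violates tightness of the inequality; see
`slack_cut_compl_singleton`. -/
def target : Ineq n → Fin n
  | @nonneg _ _ j _ => j
  | @triangle _ _ j _ _ _ _ => j

lemma eq_nonneg_of_source_ne_target {c : Ineq n} (hc : c.source ≠ c.target) :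
    c = nonneg hc := by
  cases c with
  | nonneg => rfl
  | triangle => exact absurd rfl hc

end Ineq

open Ineq

lemma mem_iff_slack {A : Fin n → Fin n → ℝ} :
    A ∈ QSM n ↔ (∀ i, A i i = 0) ∧ ∀ c : Ineq n, 0 ≤ c.slack A := by
  refine and_congr_right fun _ ↦ ⟨fun ⟨hnonneg, htri⟩ c ↦ ?_, fun h ↦
    ⟨fun i j hij ↦ h (nonneg hij), fun i j k hij hjk hik ↦ ?_⟩⟩
  · cases c with
    | nonneg hij => exact hnonneg _ _ hij
    | triangle hij hjk hik => exact sub_nonneg.2 (htri _ _ _ hij hjk hik)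
  · exact sub_nonneg.1 (h (triangle hij hjk hik))

lemma mem_iff_mem_polyhedralCone {A : Fin n → Fin n → ℝ} :
    A ∈ QSM n ↔ A ∈ polyhedralCone (zeroDiag n) slack := by
  rw [mem_iff_slack, mem_polyhedralCone, mem_zeroDiag]

lemma zero_le_slack {A : Fin n → Fin n → ℝ} (hA : A ∈ QSM n) (c : Ineq n) : 0 ≤ c.slack A :=
  (mem_iff_slack.1 hA).2 c

lemma isFace_iff {F : Set (Fin n → Fin n → ℝ)} :
    IsFace n F ↔ ∃ ℓ : Module.Dual ℝ (Fin n → Fin n → ℝ),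
      (∀ A ∈ QSM n, 0 ≤ ℓ A) ∧ F = {A ∈ QSM n | ℓ A = 0} := by
  refine ⟨fun h ↦ h.elim (fun hF ↦ ⟨0, ?_⟩) id, .inr⟩
  simp [hF]

lemma isFace_inter {F G : Set (Fin n → Fin n → ℝ)} (hF : IsFace n F) (hG : IsFace n G) :
    IsFace n (F ∩ G) := by
  obtain ⟨ℓ, hℓ, rfl⟩ := isFace_iff.1 hF
  obtain ⟨m, hm, rfl⟩ := isFace_iff.1 hG
  refine .inr ⟨ℓ + m, fun A hA ↦ add_nonneg (hℓ A hA) (hm A hA), ?_⟩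
  ext A
  have (hA : A ∈ QSM n) : ℓ A + m A = 0 ↔ ℓ A = 0 ∧ m A = 0 :=
    add_eq_zero_iff_of_nonneg (hℓ A hA) (hm A hA)
  simp only [Set.mem_inter_iff, Set.mem_ofPred_eq, LinearMap.add_apply]
  tauto

/-- The poset of faces of `QSM n`, ordered by inclusion. -/
abbrev Face (n : ℕ) := {F : Set (Fin n → Fin n → ℝ) // IsFace n F}

instance : SemilatticeInf (Face n) :=
  Subtype.semilatticeInf fun _ _ ↦ isFace_inter

instance : OrderTop (Face n) where
  top := ⟨QSM n, .inl rfl⟩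
  le_top F := by
    obtain ⟨ℓ, -, hF⟩ := isFace_iff.1 F.2
    exact hF.trans_subset (Set.sep_subset _ _)

/-- The face of `QSM n` on which a defining inequality is an equality. -/
def facet (c : Ineq n) : Face n :=
  ⟨{A ∈ QSM n | c.slack A = 0}, .inr ⟨c.slack, fun _ hA ↦ zero_le_slack hA c, rfl⟩⟩

lemma Face.mem_iff {F : Face n} {A : Fin n → Fin n → ℝ} :
    A ∈ F.1 ↔ A ∈ QSM n ∧ ∀ c, F ≤ facet c → c.slack A = 0 := by
  obtain ⟨F, hF⟩ := F
  obtain ⟨ℓ, hℓ, rfl⟩ := isFace_iff.1 hF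
  refine and_congr_right fun hA ↦ ?_
  simp only [mem_iff_mem_polyhedralCone] at hA hℓ
  refine (eq_zero_iff_forall_tight hℓ hA).trans (forall_congr' fun c ↦ imp_congr_left ?_)
  simp only [← mem_iff_mem_polyhedralCone]
  exact ⟨fun h B hB ↦ ⟨hB.1, h B hB.1 hB.2⟩, fun h B hB hB0 ↦ (h ⟨hB, hB0⟩).2⟩

lemma Face.exists_le_facet {F : Face n} (hF : F ≠ ⊤) : ∃ c, F ≤ facet c := by
  by_contra! h
  exact hF (Subtype.ext (Set.ext fun A ↦ Face.mem_iff.trans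
    ⟨And.left, fun hA ↦ ⟨hA, fun c hc ↦ absurd hc (h c)⟩⟩))

/-! ### Tightness on cuts and hulls of two facets -/

/-- The `0`-`1` matrix whose zeros are the pairs `i j` with `g i ≤ g j`. The oriented cut of
`S : Fin n → Prop` is the case of the order on `Prop`. -/
noncomputable def orderMatrix {α : Type*} [Preorder α] (g : Fin n → α) : Fin n → Fin n → ℝ :=
  open Classical in fun i j ↦ if g i ≤ g j then 0 else 1

lemma orderMatrix_mem {α : Type*} [Preorder α] (g : Fin n → α) : orderMatrix g ∈ QSM n := by
  refine ⟨fun i ↦ if_pos le_rfl, fun i j _ ↦ ?_, fun i j k _ _ _ ↦ ?_⟩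
  · unfold orderMatrix
    split_ifs <;> norm_num
  · have := le_trans (a := g i) (b := g j) (c := g k)
    unfold orderMatrix
    split_ifs <;> grind

lemma slack_nonneg_cut {i j : Fin n} (hij : i ≠ j) (S : Fin n → Prop) :
    (nonneg hij).slack (orderMatrix S) = 0 ↔ (S i → S j) := by
  simp [orderMatrix]

lemma slack_triangle_cut {i j k : Fin n} (hij : i ≠ j) (hjk : j ≠ k) (hik : i ≠ k)
    (S : Fin n → Prop) :
    (triangle hij hjk hik).slack (orderMatrix S) = 0 ↔
      (S i → S k → S j) ∧ (S j → S i ∨ S k) := by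
  by_cases hi : S i <;> by_cases hj : S j <;> by_cases hk : S k <;>
    simp [orderMatrix, hi, hj, hk]

lemma slack_cut_singleton (c : Ineq n) (p : Fin n) :
    c.slack (orderMatrix (· = p)) = 0 ↔ c.source ≠ p := by
  cases c with
  | nonneg => rw [slack_nonneg_cut]; grind [source]
  | triangle => rw [slack_triangle_cut]; grind [source]

lemma slack_cut_compl_singleton (c : Ineq n) (p : Fin n) :
    c.slack (orderMatrix (· ≠ p)) = 0 ↔ c.target ≠ p := by
  cases c with
  | nonneg => rw [slack_nonneg_cut]; grind [target]
  | triangle => rw [slack_triangle_cut]; grind [target]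

/-- The inequalities that are tight on the intersection of the facets of `c` and `d`. -/
def hull (c d : Ineq n) : Set (Ineq n) := {e | facet c ⊓ facet d ≤ facet e}

lemma mem_hull {c d e : Ineq n} :
    e ∈ hull c d ↔ ∀ A ∈ QSM n, c.slack A = 0 → d.slack A = 0 → e.slack A = 0 :=
  ⟨fun h _ hA hc hd ↦ (h ⟨⟨hA, hc⟩, hA, hd⟩).2,
    fun h _ hA ↦ ⟨hA.1.1, h _ hA.1.1 hA.1.2 hA.2.2⟩⟩

lemma left_mem_hull (c d : Ineq n) : c ∈ hull c d :=
  inf_le_left (a := facet c)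

lemma right_mem_hull (c d : Ineq n) : d ∈ hull c d :=
  inf_le_right (a := facet c)

lemma hull_comm (c d : Ineq n) : hull c d = hull d c := by
  simp only [hull, inf_comm]

lemma source_of_mem_hull {c d e : Ineq n} (he : e ∈ hull c d) :
    e.source = c.source ∨ e.source = d.source := by
  by_contra! h
  exact (slack_cut_singleton e e.source).1 (mem_hull.1 he _ (orderMatrix_mem _)
    ((slack_cut_singleton _ _).2 h.1.symm) ((slack_cut_singleton _ _).2 h.2.symm)) rfl

lemma target_of_mem_hull {c d e : Ineq n} (he : e ∈ hull c d) :
    e.target = c.target ∨ e.target = d.target := by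
  by_contra! h
  exact (slack_cut_compl_singleton e e.target).1 (mem_hull.1 he _ (orderMatrix_mem _)
    ((slack_cut_compl_singleton _ _).2 h.1.symm)
    ((slack_cut_compl_singleton _ _).2 h.2.symm)) rfl

lemma eq_triangle_or_eq_reverse_of_slack_cut {i j k : Fin n} (hij : i ≠ j) (hjk : j ≠ k)
    (hik : i ≠ k) {e : Ineq n} (hsource : e.source = j) (htarget : e.target = j)
    (h : ∀ p, p = i ∨ p = k → e.slack (orderMatrix fun x ↦ x = j ∨ x = p) = 0 ∨
      e.slack (orderMatrix fun x ↦ ¬(x = j ∨ x = p)) = 0) :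
    e = triangle hij hjk hik ∨ e = triangle hjk.symm hij.symm hik.symm := by
  cases e with
  | nonneg hab => exact absurd (hsource.trans htarget.symm) hab
  | @triangle a b c hab hbc hac =>
    obtain rfl : b = j := hsource
    have mem_ends (p : Fin n) (hp : p = i ∨ p = k) : p = a ∨ p = c := by
      have := h p hp
      rw [slack_triangle_cut, slack_triangle_cut] at this
      grind
    simp only [triangle.injEq]
    grind [mem_ends i (.inl rfl), mem_ends k (.inr rfl)]

lemma eq_triangle_or_eq_reverse_of_mem_hull_triangle {i j k l m : Fin n} {hij : i ≠ j}
    {hkl : k ≠ l} {hlm : l ≠ m} {hkm : k ≠ m} {e : Ineq n} (he : e.source = e.target)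
    (h : e ∈ hull (nonneg hij) (triangle hkl hlm hkm)) :
    e = triangle hkl hlm hkm ∨ e = triangle hlm.symm hkl.symm hkm.symm := by
  have hsource : e.source = l := by
    grind [source, target, source_of_mem_hull h, target_of_mem_hull h]
  refine eq_triangle_or_eq_reverse_of_slack_cut hkl hlm hkm hsource (he ▸ hsource) fun p hp ↦ ?_
  have tight_of_nonneg_tight {S : Fin n → Prop} (hS : S i → S j)
      (hT : (S k → S m → S l) ∧ (S l → S k ∨ S m)) : e.slack (orderMatrix S) = 0 :=
    mem_hull.1 h _ (orderMatrix_mem S) ((slack_nonneg_cut _ _).2 hS)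
      ((slack_triangle_cut _ _ _ _).2 hT)
  by_cases hS : (i = l ∨ i = p) → (j = l ∨ j = p)
  · exact .inl (tight_of_nonneg_tight hS (by grind))
  · exact .inr (tight_of_nonneg_tight (by grind) (by grind))

lemma triangle_mem_hull_nonneg {i j k : Fin n} (hij : i ≠ j) (hjk : j ≠ k) (hik : i ≠ k) :
    triangle hij hjk hik ∈ hull (nonneg hij) (nonneg hjk) := by
  refine mem_hull.2 fun A hA hc hd ↦ ?_
  have := zero_le_slack hA (triangle hij hjk hik)
  have := zero_le_slack hA (nonneg hik)
  simp only [slack_nonneg, slack_triangle] at *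
  linarith

-- Cuts do not suffice here: every cut tight on both inequalities is tight on the reversed triangle.
lemma reverse_notMem_hull_nonneg {i j k : Fin n} (hij : i ≠ j) (hjk : j ≠ k) (hik : i ≠ k) :
    triangle hjk.symm hij.symm hik.symm ∉ hull (nonneg hij) (nonneg hjk) := by
  intro h
  let g : Fin n → ℕ := fun x ↦ if x = i then 0 else if x = j then 1 else 2
  have hi : g i = 0 := if_pos rfl
  have hj : g j = 1 := by simp [g, hij.symm]
  have hk : g k = 2 := by simp [g, hik.symm, hjk.symm]
  have := mem_hull.1 h _ (orderMatrix_mem g) (by simp [orderMatrix, hi, hj])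
    (by simp [orderMatrix, hj, hk])
  simp [orderMatrix, hi, hj, hk] at this

lemma eq_triangle_of_mem_hull_nonneg {i j k : Fin n} {hij : i ≠ j} {hjk : j ≠ k} (hik : i ≠ k)
    {e : Ineq n} (he : e.source = e.target) (h : e ∈ hull (nonneg hij) (nonneg hjk)) :
    e = triangle hij hjk hik := by
  have hsource : e.source = j := by
    grind [source, target, source_of_mem_hull h, target_of_mem_hull h]
  have tight {S : Fin n → Prop} (hS : (S i → S j) ∧ (S j → S k)) :
      e.slack (orderMatrix S) = 0 :=
    mem_hull.1 h _ (orderMatrix_mem S) ((slack_nonneg_cut _ _).2 hS.1)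
      ((slack_nonneg_cut _ _).2 hS.2)
  refine (eq_triangle_or_eq_reverse_of_slack_cut hij hjk hik hsource (he ▸ hsource)
    fun p hp ↦ ?_).resolve_right fun hrev ↦
      reverse_notMem_hull_nonneg hij hjk hik (hrev ▸ h)
  rcases hp with rfl | rfl
  · exact .inr (tight (by grind))
  · exact .inl (tight (by grind))

lemma eq_of_facet_le_facet {c d : Ineq n} (h : facet c ≤ facet d) : c = d := by
  have hd : d ∈ hull c c := inf_le_left.trans h
  have hsource : d.source = c.source := (source_of_mem_hull hd).elim id id
  have htarget : d.target = c.target := (target_of_mem_hull hd).elim id id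
  cases c with
  | nonneg hij =>
    cases d with
    | nonneg => simp_all [source, target]
    | triangle => exact absurd (hsource.symm.trans htarget) hij
  | triangle hij hjk hik =>
    exact (eq_triangle_of_mem_hull_nonneg hik (hsource.trans htarget.symm)
      ((triangle_mem_hull_nonneg hij hjk hik).trans h)).symm

lemma facet_ne_top (c : Ineq n) : facet c ≠ ⊤ := by
  intro h
  have hmem : orderMatrix (· = c.source) ∈ (facet c).1 := h ▸ orderMatrix_mem _
  exact (slack_cut_singleton c c.source).1 hmem.2 rfl

lemma isCoatom_iff {F : Face n} : IsCoatom F ↔ ∃ c, F = facet c := by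
  refine ⟨fun hF ↦ ?_, ?_⟩
  · obtain ⟨c, hc⟩ := Face.exists_le_facet hF.1
    exact ⟨c, (hF.le_iff_eq (facet_ne_top c)).1 hc |>.symm⟩
  · rintro ⟨c, rfl⟩
    refine isCoatom_iff_ge_of_le.2 ⟨facet_ne_top c, fun G hG hcG ↦ ?_⟩
    obtain ⟨d, hd⟩ := Face.exists_le_facet hG
    rwa [eq_of_facet_le_facet (hcG.trans hd)]

lemma exists_perm_facet (Φ : Face n ≃o Face n) :
    ∃ σ : Equiv.Perm (Ineq n), ∀ c, Φ (facet c) = facet (σ c) := by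
  have exists_facet (c : Ineq n) : ∃ d, Φ (facet c) = facet d :=
    isCoatom_iff.1 ((Φ.isCoatom_iff _).2 (isCoatom_iff.2 ⟨c, rfl⟩))
  choose σ hσ using exists_facet
  have σ_injective : σ.Injective := fun c d hcd ↦
    eq_of_facet_le_facet (Φ.injective (by rw [hσ, hσ, hcd])).le
  exact ⟨.ofBijective σ (Finite.injective_iff_bijective.1 σ_injective), hσ⟩

/-! ### Sizes of hulls -/

lemma ncard_le_five_of_indices {s : Set (Ineq n)}
    (a b c d e : Fin n × Fin n ⊕ Fin n × Fin n × Fin n)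
    (h : ∀ x ∈ s, x.indices = a ∨ x.indices = b ∨ x.indices = c ∨ x.indices = d ∨ x.indices = e) :
    s.ncard ≤ 5 := by
  classical
  calc s.ncard ≤ (({a, b, c, d, e} : Finset _) : Set _).ncard :=
        Set.ncard_le_ncard_of_injOn indices (by simpa using h) indices_injective.injOn
    _ ≤ 5 := by rw [Set.ncard_coe_finset]; exact Finset.card_le_five

lemma ncard_hull_nonneg_triangle_le {i j k l m : Fin n} (hij : i ≠ j) (hkl : k ≠ l) (hlm : l ≠ m)
    (hkm : k ≠ m) : (hull (nonneg hij) (triangle hkl hlm hkm)).ncard ≤ 5 := by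
  refine ncard_le_five_of_indices (.inl (i, j)) (.inl (i, l)) (.inl (l, j)) (.inr (k, l, m))
    (.inr (m, l, k)) fun e he ↦ ?_
  have := source_of_mem_hull he
  have := target_of_mem_hull he
  cases e with
  | nonneg => grind [source, target, indices]
  | triangle =>
    rcases eq_triangle_or_eq_reverse_of_mem_hull_triangle rfl he with h | h
    all_goals rw [h]; simp [indices]

lemma ncard_hull_nonneg_consecutive_le {i j k : Fin n} (hij : i ≠ j) (hjk : j ≠ k) (hik : i ≠ k) :
    (hull (nonneg hij) (nonneg hjk)).ncard ≤ 5 := by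
  refine ncard_le_five_of_indices (.inl (i, j)) (.inl (j, k)) (.inl (i, k)) (.inr (i, j, k))
    (.inr (i, j, k)) fun e he ↦ ?_
  have := source_of_mem_hull he
  have := target_of_mem_hull he
  cases e with
  | nonneg => grind [source, target, indices]
  | triangle => rw [eq_triangle_of_mem_hull_nonneg hik rfl he]; simp [indices]

lemma consecutive_of_mem_hull {i j k l : Fin n} {hij : i ≠ j} {hkl : k ≠ l} {e : Ineq n}
    (he : e.source = e.target) (h : e ∈ hull (nonneg hij) (nonneg hkl)) : j = k ∨ i = l := by
  grind [source, target, source_of_mem_hull h, target_of_mem_hull h]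

lemma ncard_hull_nonneg_nonneg_le {i j k l : Fin n} (hij : i ≠ j) (hkl : k ≠ l)
    (hne : ¬(j = k ∧ i = l)) : (hull (nonneg hij) (nonneg hkl)).ncard ≤ 5 := by
  by_cases hjk : j = k
  · subst hjk
    exact ncard_hull_nonneg_consecutive_le hij hkl fun hil ↦ hne ⟨rfl, hil⟩
  by_cases hil : i = l
  · subst hil
    rw [hull_comm]
    exact ncard_hull_nonneg_consecutive_le hkl hij fun hkj ↦ hjk hkj.symm
  refine ncard_le_five_of_indices (.inl (i, j)) (.inl (i, l)) (.inl (k, j)) (.inl (k, l))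
    (.inl (k, l)) fun e he ↦ ?_
  have := source_of_mem_hull he
  have := target_of_mem_hull he
  cases e with
  | nonneg => grind [source, target, indices]
  | triangle => exact absurd (consecutive_of_mem_hull rfl he) (by tauto)

lemma eq_reverse_of_six_le_ncard_hull {i j : Fin n} {hij : i ≠ j} {d : Ineq n}
    (h : 6 ≤ (hull (nonneg hij) d).ncard) : d = nonneg hij.symm := by
  cases d with
  | @nonneg k l hkl =>
    by_contra hne
    have := ncard_hull_nonneg_nonneg_le hij hkl fun ⟨hjk, hil⟩ ↦ hne (by simp [hjk, hil])
    lia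
  | triangle hkl hlm hkm =>
    have := ncard_hull_nonneg_triangle_le hij hkl hlm hkm
    lia

lemma six_le_ncard_hull {i j m : Fin n} (hij : i ≠ j) (hjm : j ≠ m) (him : i ≠ m)
    {c d : Ineq n} (h : nonneg hij ∈ hull c d) (h' : nonneg hij.symm ∈ hull c d) :
    6 ≤ (hull c d).ncard := by
  classical
  let s : Finset (Ineq n) := {nonneg hij, nonneg hij.symm, triangle hij hjm him,
    triangle hij.symm him hjm, triangle him.symm hij hjm.symm,
    triangle hjm.symm hij.symm him.symm}
  have hs : s.card = 6 := by
    simp [s, Finset.card_insert_of_notMem, hij, hij.symm, him, him.symm, hjm, hjm.symm]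
  rw [← hs, ← Set.ncard_coe_finset]
  refine Set.ncard_le_ncard fun e he ↦ mem_hull.2 fun A hA hc hd ↦ ?_
  have hA_ij : A i j = 0 := mem_hull.1 h A hA hc hd
  have hA_ji : A j i = 0 := mem_hull.1 h' A hA hc hd
  have := zero_le_slack hA (triangle hij hjm him)
  have := zero_le_slack hA (triangle hij.symm him hjm)
  have := zero_le_slack hA (triangle him.symm hij hjm.symm)
  have := zero_le_slack hA (triangle hjm.symm hij.symm him.symm)
  simp only [s, Finset.coe_insert, Finset.coe_singleton, Set.mem_insert_iff,
    Set.mem_singleton_iff] at he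
  simp only [slack_triangle] at *
  rcases he with rfl | rfl | rfl | rfl | rfl | rfl <;>
    simp only [slack_nonneg, slack_triangle] <;> linarith

lemma exists_six_le_ncard_hull_triangle {i j k : Fin n} (hij : i ≠ j) (hjk : j ≠ k)
    (hik : i ≠ k) : ∃ d d', d ≠ d' ∧ 6 ≤ (hull (triangle hij hjk hik) d).ncard ∧
      6 ≤ (hull (triangle hij hjk hik) d').ncard := by
  refine ⟨triangle hik hjk.symm hij, triangle hij.symm hik hjk, by simp [hij],
    six_le_ncard_hull hjk hik.symm hij.symm ?_ ?_, six_le_ncard_hull hij hjk hik ?_ ?_⟩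
  all_goals
    refine mem_hull.2 fun A hA hc hd ↦ ?_
    have := hA.2.1 i j hij
    have := hA.2.1 j i hij.symm
    have := hA.2.1 j k hjk
    have := hA.2.1 k j hjk.symm
    simp only [slack_nonneg, slack_triangle] at *
    linarith

lemma source_ne_target_iff (hn : 3 ≤ n) (c : Ineq n) :
    c.source ≠ c.target ↔ ∃! d, 6 ≤ (hull c d).ncard := by
  cases c with
  | @nonneg i j hij =>
    obtain ⟨m, hmi, hmj⟩ := Fin.exists_ne_and_ne_of_two_lt i j hn
    refine iff_of_true hij ⟨nonneg hij.symm, ?_, fun d ↦ eq_reverse_of_six_le_ncard_hull⟩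
    exact six_le_ncard_hull hij hmj.symm hmi.symm (left_mem_hull _ _) (right_mem_hull _ _)
  | triangle hij hjk hik =>
    obtain ⟨d, d', hne, hd, hd'⟩ := exists_six_le_ncard_hull_triangle hij hjk hik
    exact iff_of_false (fun h ↦ h rfl) fun h ↦ hne (h.unique hd hd')

/-! ### Symmetries of the face poset -/

/-- A permutation of the inequalities is compatible with `hull`, as is the one that a symmetry of
the face poset induces on the facets. -/
def PreservesHull (σ : Equiv.Perm (Ineq n)) : Prop :=
  ∀ c d e, σ e ∈ hull (σ c) (σ d) ↔ e ∈ hull c d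

lemma preservesHull_of_apply_facet {Φ : Face n ≃o Face n} {σ : Equiv.Perm (Ineq n)}
    (hσ : ∀ c, Φ (facet c) = facet (σ c)) : PreservesHull σ := by
  intro c d e
  change facet (σ c) ⊓ facet (σ d) ≤ facet (σ e) ↔ facet c ⊓ facet d ≤ facet e
  rw [← hσ, ← hσ, ← hσ, ← map_inf, Φ.le_iff_le]

namespace PreservesHull

variable {σ : Equiv.Perm (Ineq n)}

lemma ncard_hull (hσ : PreservesHull σ) (c d : Ineq n) :
    (hull (σ c) (σ d)).ncard = (hull c d).ncard := by
  have h : σ ⁻¹' hull (σ c) (σ d) = hull c d := Set.ext (hσ c d)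
  rw [← h, Set.ncard_preimage_of_injective_subset_range σ.injective
    (by simp [σ.surjective.range_eq])]

lemma source_eq_target_iff (hσ : PreservesHull σ) (hn : 3 ≤ n) (c : Ineq n) :
    (σ c).source = (σ c).target ↔ c.source = c.target := by
  rw [← not_iff_not, ← ne_eq, ← ne_eq, source_ne_target_iff hn, source_ne_target_iff hn,
    σ.bijective.existsUnique_iff]
  simp only [hσ.ncard_hull]

lemma apply_nonneg_symm (hσ : PreservesHull σ) (hn : 3 ≤ n) {i j p q : Fin n} {hij : i ≠ j}
    {hpq : p ≠ q} (h : σ (nonneg hij) = nonneg hpq) :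
    σ (nonneg hij.symm) = nonneg hpq.symm := by
  obtain ⟨m, hmi, hmj⟩ := Fin.exists_ne_and_ne_of_two_lt i j hn
  have hsix : 6 ≤ (hull (nonneg hij) (nonneg hij.symm)).ncard :=
    six_le_ncard_hull hij hmj.symm hmi.symm (left_mem_hull _ _) (right_mem_hull _ _)
  rw [← hσ.ncard_hull, h] at hsix
  exact eq_reverse_of_six_le_ncard_hull hsix

lemma exists_apply_nonneg (hσ : PreservesHull σ) (hn : 3 ≤ n) :
    ∃ f : Fin n → Fin n → Fin n, ∀ i j (hij : i ≠ j),
      ∃ hf : f i j ≠ f j i, σ (nonneg hij) = nonneg hf := by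
  refine ⟨fun i j ↦ if h : i = j then i else (σ (nonneg h)).source, fun i j hij ↦ ?_⟩
  have hne := mt (hσ.source_eq_target_iff hn (nonneg hij)).1 hij
  have h := eq_nonneg_of_source_ne_target hne
  have htarget : (σ (nonneg hij.symm)).source = (σ (nonneg hij)).target := by
    rw [hσ.apply_nonneg_symm hn h]
    rfl
  simp only [dif_neg hij, dif_neg hij.symm, htarget]
  exact ⟨hne, h⟩

lemma exists_perm_apply_nonneg (hσ : PreservesHull σ) (hn : 3 ≤ n) :
    ∃ π : Equiv.Perm (Fin n),
      (∀ i j (hij : i ≠ j), σ (nonneg hij) = nonneg (π.injective.ne hij)) ∨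
      ∀ i j (hij : i ≠ j), σ (nonneg hij) = nonneg (π.injective.ne hij.symm) := by
  obtain ⟨f, hf⟩ := hσ.exists_apply_nonneg hn
  have hne (i j : Fin n) (hij : i ≠ j) : f i j ≠ f j i := (hf i j hij).1
  have hconsec (i j k : Fin n) (hij : i ≠ j) (hjk : j ≠ k) (hik : i ≠ k) :
      f j i = f j k ∨ f i j = f k j := by
    have hmem := (hσ _ _ _).2 (triangle_mem_hull_nonneg hij hjk hik)
    rw [(hf i j hij).2, (hf j k hjk).2] at hmem
    exact consecutive_of_mem_hull ((hσ.source_eq_target_iff hn _).2 rfl) hmem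
  obtain ⟨π, hπ, h | h⟩ := exists_injective_eq_left_or_eq_right
    (fun i j ↦ Fin.exists_ne_and_ne_of_two_lt i j hn) hne hconsec
  all_goals refine ⟨.ofBijective π (Finite.injective_iff_bijective.1 hπ), ?_⟩
  · exact .inl fun i j hij ↦ by simp [(hf i j hij).2, h i j hij, h j i hij.symm]
  · exact .inr fun i j hij ↦ by simp [(hf i j hij).2, h i j hij, h j i hij.symm]

lemma apply_triangle (hσ : PreservesHull σ) (hn : 3 ≤ n) {i j k p q r : Fin n} {hij : i ≠ j}
    {hjk : j ≠ k} (hik : i ≠ k) {hpq : p ≠ q} {hqr : q ≠ r} (hpr : p ≠ r)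
    (h : hull (σ (nonneg hij)) (σ (nonneg hjk)) = hull (nonneg hpq) (nonneg hqr)) :
    σ (triangle hij hjk hik) = triangle hpq hqr hpr := by
  have hmem := (hσ _ _ _).2 (triangle_mem_hull_nonneg hij hjk hik)
  rw [h] at hmem
  exact eq_triangle_of_mem_hull_nonneg hpr ((hσ.source_eq_target_iff hn _).2 rfl) hmem

end PreservesHull

/-- The action of a permutation of the points on matrices: `relabel π A` has the entry `A i j` at
`π i`, `π j`. -/
def relabel (π : Equiv.Perm (Fin n)) : Equiv.Perm (Fin n → Fin n → ℝ) :=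
  π.arrowCongr (π.arrowCongr (Equiv.refl ℝ))

/-- Transposition followed by `relabel`. -/
def relabelTranspose (π : Equiv.Perm (Fin n)) : Equiv.Perm (Fin n → Fin n → ℝ) :=
  (Equiv.piComm fun _ _ ↦ ℝ).trans (relabel π)

@[simp]
lemma relabel_apply (π : Equiv.Perm (Fin n)) (A : Fin n → Fin n → ℝ) (i j : Fin n) :
    relabel π A (π i) (π j) = A i j := by
  simp [relabel]

@[simp]
lemma relabelTranspose_apply (π : Equiv.Perm (Fin n)) (A : Fin n → Fin n → ℝ) (i j : Fin n) :
    relabelTranspose π A (π i) (π j) = A j i := by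
  simp [relabelTranspose]

lemma forall_relabel_diag_iff (π : Equiv.Perm (Fin n)) (A : Fin n → Fin n → ℝ) :
    (∀ i, relabel π A i i = 0) ↔ ∀ i, A i i = 0 := by
  simp [← π.forall_congr_right (q := fun i ↦ relabel π A i i = 0)]

lemma forall_relabelTranspose_diag_iff (π : Equiv.Perm (Fin n)) (A : Fin n → Fin n → ℝ) :
    (∀ i, relabelTranspose π A i i = 0) ↔ ∀ i, A i i = 0 := by
  simp [← π.forall_congr_right (q := fun i ↦ relabelTranspose π A i i = 0)]

lemma PreservesHull.slack_relabel {σ : Equiv.Perm (Ineq n)} (hσ : PreservesHull σ) (hn : 3 ≤ n)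
    {π : Equiv.Perm (Fin n)}
    (hπ : ∀ i j (hij : i ≠ j), σ (nonneg hij) = nonneg (π.injective.ne hij))
    (A : Fin n → Fin n → ℝ) (c : Ineq n) : (σ c).slack (relabel π A) = c.slack A := by
  cases c with
  | nonneg hij => simp [hπ]
  | triangle hij hjk hik =>
    rw [hσ.apply_triangle hn hik (π.injective.ne hik) (by rw [hπ, hπ])]
    simp

lemma PreservesHull.slack_relabelTranspose {σ : Equiv.Perm (Ineq n)} (hσ : PreservesHull σ)
    (hn : 3 ≤ n) {π : Equiv.Perm (Fin n)}
    (hπ : ∀ i j (hij : i ≠ j), σ (nonneg hij) = nonneg (π.injective.ne hij.symm))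
    (A : Fin n → Fin n → ℝ) (c : Ineq n) : (σ c).slack (relabelTranspose π A) = c.slack A := by
  cases c with
  | nonneg hij => simp [hπ]
  | triangle hij hjk hik =>
    rw [hσ.apply_triangle hn hik (π.injective.ne hik.symm) (by rw [hπ, hπ, hull_comm])]
    simp [add_comm]

lemma apply_eq_image {Φ : Face n ≃o Face n} {σ : Equiv.Perm (Ineq n)}
    (hσ : ∀ c, Φ (facet c) = facet (σ c)) {ψ : Equiv.Perm (Fin n → Fin n → ℝ)}
    (hdiag : ∀ A, (∀ i, ψ A i i = 0) ↔ ∀ i, A i i = 0)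
    (hslack : ∀ A c, (σ c).slack (ψ A) = c.slack A) (F : Face n) : (Φ F).1 = ψ '' F.1 := by
  have mem_iff (A : Fin n → Fin n → ℝ) : ψ A ∈ QSM n ↔ A ∈ QSM n := by
    rw [mem_iff_slack, mem_iff_slack, hdiag, ← σ.forall_congr_right]
    simp only [hslack]
  have mem_apply_iff (A : Fin n → Fin n → ℝ) : ψ A ∈ (Φ F).1 ↔ A ∈ F.1 := by
    rw [Face.mem_iff, Face.mem_iff, mem_iff, ← σ.forall_congr_right]
    simp only [hslack, ← hσ, Φ.le_iff_le]
  ext B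
  obtain ⟨A, rfl⟩ := ψ.surjective B
  rw [mem_apply_iff, ψ.injective.mem_set_image]

end QSM

open QSM

/-- The combinatorial symmetry group of `Ê_n` is `Sₙ × ℤ₂`. -/
theorem stmt0 (n : ℕ) (hn : 3 ≤ n)
    (Φ : {F : Set (Fin n → Fin n → ℝ) // IsFace n F} ≃
         {F : Set (Fin n → Fin n → ℝ) // IsFace n F})
    (hmono : ∀ F G : {F : Set (Fin n → Fin n → ℝ) // IsFace n F},
      (F : Set (Fin n → Fin n → ℝ)) ⊆ G ↔ (Φ F : Set (Fin n → Fin n → ℝ)) ⊆ Φ G) :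
    ∃ π : Equiv.Perm (Fin n),
      (∀ F : {F : Set (Fin n → Fin n → ℝ) // IsFace n F},
        (Φ F : Set (Fin n → Fin n → ℝ)) =
          (fun A : Fin n → Fin n → ℝ => fun i j => A (π.symm i) (π.symm j)) ''
            (F : Set (Fin n → Fin n → ℝ))) ∨
      (∀ F : {F : Set (Fin n → Fin n → ℝ) // IsFace n F},
        (Φ F : Set (Fin n → Fin n → ℝ)) =
          (fun A : Fin n → Fin n → ℝ => fun i j => A (π.symm j) (π.symm i)) ''
            (F : Set (Fin n → Fin n → ℝ))) := by
  let Φ' : Face n ≃o Face n := ⟨Φ, (hmono _ _).symm⟩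
  obtain ⟨σ, hfacet⟩ := exists_perm_facet Φ'
  have hσ : PreservesHull σ := preservesHull_of_apply_facet hfacet
  obtain ⟨π, hπ | hπ⟩ := hσ.exists_perm_apply_nonneg hn
  · exact ⟨π, .inl <| apply_eq_image (Φ := Φ') (ψ := relabel π) hfacet
      (forall_relabel_diag_iff π) (hσ.slack_relabel hn hπ)⟩
  · exact ⟨π, .inr <| apply_eq_image (Φ := Φ') (ψ := relabelTranspose π) hfacet
      (forall_relabelTranspose_diag_iff π) (hσ.slack_relabelTranspose hn hπ)⟩
end

section
/- Let n ≥ 3 and let V be the real vector space of n×n real matrices with zero diagonal, equipped with the Frobenius inner product ⟨A,B⟩ = Σ_{i≠j} A_{ij} B_{ij}. If φ : V → V is a linear bijection that preserves the norm induced by this inner product and satisfies φ(Ê_n) = Ê_n, then there exists a permutation π of Fin n such that either φ(A)_{π(i)π(j)} = A_{ij} for all A ∈ V and all i ≠ j, or φ(A)_{π(i)π(j)} = A_{ji} for all A ∈ V and all i ≠ j. (The symmetry group of Ê_n is S_n × ℤ₂.) -/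
/-- The space `V` of real `n × n` matrices with zero diagonal. -/
def ZeroDiag (n : ℕ) : Submodule ℝ (Fin n → Fin n → ℝ) where
  carrier := {A | ∀ i, A i i = 0}
  add_mem' := by
    intro a b ha hb i
    simp [Pi.add_apply, ha i, hb i]
  zero_mem' := by intro i; rfl
  smul_mem' := by
    intro c a ha i
    simp [Pi.smul_apply, ha i]

/-!
An isometry preserving a polyhedral cone permutes its facet normals up to positive scaling. The
facet normals of `Ê_n` are the matrix units `E i j` and the triangle normals
`T i j k = E i j + E j k - E i k`. A triangle normal makes an angle of cosine `-2/3` with another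
facet normal, namely `T i k j`, whereas the cosine between a matrix unit and a facet normal is never
below `-1/√3`; so the two kinds cannot be exchanged, and lengths force all the scalars to be `1`.
The isometry therefore permutes the arcs `i → j` of the complete digraph in such a way that each
triangle `i → j → k`, `i → k` is carried to a triangle, with its two legs in the same or in the
opposite order. Adjacent triangles agree on this choice, so it is the same for all of them, and the
permutation of the arcs comes from a permutation of the points, composed with the reversal of all
arcs in the second case.
-/

section FacetFunctional

variable {E F : Type*} [AddCommGroup E] [Module ℝ E] [AddCommGroup F] [Module ℝ F]

/-- A facet functional of a set `C`: a nonzero linear functional, nonnegative on `C`, whose kernel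
supports `C` along a facet. The last condition is expressed by a point of `C` in the kernel from
which every direction of the kernel stays in `C` for a short time; this needs no topology on `E`. -/
def IsFacetFunctional (C : Set E) (ℓ : Module.Dual ℝ E) : Prop :=
  ℓ ≠ 0 ∧ (∀ x ∈ C, 0 ≤ ℓ x) ∧
    ∃ x ∈ C, ℓ x = 0 ∧ ∀ z, ℓ z = 0 → ∃ ε : ℝ, 0 < ε ∧ x + ε • z ∈ C

lemma IsFacetFunctional.comp_symm {C : Set E} {D : Set F} {ℓ : Module.Dual ℝ E}
    (hℓ : IsFacetFunctional C ℓ) (f : E ≃ₗ[ℝ] F) (hf : ∀ x, f x ∈ D ↔ x ∈ C) :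
    IsFacetFunctional D (ℓ ∘ₗ f.symm.toLinearMap) := by
  obtain ⟨hne, hnonneg, x, hxC, hx, hdir⟩ := hℓ
  have hf_symm (y : F) : f.symm y ∈ C ↔ y ∈ D := by rw [← hf, f.apply_symm_apply]
  refine ⟨fun h => hne (LinearMap.ext fun v => ?_), fun y hy => hnonneg _ ((hf_symm y).2 hy),
    f x, (hf x).2 hxC, by simpa using hx, fun z hz => ?_⟩
  · simpa using LinearMap.congr_fun h (f v)
  · obtain ⟨ε, hε, h⟩ := hdir (f.symm z) hz
    exact ⟨ε, hε, by simpa using (hf _).2 h⟩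

open Filter Topology in
lemma exists_pos_add_smul_mem_dual {p : F →ₗ[ℝ] E →ₗ[ℝ] ℝ} {S : Set F} (hS : S.Finite) {x z : E}
    (h : ∀ m ∈ S, 0 < p m x ∨ p m x = 0 ∧ 0 ≤ p m z) :
    ∃ ε : ℝ, 0 < ε ∧ x + ε • z ∈ PointedCone.dual p S := by
  have eventually_nonneg : ∀ᶠ ε : ℝ in 𝓝[>] 0, ∀ m ∈ S, 0 ≤ p m (x + ε • z) := by
    refine (eventually_all_finite hS).2 fun m hm => ?_
    simp only [map_add, map_smul, smul_eq_mul]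
    rcases h m hm with hpos | ⟨hx, hz⟩
    · have hlim : Tendsto (fun ε : ℝ => p m x + ε * p m z) (𝓝 0) (𝓝 (p m x)) :=
        Continuous.tendsto' (by fun_prop) _ _ (by simp)
      exact nhdsWithin_le_nhds ((hlim.eventually (lt_mem_nhds hpos)).mono fun _ => le_of_lt)
    · filter_upwards [self_mem_nhdsWithin] with ε hε
      rw [hx, zero_add]
      exact mul_nonneg (le_of_lt hε) hz
  obtain ⟨ε, hmem, hε⟩ := (eventually_nonneg.and self_mem_nhdsWithin).exists
  exact ⟨ε, hε, hmem⟩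

lemma isFacetFunctional_dual_of_forall_pos {p : F →ₗ[ℝ] E →ₗ[ℝ] ℝ} {S : Set F} (hS : S.Finite)
    {m : F} (hm : m ∈ S) (hne : p m ≠ 0) {x : E} (hx : p m x = 0)
    (hpos : ∀ m' ∈ S, m' ≠ m → 0 < p m' x) :
    IsFacetFunctional (PointedCone.dual p S : Set E) (p m) := by
  have hpos_or (m') (hm' : m' ∈ S) : 0 < p m' x ∨ m' = m :=
    or_iff_not_imp_right.2 (hpos m' hm')
  refine ⟨hne, fun y hy => hy hm, x, fun m' hm' => ?_, hx, fun z hz =>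
    exists_pos_add_smul_mem_dual hS fun m' hm' => (hpos_or m' hm').imp_right ?_⟩
  · rcases hpos_or m' hm' with h | rfl
    exacts [h.le, hx.ge]
  · rintro rfl
    exact ⟨hx, hz.ge⟩

lemma exists_eq_smul_of_ker_le_ker {K V : Type*} [Field K] [AddCommGroup V] [Module K V]
    {ℓ m : Module.Dual K V} (h : LinearMap.ker ℓ ≤ LinearMap.ker m) : ∃ c : K, m = c • ℓ := by
  have hmem : m ∈ Submodule.span K (Set.range fun _ : Unit => ℓ) :=
    mem_span_of_iInf_ker_le_ker (by simpa using h)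
  rw [Set.range_const, Submodule.mem_span_singleton] at hmem
  exact hmem.imp fun _ => Eq.symm

lemma IsFacetFunctional.exists_eq_pos_smul {p : F →ₗ[ℝ] E →ₗ[ℝ] ℝ} {S : Set F} (hS : S.Finite)
    (hpos : ∀ m ∈ S, ∃ y ∈ PointedCone.dual p S, 0 < p m y) {ℓ : Module.Dual ℝ E}
    (hℓ : IsFacetFunctional (PointedCone.dual p S : Set E) ℓ) :
    ∃ m ∈ S, ∃ c : ℝ, 0 < c ∧ ℓ = c • p m := by
  obtain ⟨hne, hnonneg, x, hxC, hx, hdir⟩ := hℓ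
  obtain ⟨m, hm, hmx⟩ : ∃ m ∈ S, p m x = 0 := by
    -- Otherwise `x` is interior to the cone, and moving against `ℓ` stays in it.
    by_contra! hne_zero
    obtain ⟨w, hw⟩ : ∃ w, ℓ w ≠ 0 := by simpa using DFunLike.ne_iff.1 hne
    obtain ⟨ε, hε, hmem⟩ := exists_pos_add_smul_mem_dual (z := -(ℓ w) • w) hS
      fun m hm => Or.inl ((hxC hm).lt_of_ne' (hne_zero m hm))
    have hle := hnonneg _ hmem
    simp only [map_add, map_smul, smul_eq_mul, hx, zero_add] at hle
    have := mul_pos hε (mul_self_pos.2 hw)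
    linarith
  have nonneg_of_mem_ker (z : E) (hz : ℓ z = 0) : 0 ≤ p m z := by
    obtain ⟨ε, hε, hmem⟩ := hdir z hz
    have hle : 0 ≤ ε * p m z := by simpa [hmx] using hmem hm
    exact nonneg_of_mul_nonneg_right hle hε
  have ker_le : LinearMap.ker ℓ ≤ LinearMap.ker (p m) := fun z hz =>
    le_antisymm (by simpa using nonneg_of_mem_ker (-z) (by simpa using hz)) (nonneg_of_mem_ker z hz)
  obtain ⟨c, hc⟩ := exists_eq_smul_of_ker_le_ker ker_le
  obtain ⟨y, hyC, hy⟩ := hpos m hm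
  have hc_pos : 0 < c := by
    rw [hc, LinearMap.smul_apply, smul_eq_mul] at hy
    exact pos_of_mul_pos_left hy (hnonneg y hyC)
  exact ⟨m, hm, c⁻¹, inv_pos.2 hc_pos, by rw [hc, inv_smul_smul₀ hc_pos.ne']⟩

lemma exists_isometryEquiv_apply_eq_pos_smul {B₁ : LinearMap.BilinForm ℝ E}
    {B₂ : LinearMap.BilinForm ℝ F} (hB₂ : Function.Injective B₂) {S : Set E} {T : Set F}
    (hT : T.Finite) (hpos : ∀ m ∈ T, ∃ y ∈ PointedCone.dual B₂ T, 0 < B₂ m y)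
    (f : B₁.IsometryEquiv B₂) (hf : ∀ x, f x ∈ PointedCone.dual B₂ T ↔ x ∈ PointedCone.dual B₁ S)
    {m : E} (hm : IsFacetFunctional (PointedCone.dual B₁ S : Set E) (B₁ m)) :
    ∃ m' ∈ T, ∃ c : ℝ, 0 < c ∧ f m = c • m' := by
  have hcomp : B₁ m ∘ₗ f.toLinearEquiv.symm.toLinearMap = B₂ (f m) := by
    ext y
    obtain ⟨x, rfl⟩ := f.toLinearEquiv.surjective y
    change B₁ m (f.toLinearEquiv.symm (f.toLinearEquiv x)) = B₂ (f m) (f x)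
    rw [LinearEquiv.symm_apply_apply, f.map_app]
  obtain ⟨m', hm', c, hc, h⟩ :=
    (hcomp ▸ hm.comp_symm f.toLinearEquiv hf).exists_eq_pos_smul hT hpos
  exact ⟨m', hm', c, hc, hB₂ (by rw [h, map_smul])⟩

lemma isometryEquiv_apply_eq_of_eq_pos_smul {B₁ : LinearMap.BilinForm ℝ E}
    {B₂ : LinearMap.BilinForm ℝ F} (f : B₁.IsometryEquiv B₂) {x : E} {y : F} {c : ℝ} (hc : 0 < c)
    (h : f x = c • y) (hxy : B₁ x x = B₂ y y) (hx : B₁ x x ≠ 0) : f x = y := by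
  have hnorm : B₁ x x = c ^ 2 * B₂ y y := by
    rw [← f.map_app, h]
    simp only [map_smul, LinearMap.smul_apply, smul_eq_mul]
    ring
  have hsq : c ^ 2 * B₁ x x = 1 * B₁ x x := by rw [hxy, ← hnorm, one_mul, hxy]
  rw [h, (pow_eq_one_iff_of_nonneg hc.le two_ne_zero).1 (mul_right_cancel₀ hx hsq), one_smul]

end FacetFunctional

section TriangleMap

variable {ι : Type*} {s t : ι → ι → ι}

/-- An arc map, sending the arc `i → j` to the arc `s i j → t i j`, carries the triangle
`i → j → k`, `i → k` to a triangle traversed in the same order. Traversal in the opposite order is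
`IsForward t s i j k`. -/
def IsForward (s t : ι → ι → ι) (i j k : ι) : Prop :=
  t i j = s j k ∧ s i j = s i k ∧ t j k = t i k

/-- A map `(s, t)` of the arcs between distinct points that carries triangles to triangles. -/
structure IsTriangleMap (s t : ι → ι → ι) : Prop where
  ne : ∀ i j, i ≠ j → s i j ≠ t i j
  isForward_or : ∀ i j k, i ≠ j → j ≠ k → i ≠ k → IsForward s t i j k ∨ IsForward t s i j k

namespace IsTriangleMap

lemma reverse (h : IsTriangleMap s t) : IsTriangleMap t s :=
  ⟨fun i j hij => (h.ne i j hij).symm, fun i j k hij hjk hik =>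
    (h.isForward_or i j k hij hjk hik).symm⟩

lemma isForward_swap_right (h : IsTriangleMap s t) {i j k : ι} (hij : i ≠ j) (hjk : j ≠ k)
    (hik : i ≠ k) (hf : IsForward s t i j k) : IsForward s t i k j := by
  have := h.ne j k hjk
  have := h.isForward_or i k j hik hjk.symm hij
  grind [IsForward]

lemma isForward_swap_left (h : IsTriangleMap s t) {i j k : ι} (hij : i ≠ j) (hjk : j ≠ k)
    (hik : i ≠ k) (hf : IsForward s t i j k) : IsForward s t j i k := by
  have := h.ne i j hij
  have := h.isForward_or j i k hij.symm hik hjk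
  grind [IsForward]

lemma isForward_replace_right (h : IsTriangleMap s t) {i j k l : ι} (hij : i ≠ j) (hjk : j ≠ k)
    (hik : i ≠ k) (hil : i ≠ l) (hjl : j ≠ l) (hf : IsForward s t i j k) :
    IsForward s t i j l := by
  rcases eq_or_ne k l with rfl | hkl
  · exact hf
  have := h.ne i j hij
  have := h.ne j k hjk
  have := h.ne j l hjl
  have := h.isForward_or i j l hij hjl hil
  have := h.isForward_or i k l hik hkl hil
  grind [IsForward]

lemma isForward_of_left_eq (h : IsTriangleMap s t) {i j k l m : ι} (hij : i ≠ j) (hjk : j ≠ k)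
    (hik : i ≠ k) (hf : IsForward s t i j k) (hil : i ≠ l) (hlm : l ≠ m) (him : i ≠ m) :
    IsForward s t i l m := by
  rcases eq_or_ne j l with rfl | hjl
  · exact h.isForward_replace_right hij hjk hik him hlm hf
  · have hijl := h.isForward_replace_right hij hjk hik hil hjl hf
    have hilj := h.isForward_swap_right hij hjl hil hijl
    exact h.isForward_replace_right hil hjl.symm hij him hlm hilj

lemma isForward_of_isForward (h : IsTriangleMap s t) {a b c : ι} (hab : a ≠ b) (hbc : b ≠ c)
    (hac : a ≠ c) (hf : IsForward s t a b c) {i j k : ι} (hij : i ≠ j) (hjk : j ≠ k)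
    (hik : i ≠ k) : IsForward s t i j k := by
  rcases eq_or_ne a i with rfl | hai
  · exact h.isForward_of_left_eq hab hbc hac hf hij hjk hik
  obtain ⟨l, hal, hil⟩ : ∃ l, a ≠ l ∧ i ≠ l := by
    rcases eq_or_ne b i with rfl | hbi
    exacts [⟨c, hac, hbc⟩, ⟨b, hab, hbi.symm⟩]
  have hail := h.isForward_of_left_eq hab hbc hac hf hai hil hal
  have hial := h.isForward_swap_left hai hil hal hail
  exact h.isForward_of_left_eq hai.symm hal hil hial hij hjk hik

lemma exists_perm_of_forall_isForward [Finite ι] (hι : 3 ≤ ENat.card ι) (h : IsTriangleMap s t)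
    (hf : ∀ i j k, i ≠ j → j ≠ k → i ≠ k → IsForward s t i j k) :
    ∃ π : Equiv.Perm ι, ∀ i j, i ≠ j → s i j = π i ∧ t i j = π j := by
  have exists_source (i : ι) : ∃ a, ∀ j, i ≠ j → s i j = a := by
    obtain ⟨k, hki, -⟩ := ENat.exists_ne_ne_of_three_le hι i i
    refine ⟨s i k, fun j hij => ?_⟩
    rcases eq_or_ne j k with rfl | hjk
    exacts [rfl, (hf i j k hij hjk hki.symm).2.1]
  choose π hs using exists_source
  have ht (i j : ι) (hij : i ≠ j) : t i j = π j := by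
    obtain ⟨k, hki, hkj⟩ := ENat.exists_ne_ne_of_three_le hι i j
    rw [(hf i j k hij hkj.symm hki.symm).1, hs j k hkj.symm]
  have hinj : Function.Injective π := fun i j hπ => by
    by_contra hij
    exact h.ne i j hij (by rw [hs i j hij, ht i j hij, hπ])
  exact ⟨Equiv.ofBijective π (Finite.injective_iff_bijective.1 hinj),
    fun i j hij => ⟨hs i j hij, ht i j hij⟩⟩

lemma exists_perm [Finite ι] (hι : 3 ≤ ENat.card ι) (h : IsTriangleMap s t) :
    ∃ π : Equiv.Perm ι, (∀ i j, i ≠ j → s i j = π i ∧ t i j = π j) ∨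
      ∀ i j, i ≠ j → t i j = π i ∧ s i j = π j := by
  obtain ⟨a⟩ : Nonempty ι := (ENat.one_le_card_iff_nonempty ι).1 (le_trans (by norm_num) hι)
  obtain ⟨b, hba, -⟩ := ENat.exists_ne_ne_of_three_le hι a a
  obtain ⟨c, hca, hcb⟩ := ENat.exists_ne_ne_of_three_le hι a b
  rcases h.isForward_or a b c hba.symm hcb.symm hca.symm with hf | hf
  · exact (h.exists_perm_of_forall_isForward hι fun i j k =>
      h.isForward_of_isForward hba.symm hcb.symm hca.symm hf).imp fun _ => Or.inl
  · exact (h.reverse.exists_perm_of_forall_isForward hι fun i j k =>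
      h.reverse.isForward_of_isForward hba.symm hcb.symm hca.symm hf).imp fun _ => Or.inr

end IsTriangleMap

end TriangleMap

section QuasiSemimetric

variable {n : ℕ} {i j k a b c : Fin n}

/-- The Frobenius inner product on the space of zero-diagonal matrices. It is a bare bilinear form
because `ZeroDiag n` already carries the sup norm. -/
def frobeniusForm (n : ℕ) : LinearMap.BilinForm ℝ (ZeroDiag n) :=
  LinearMap.mk₂ ℝ (fun A B => ∑ i, ∑ j, A.1 i j * B.1 i j)
    (fun A B C => by simp [add_mul, Finset.sum_add_distrib])
    (fun c A B => by simp [mul_assoc, Finset.mul_sum])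
    (fun A B C => by simp [mul_add, Finset.sum_add_distrib])
    (fun c A B => by simp [mul_left_comm, Finset.mul_sum])

lemma frobeniusForm_apply (A B : ZeroDiag n) :
    frobeniusForm n A B = ∑ i, ∑ j, A.1 i j * B.1 i j := rfl

lemma frobeniusForm_isSymm : (frobeniusForm n).IsSymm :=
  ⟨fun A B => by simp only [frobeniusForm_apply, mul_comm]⟩

/-- The matrix unit with entry `1` at `(i, j)`, a facet normal of `Ê_n`. For `i = j` it is the zero
matrix, so that it always has zero diagonal. -/
def matrixUnit (i j : Fin n) : ZeroDiag n :=
  ⟨fun a b => if a = i ∧ b = j ∧ i ≠ j then 1 else 0, fun a => by grind⟩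

lemma matrixUnit_apply (i j a b : Fin n) :
    (matrixUnit i j).1 a b = if a = i ∧ b = j ∧ i ≠ j then 1 else 0 := rfl

lemma frobeniusForm_matrixUnit_left (i j : Fin n) (A : ZeroDiag n) :
    frobeniusForm n (matrixUnit i j) A = A.1 i j := by
  rcases eq_or_ne i j with rfl | hij
  · simp [frobeniusForm_apply, matrixUnit_apply, A.2 i]
  · simp [frobeniusForm_apply, matrixUnit_apply, hij, ite_and]

lemma frobeniusForm_injective : Function.Injective (frobeniusForm n) := fun A B h => by
  ext i j
  simpa only [← frobeniusForm_isSymm.eq (matrixUnit i j), RingHom.id_apply,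
    frobeniusForm_matrixUnit_left] using LinearMap.congr_fun h (matrixUnit i j)

/-- The normal vector of the triangle inequality `A i k ≤ A i j + A j k`, the other kind of facet
normal of `Ê_n`. -/
def triangleNormal (i j k : Fin n) : ZeroDiag n :=
  matrixUnit i j + matrixUnit j k - matrixUnit i k

lemma triangleNormal_apply (i j k a b : Fin n) : (triangleNormal i j k).1 a b =
    (matrixUnit i j).1 a b + (matrixUnit j k).1 a b - (matrixUnit i k).1 a b := rfl

lemma frobeniusForm_triangleNormal_left (i j k : Fin n) (A : ZeroDiag n) :
    frobeniusForm n (triangleNormal i j k) A = A.1 i j + A.1 j k - A.1 i k := by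
  simp [triangleNormal, frobeniusForm_matrixUnit_left]

lemma frobeniusForm_matrixUnit_self (hij : i ≠ j) :
    frobeniusForm n (matrixUnit i j) (matrixUnit i j) = 1 := by
  simp [frobeniusForm_matrixUnit_left, matrixUnit_apply, hij]

lemma frobeniusForm_triangleNormal_self (hij : i ≠ j) (hjk : j ≠ k) (hik : i ≠ k) :
    frobeniusForm n (triangleNormal i j k) (triangleNormal i j k) = 3 := by
  rw [frobeniusForm_triangleNormal_left]
  simp only [triangleNormal_apply, matrixUnit_apply]
  grind

lemma frobeniusForm_triangleNormal_swap (hij : i ≠ j) (hjk : j ≠ k) (hik : i ≠ k) :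
    frobeniusForm n (triangleNormal i j k) (triangleNormal i k j) = -2 := by
  rw [frobeniusForm_triangleNormal_left]
  simp only [triangleNormal_apply, matrixUnit_apply]
  grind

/-- The normals of the inequalities defining `Ê_n`. -/
def facetNormals (n : ℕ) : Set (ZeroDiag n) :=
  {N | (∃ i j, i ≠ j ∧ N = matrixUnit i j) ∨
    ∃ i j k, i ≠ j ∧ j ≠ k ∧ i ≠ k ∧ N = triangleNormal i j k}

lemma matrixUnit_mem_facetNormals (hij : i ≠ j) : matrixUnit i j ∈ facetNormals n :=
  Or.inl ⟨i, j, hij, rfl⟩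

lemma triangleNormal_mem_facetNormals (hij : i ≠ j) (hjk : j ≠ k) (hik : i ≠ k) :
    triangleNormal i j k ∈ facetNormals n :=
  Or.inr ⟨i, j, k, hij, hjk, hik, rfl⟩

lemma finite_facetNormals : (facetNormals n).Finite := by
  refine ((Set.finite_range fun p : Fin n × Fin n => matrixUnit p.1 p.2).union
    (Set.finite_range fun p : Fin n × Fin n × Fin n => triangleNormal p.1 p.2.1 p.2.2)).subset ?_
  rintro _ (⟨i, j, -, rfl⟩ | ⟨i, j, k, -, -, -, rfl⟩)
  exacts [Or.inl ⟨(i, j), rfl⟩, Or.inr ⟨(i, j, k), rfl⟩]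

lemma mem_dual_facetNormals_iff {A : ZeroDiag n} :
    A ∈ PointedCone.dual (frobeniusForm n) (facetNormals n) ↔ A.1 ∈ QSM n := by
  constructor
  · intro hA
    refine ⟨A.2, fun i j hij => ?_, fun i j k hij hjk hik => ?_⟩
    · simpa only [frobeniusForm_matrixUnit_left] using hA (matrixUnit_mem_facetNormals hij)
    · simpa only [frobeniusForm_triangleNormal_left, sub_nonneg]
        using hA (triangleNormal_mem_facetNormals hij hjk hik)
  · rintro ⟨-, hnonneg, htriangle⟩ _ (⟨i, j, hij, rfl⟩ | ⟨i, j, k, hij, hjk, hik, rfl⟩)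
    · simpa only [frobeniusForm_matrixUnit_left] using hnonneg i j hij
    · simpa only [frobeniusForm_triangleNormal_left, sub_nonneg] using htriangle i j k hij hjk hik

lemma exists_mem_dual_frobeniusForm_pos : ∀ N ∈ facetNormals n,
    ∃ A ∈ PointedCone.dual (frobeniusForm n) (facetNormals n), 0 < frobeniusForm n N A := by
  let discrete : ZeroDiag n := ⟨fun a b => if a = b then 0 else 1, fun a => if_pos rfl⟩
  have hpos : ∀ N ∈ facetNormals n, 0 < frobeniusForm n N discrete := by
    rintro _ (⟨i, j, hij, rfl⟩ | ⟨i, j, k, hij, hjk, hik, rfl⟩)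
    · simp [frobeniusForm_matrixUnit_left, discrete, hij]
    · simp [frobeniusForm_triangleNormal_left, discrete, hij, hjk, hik]
  exact fun N hN => ⟨discrete, fun M hM => (hpos M hM).le, hpos N hN⟩

lemma isFacetFunctional_matrixUnit (hij : i ≠ j) :
    IsFacetFunctional (PointedCone.dual (frobeniusForm n) (facetNormals n) : Set (ZeroDiag n))
      (frobeniusForm n (matrixUnit i j)) := by
  let X : ZeroDiag n :=
    ⟨fun a b => if a = b then 0 else if a = i ∧ b = j then 0 else if a = i ∨ b = j then 2 else 3,
      fun a => if_pos rfl⟩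
  refine isFacetFunctional_dual_of_forall_pos (x := X) finite_facetNormals
    (matrixUnit_mem_facetNormals hij) (fun h => ?_) ?_ ?_
  · simpa [h] using frobeniusForm_matrixUnit_self hij
  · simp [frobeniusForm_matrixUnit_left, X]
  · rintro _ (⟨a, b, hab, rfl⟩ | ⟨a, b, c, hab, hbc, hac, rfl⟩) hne
    · have : ¬(a = i ∧ b = j) := by rintro ⟨rfl, rfl⟩; exact hne rfl
      simp only [frobeniusForm_matrixUnit_left, X]
      grind
    · simp only [frobeniusForm_triangleNormal_left, X]
      clear hne
      grind

lemma isFacetFunctional_triangleNormal (hij : i ≠ j) (hjk : j ≠ k) (hik : i ≠ k) :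
    IsFacetFunctional (PointedCone.dual (frobeniusForm n) (facetNormals n) : Set (ZeroDiag n))
      (frobeniusForm n (triangleNormal i j k)) := by
  let X : ZeroDiag n :=
    ⟨fun a b => if a = b then 0 else if a = i ∧ b = j ∨ a = j ∧ b = k then 2 else
      if a = i ∧ b = k then 4 else 3, fun a => if_pos rfl⟩
  refine isFacetFunctional_dual_of_forall_pos (x := X) finite_facetNormals
    (triangleNormal_mem_facetNormals hij hjk hik) (fun h => ?_) ?_ ?_
  · simpa [h] using frobeniusForm_triangleNormal_self hij hjk hik
  · simp only [frobeniusForm_triangleNormal_left, X]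
    grind
  · rintro _ (⟨a, b, hab, rfl⟩ | ⟨a, b, c, hab, hbc, hac, rfl⟩) hne
    · simp only [frobeniusForm_matrixUnit_left, X]
      clear hne
      grind
    · have : ¬(a = i ∧ b = j ∧ c = k) := by rintro ⟨rfl, rfl, rfl⟩; exact hne rfl
      simp only [frobeniusForm_triangleNormal_left, X]
      clear hne
      grind

-- The cosine between a matrix unit and a facet normal is at least `-1/√3`, stated so as to be
-- invariant under scaling.
lemma three_mul_sq_frobeniusForm_matrixUnit_le {N : ZeroDiag n} (hN : N ∈ facetNormals n)
    (hneg : frobeniusForm n (matrixUnit i j) N < 0) :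
    3 * frobeniusForm n (matrixUnit i j) N ^ 2 ≤ frobeniusForm n N N := by
  rw [frobeniusForm_matrixUnit_left] at hneg ⊢
  rcases hN with ⟨a, b, hab, rfl⟩ | ⟨a, b, c, hab, hbc, hac, rfl⟩
  · rw [matrixUnit_apply] at hneg
    grind
  · rw [frobeniusForm_triangleNormal_self hab hbc hac]
    have : -1 ≤ (triangleNormal a b c).1 i j := by
      simp only [triangleNormal_apply, matrixUnit_apply]
      split_ifs <;> norm_num
    nlinarith

lemma triangle_eq_of_matrixUnit_add_sub {p q p' q' p'' q'' : Fin n} (hab : a ≠ b)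
    (hbc : b ≠ c) (hac : a ≠ c)
    (h : matrixUnit p q + matrixUnit p' q' - matrixUnit p'' q'' = triangleNormal a b c) :
    p'' = a ∧ q'' = c ∧
      (p = a ∧ q = b ∧ p' = b ∧ q' = c ∨ p = b ∧ q = c ∧ p' = a ∧ q' = b) := by
  have hentry (x y : Fin n) : (matrixUnit p q).1 x y + (matrixUnit p' q').1 x y -
      (matrixUnit p'' q'').1 x y = (triangleNormal a b c).1 x y := by rw [← h]; rfl
  simp only [triangleNormal_apply, matrixUnit_apply] at hentry
  have hac_entry := hentry a c
  have hab_entry := hentry a b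
  have hbc_entry := hentry b c
  clear h hentry
  have hypotenuse : p'' = a ∧ q'' = c := by grind
  grind

section Symmetry

variable (f : (frobeniusForm n).IsometryEquiv (frobeniusForm n))
  (hf : ∀ A, f A ∈ PointedCone.dual (frobeniusForm n) (facetNormals n) ↔
    A ∈ PointedCone.dual (frobeniusForm n) (facetNormals n))

include hf

lemma exists_map_matrixUnit_eq_pos_smul (hij : i ≠ j) :
    ∃ N ∈ facetNormals n, ∃ c : ℝ, 0 < c ∧ f (matrixUnit i j) = c • N :=
  exists_isometryEquiv_apply_eq_pos_smul frobeniusForm_injective finite_facetNormals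
    exists_mem_dual_frobeniusForm_pos f hf (isFacetFunctional_matrixUnit hij)

lemma exists_map_triangleNormal_eq_pos_smul (hij : i ≠ j) (hjk : j ≠ k) (hik : i ≠ k) :
    ∃ N ∈ facetNormals n, ∃ c : ℝ, 0 < c ∧ f (triangleNormal i j k) = c • N :=
  exists_isometryEquiv_apply_eq_pos_smul frobeniusForm_injective finite_facetNormals
    exists_mem_dual_frobeniusForm_pos f hf (isFacetFunctional_triangleNormal hij hjk hik)

lemma map_triangleNormal_ne_smul_matrixUnit (hij : i ≠ j) (hjk : j ≠ k) (hik : i ≠ k) (hab : a ≠ b)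
    {r : ℝ} (hr : 0 < r) : f (triangleNormal i j k) ≠ r • matrixUnit a b := by
  intro h
  -- The cosine `-2/3` between `T i j k` and `T i k j` is too small for a matrix unit.
  obtain ⟨N, hN, e, he, h'⟩ :=
    exists_map_triangleNormal_eq_pos_smul f hf hik hjk.symm hij
  have hswap := frobeniusForm_triangleNormal_swap hij hjk hik
  have hself := frobeniusForm_triangleNormal_self hij hjk hik
  have hself' := frobeniusForm_triangleNormal_self hik hjk.symm hij
  rw [← f.map_app, h, h'] at hswap
  rw [← f.map_app, h] at hself
  rw [← f.map_app, h'] at hself'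
  simp only [map_smul, LinearMap.smul_apply, smul_eq_mul, frobeniusForm_matrixUnit_self hab]
    at hswap hself hself'
  have hneg : frobeniusForm n (matrixUnit a b) N < 0 := by
    by_contra! hnonneg
    have : 0 ≤ e * (r * frobeniusForm n (matrixUnit a b) N) := by positivity
    linarith
  have hle := three_mul_sq_frobeniusForm_matrixUnit_le hN hneg
  have : (12 : ℝ) ≤ 9 := calc
    (12 : ℝ) = 3 * (e * (r * frobeniusForm n (matrixUnit a b) N)) ^ 2 := by rw [hswap]; norm_num
    _ = r ^ 2 * e ^ 2 * (3 * frobeniusForm n (matrixUnit a b) N ^ 2) := by ring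
    _ ≤ r ^ 2 * e ^ 2 * frobeniusForm n N N := by gcongr
    _ = r * (r * 1) * (e * (e * frobeniusForm n N N)) := by ring
    _ = 9 := by rw [hself, hself']; norm_num
  norm_num at this

lemma exists_map_triangleNormal_eq (hij : i ≠ j) (hjk : j ≠ k) (hik : i ≠ k) :
    ∃ a b c, a ≠ b ∧ b ≠ c ∧ a ≠ c ∧ f (triangleNormal i j k) = triangleNormal a b c := by
  obtain ⟨_, ⟨a, b, hab, rfl⟩ | ⟨a, b, c, hab, hbc, hac, rfl⟩, r, hr, h⟩ :=
    exists_map_triangleNormal_eq_pos_smul f hf hij hjk hik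
  · exact absurd h (map_triangleNormal_ne_smul_matrixUnit f hf hij hjk hik hab hr)
  · have hself := frobeniusForm_triangleNormal_self hij hjk hik
    exact ⟨a, b, c, hab, hbc, hac, isometryEquiv_apply_eq_of_eq_pos_smul f hr h
      (hself.trans (frobeniusForm_triangleNormal_self hab hbc hac).symm) (by simp [hself])⟩

lemma exists_map_matrixUnit_eq (hij : i ≠ j) :
    ∃ a b, a ≠ b ∧ f (matrixUnit i j) = matrixUnit a b := by
  obtain ⟨_, ⟨a, b, hab, rfl⟩ | ⟨a, b, c, hab, hbc, hac, rfl⟩, r, hr, h⟩ :=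
    exists_map_matrixUnit_eq_pos_smul f hf hij
  · have hself := frobeniusForm_matrixUnit_self hij
    exact ⟨a, b, hab, isometryEquiv_apply_eq_of_eq_pos_smul f hr h
      (hself.trans (frobeniusForm_matrixUnit_self hab).symm) (by simp [hself])⟩
  · have hf_symm (A : ZeroDiag n) :
        f.symm A ∈ PointedCone.dual (frobeniusForm n) (facetNormals n) ↔
          A ∈ PointedCone.dual (frobeniusForm n) (facetNormals n) := by
      rw [← hf]
      exact iff_of_eq (congrArg (· ∈ _) (f.toLinearEquiv.apply_symm_apply A))
    have hsymm : f.symm (triangleNormal a b c) = r⁻¹ • matrixUnit i j := by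
      refine f.toLinearEquiv.symm_apply_eq.2 ?_
      rw [map_smul]
      exact ((inv_smul_eq_iff₀ hr.ne').2 h).symm
    exact absurd hsymm
      (map_triangleNormal_ne_smul_matrixUnit f.symm hf_symm hab hbc hac hij (inv_pos.2 hr))

lemma isTriangleMap_of_map_matrixUnit {s t : Fin n → Fin n → Fin n}
    (hst : ∀ i j, i ≠ j → s i j ≠ t i j)
    (hmap : ∀ i j, i ≠ j → f (matrixUnit i j) = matrixUnit (s i j) (t i j)) :
    IsTriangleMap s t := by
  refine ⟨hst, fun i j k hij hjk hik => ?_⟩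
  obtain ⟨a, b, c, hab, hbc, hac, h⟩ := exists_map_triangleNormal_eq f hf hij hjk hik
  have hsum : matrixUnit (s i j) (t i j) + matrixUnit (s j k) (t j k) -
      matrixUnit (s i k) (t i k) = triangleNormal a b c := by
    rw [← h, triangleNormal, map_sub, map_add, hmap i j hij, hmap j k hjk, hmap i k hik]
  have := triangle_eq_of_matrixUnit_add_sub hab hbc hac hsum
  grind [IsForward]

lemma exists_perm_map_matrixUnit_eq (hn : 3 ≤ n) : ∃ π : Equiv.Perm (Fin n),
    (∀ i j, i ≠ j → f (matrixUnit i j) = matrixUnit (π i) (π j)) ∨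
      ∀ i j, i ≠ j → f (matrixUnit i j) = matrixUnit (π j) (π i) := by
  have exists_arc (i j : Fin n) :
      ∃ a b, i ≠ j → a ≠ b ∧ f (matrixUnit i j) = matrixUnit a b := by
    rcases eq_or_ne i j with hij | hij
    · exact ⟨i, j, fun hne => absurd hij hne⟩
    · exact (exists_map_matrixUnit_eq f hf hij).imp fun _ => Exists.imp fun _ h _ => h
  choose s t hst using exists_arc
  have htri := isTriangleMap_of_map_matrixUnit f hf (fun i j hij => (hst i j hij).1)
    fun i j hij => (hst i j hij).2
  obtain ⟨π, h | h⟩ := htri.exists_perm (by simpa using hn)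
  · exact ⟨π, Or.inl fun i j hij => by rw [(hst i j hij).2, (h i j hij).1, (h i j hij).2]⟩
  · exact ⟨π, Or.inr fun i j hij => by rw [(hst i j hij).2, (h i j hij).1, (h i j hij).2]⟩

end Symmetry

lemma map_apply_eq_of_map_matrixUnit_eq (f : (frobeniusForm n).IsometryEquiv (frobeniusForm n))
    (h : f (matrixUnit i j) = matrixUnit a b) (A : ZeroDiag n) : (f A).1 a b = A.1 i j := by
  rw [← frobeniusForm_matrixUnit_left, ← h, f.map_app, frobeniusForm_matrixUnit_left]

end QuasiSemimetric

/-- The symmetry group of `Ê_n` is `Sₙ × ℤ₂`: every linear bijection of the space of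
zero-diagonal matrices preserving the Frobenius norm and mapping `Ê_n` onto itself is a
coordinate permutation, possibly composed with transposition. -/
theorem stmt1 (n : ℕ) (hn : 3 ≤ n)
    (φ : ZeroDiag n →ₗ[ℝ] ZeroDiag n) (hbij : Function.Bijective φ)
    (hnorm : ∀ A : ZeroDiag n,
      ∑ i, ∑ j, ((φ A : Fin n → Fin n → ℝ) i j) * ((φ A : Fin n → Fin n → ℝ) i j) =
      ∑ i, ∑ j, ((A : Fin n → Fin n → ℝ) i j) * ((A : Fin n → Fin n → ℝ) i j))
    (hcone : φ '' {A : ZeroDiag n | (A : Fin n → Fin n → ℝ) ∈ QSM n} =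
      {A : ZeroDiag n | (A : Fin n → Fin n → ℝ) ∈ QSM n}) :
    ∃ π : Equiv.Perm (Fin n),
      (∀ A : ZeroDiag n, ∀ i j : Fin n, i ≠ j →
        (φ A : Fin n → Fin n → ℝ) (π i) (π j) = (A : Fin n → Fin n → ℝ) i j) ∨
      (∀ A : ZeroDiag n, ∀ i j : Fin n, i ≠ j →
        (φ A : Fin n → Fin n → ℝ) (π i) (π j) = (A : Fin n → Fin n → ℝ) j i) := by
  have horth : (frobeniusForm n).IsOrthogonal φ :=
    LinearMap.isOrthogonal_of_forall_apply_same φ (IsRegular.of_ne_zero two_ne_zero).left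
      ⟨frobeniusForm_isSymm.eq⟩ hnorm
  let f : (frobeniusForm n).IsometryEquiv (frobeniusForm n) :=
    { LinearEquiv.ofBijective φ hbij with map_app' := horth }
  have hf (A : ZeroDiag n) : f A ∈ PointedCone.dual (frobeniusForm n) (facetNormals n) ↔
      A ∈ PointedCone.dual (frobeniusForm n) (facetNormals n) := by
    rw [mem_dual_facetNormals_iff, mem_dual_facetNormals_iff]
    have hmem := hbij.1.mem_set_image (s := {A : ZeroDiag n | A.1 ∈ QSM n}) (a := A)
    rwa [hcone] at hmem
  obtain ⟨π, h | h⟩ := exists_perm_map_matrixUnit_eq f hf hn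
  · exact ⟨π, Or.inl fun A i j hij => map_apply_eq_of_map_matrixUnit_eq f (h i j hij) A⟩
  · exact ⟨π, Or.inr fun A i j hij => map_apply_eq_of_map_matrixUnit_eq f (h j i hij.symm) A⟩
end

section
/- Let n ≥ 3 and let E_n be the set of matrices A : Fin n → Fin n → ℤ with A i i = 0 for all i, A i j ≥ 0 for all i ≠ j, and A i j + A j k ≥ A i k for all pairwise distinct i, j, k. For A, B ∈ E_n let A ⊕ B denote the entrywise maximum. If φ : E_n → E_n is a bijection satisfying φ(A ⊕ B) = φ(A) ⊕ φ(B) for all A, B ∈ E_n, then there exists a permutation π of Fin n such that either φ(A)_{π(i)π(j)} = A_{ij} for all A ∈ E_n and all i ≠ j, or φ(A)_{π(i)π(j)} = A_{ji} for all A ∈ E_n and all i ≠ j. (The automorphism group of the monoid (E_n, ⊕) is S_n × ℤ₂.) -/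
/-- The monoid `E_n` of integer quasi-semimetrics (exponent matrices) on `n` points. -/
def EZ (n : ℕ) : Set (Fin n → Fin n → ℤ) :=
  {A | (∀ i, A i i = 0) ∧ (∀ i j : Fin n, i ≠ j → 0 ≤ A i j) ∧
    (∀ i j k : Fin n, i ≠ j → j ≠ k → i ≠ k → A i k ≤ A i j + A j k)}

/-!
An automorphism for `⊔` is an order automorphism, so it preserves every notion defined from the
order. The atoms are the cuts `1_{S × Sᶜ}`, and the completely join-irreducible elements are the
matrices `max (f i - f j) 0` with `f` bounded and nonconstant. Two cuts lie below a common
irreducible element iff their sets are nested, and singletons and their complements are recognised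
among all sets by how many cuts lie below the join of two. Composing with the transposition if
necessary, we may assume that singletons go to singletons; nestedness with singletons then shows
that all cuts are permuted by a relabelling of the points, which we may assume trivial. The
multiples of a fixed cut form a chain isomorphic to `ℕ`, hence are fixed too. An irreducible
element is determined by the multiples of cuts below it, and an arbitrary element by the
irreducible elements below it.
-/

section Order

variable {α β : Type*}

/-- An element of a partial order is completely join-irreducible if it belongs to every set of which
it is the least upper bound. Taking the empty set excludes a bottom element. -/
def CompletelySupIrred [Preorder α] (a : α) : Prop :=
  ∀ s : Set α, IsLUB s a → a ∈ s

theorem CompletelySupIrred.map [Preorder α] [Preorder β] (φ : α ≃o β) {a : α}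
    (ha : CompletelySupIrred a) : CompletelySupIrred (φ a) :=
  fun _ hs => ha _ (φ.isLUB_preimage.2 hs)

/-- An element `a` is crossing if for some atom `b` the join `a ⊔ b` dominates at least two atoms
besides `a` and `b`. For cuts this separates the singletons and their complements, which are not
crossing, from all other sets. -/
def IsCrossing [SemilatticeSup α] [OrderBot α] (a : α) : Prop :=
  ∃ b c d : α, IsAtom b ∧ (IsAtom c ∧ c ≠ a ∧ c ≠ b ∧ c ≤ a ⊔ b) ∧
    (IsAtom d ∧ d ≠ a ∧ d ≠ b ∧ d ≤ a ⊔ b) ∧ c ≠ d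

theorem IsCrossing.map [SemilatticeSup α] [OrderBot α] [SemilatticeSup β] [OrderBot β]
    (φ : α ≃o β) {a : α} (ha : IsCrossing a) : IsCrossing (φ a) := by
  obtain ⟨b, c, d, hb, hc, hd, hcd⟩ := ha
  refine ⟨φ b, φ c, φ d, ?_⟩
  simpa only [← φ.map_sup, φ.isAtom_iff, φ.le_iff_le, φ.injective.ne_iff] using ⟨hb, hc, hd, hcd⟩

theorem isCrossing_map_iff [SemilatticeSup α] [OrderBot α] [SemilatticeSup β] [OrderBot β]
    (φ : α ≃o β) {a : α} : IsCrossing (φ a) ↔ IsCrossing a :=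
  ⟨fun h => by simpa only [φ.symm_apply_apply] using h.map φ.symm, IsCrossing.map φ⟩

/-- A bijection preserving binary joins, as an order isomorphism. -/
def orderIsoOfMapSup [SemilatticeSup α] [SemilatticeSup β] (e : α ≃ β)
    (he : ∀ a b, e (a ⊔ b) = e a ⊔ e b) : α ≃o β where
  toEquiv := e
  map_rel_iff' := by simp only [← sup_eq_right, ← he, e.injective.eq_iff, implies_true]

end Order

section Sets

variable {ι : Type*}

/-- A set is proper if both it and its complement are nonempty. These are the sets whose cut is
nonzero. -/
def IsProper (S : Set ι) : Prop :=
  S.Nonempty ∧ Sᶜ.Nonempty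

theorem isProper_singleton [Nontrivial ι] (i : ι) : IsProper ({i} : Set ι) :=
  ⟨Set.singleton_nonempty i, Set.nonempty_compl_of_nontrivial i⟩

theorem IsProper.compl {S : Set ι} (hS : IsProper S) : IsProper Sᶜ :=
  ⟨hS.2, by rw [compl_compl]; exact hS.1⟩

theorem singleton_nested_iff {S : Set ι} (hS : S.Nonempty) {i : ι} :
    ({i} ⊆ S ∨ S ⊆ {i}) ↔ i ∈ S := by
  rw [Set.singleton_subset_iff, or_iff_left_iff_imp, hS.subset_singleton_iff]
  rintro rfl
  exact Set.mem_singleton i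

theorem exists_eq_singleton_of_not_nontrivial {S : Set ι} (hS : S.Nonempty)
    (h : ¬ S.Nontrivial) : ∃ i, S = {i} :=
  hS.exists_eq_singleton_or_nontrivial.resolve_right h

theorem nontrivial_of_ssubset {S T : Set ι} (hS : S.Nonempty) (h : S ⊂ T) : T.Nontrivial := by
  obtain ⟨x, hx⟩ := hS
  obtain ⟨y, hy, hyS⟩ := Set.exists_of_ssubset h
  exact ⟨x, h.subset hx, y, hy, fun hxy => hyS (hxy ▸ hx)⟩

theorem exists_ne_ne_of_singleton_ne_compl [Nontrivial ι] {a : ι}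
    (ha : ∀ m, ({a} : Set ι) ≠ {m}ᶜ) (i j : ι) : ∃ k, k ≠ i ∧ k ≠ j := by
  by_contra! hij
  have hor : ∀ k, k = i ∨ k = j := fun k => or_iff_not_imp_left.2 (hij k)
  obtain ⟨m, hm⟩ := exists_ne a
  refine ha m (Set.ext fun x => ?_)
  rw [Set.mem_compl_iff, Set.mem_singleton_iff, Set.mem_singleton_iff]
  grind only [hor a, hor m, hor x]

/-- The hypothesis says that the rectangle `C × Cᶜ` is covered by `S × Sᶜ` and `B × Bᶜ`. -/
theorem eq_of_prod_compl_subset {C S B : Set ι} (hC : IsProper C)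
    (h : ∀ x ∈ C, ∀ y ∉ C, (x ∈ S ∧ y ∉ S) ∨ (x ∈ B ∧ y ∉ B)) :
    C = S ∨ C = B ∨ C = S ∩ B ∨ C = S ∪ B := by
  obtain ⟨⟨a, ha⟩, b, hb⟩ := hC
  have hunion : C ⊆ S ∪ B := fun x hx => (h x hx b hb).imp And.left And.left
  have hinter : S ∩ B ⊆ C := fun y hy => by
    by_contra hyC
    exact (h a ha y hyC).elim (fun H => H.2 hy.1) fun H => H.2 hy.2
  have hS : C ⊆ S ∨ B ⊆ C := by
    by_contra! H
    obtain ⟨⟨x, hx, hxS⟩, y, hy, hyC⟩ := H.imp Set.not_subset.1 Set.not_subset.1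
    exact (h x hx y hyC).elim (fun H => hxS H.1) fun H => H.2 hy
  have hB : C ⊆ B ∨ S ⊆ C := by
    by_contra! H
    obtain ⟨⟨x, hx, hxB⟩, y, hy, hyC⟩ := H.imp Set.not_subset.1 Set.not_subset.1
    exact (h x hx y hyC).elim (fun H => H.2 hy) fun H => hxB H.1
  rcases hS with hCS | hBC <;> rcases hB with hCB | hSC
  · exact Or.inr (Or.inr (Or.inl ((Set.subset_inter hCS hCB).antisymm hinter)))
  · exact Or.inl (hCS.antisymm hSC)
  · exact Or.inr (Or.inl (hCB.antisymm hBC))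
  · exact Or.inr (Or.inr (Or.inr (hunion.antisymm (Set.union_subset hSC hBC))))

end Sets

/-- The integer quasi-semimetrics on an arbitrary type of points. On `Fin n` this is `EZ n`; the
triangle inequality is required for all triples, since for triples with repetitions it follows from
the other conditions. -/
def quasiSemimetrics (ι : Type*) : Set (ι → ι → ℤ) :=
  {A | (∀ i, A i i = 0) ∧ (∀ i j, 0 ≤ A i j) ∧ ∀ i j k, A i k ≤ A i j + A j k}

theorem EZ_eq_quasiSemimetrics (n : ℕ) : EZ n = quasiSemimetrics (Fin n) := by
  ext A
  refine ⟨fun ⟨hdiag, hnonneg, htri⟩ => ?_, fun ⟨hdiag, hnonneg, htri⟩ =>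
    ⟨hdiag, fun i j _ => hnonneg i j, fun i j k _ _ _ => htri i j k⟩⟩
  have hnonneg' (i j) : 0 ≤ A i j := by
    rcases eq_or_ne i j with rfl | hij
    · exact (hdiag i).ge
    · exact hnonneg i j hij
  refine ⟨hdiag, hnonneg', fun i j k => ?_⟩
  rcases eq_or_ne i j with rfl | hij
  · rw [hdiag, zero_add]
  rcases eq_or_ne j k with rfl | hjk
  · rw [hdiag, add_zero]
  rcases eq_or_ne i k with rfl | hik
  · exact (hdiag i).trans_le (add_nonneg (hnonneg' i j) (hnonneg' j i))
  · exact htri i j k hij hjk hik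

namespace quasiSemimetrics

variable {ι κ : Type*}

instance : CoeFun (quasiSemimetrics ι) fun _ => ι → ι → ℤ := ⟨Subtype.val⟩

@[ext]
theorem ext {A B : quasiSemimetrics ι} (h : ∀ i j, A i j = B i j) : A = B :=
  Subtype.ext (funext₂ h)

@[simp]
theorem apply_self (A : quasiSemimetrics ι) (i : ι) : A i i = 0 := A.2.1 i

theorem nonneg (A : quasiSemimetrics ι) (i j : ι) : 0 ≤ A i j := A.2.2.1 i j

theorem triangle (A : quasiSemimetrics ι) (i j k : ι) : A i k ≤ A i j + A j k := A.2.2.2 i j k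

theorem sup_mem {A B : ι → ι → ℤ} (hA : A ∈ quasiSemimetrics ι) (hB : B ∈ quasiSemimetrics ι) :
    A ⊔ B ∈ quasiSemimetrics ι := by
  refine ⟨fun i => ?_, fun i j => le_sup_of_le_left (hA.2.1 i j), fun i j k => sup_le ?_ ?_⟩
  · rw [Pi.sup_apply, Pi.sup_apply, hA.1, hB.1, sup_idem]
  · exact (hA.2.2 i j k).trans (add_le_add le_sup_left le_sup_left)
  · exact (hB.2.2 i j k).trans (add_le_add le_sup_right le_sup_right)

instance : SemilatticeSup (quasiSemimetrics ι) :=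
  Subtype.semilatticeSup fun _ _ => sup_mem

instance : OrderBot (quasiSemimetrics ι) where
  bot := ⟨0, by simp [quasiSemimetrics]⟩
  bot_le := nonneg

theorem le_def {A B : quasiSemimetrics ι} : A ≤ B ↔ ∀ i j, A i j ≤ B i j := Iff.rfl

theorem sup_apply (A B : quasiSemimetrics ι) (i j : ι) : (A ⊔ B) i j = max (A i j) (B i j) := rfl

theorem ne_bot_iff {A : quasiSemimetrics ι} : A ≠ ⊥ ↔ ∃ i j, 0 < A i j := by
  rw [ne_eq, ← le_bot_iff, le_def]
  push Not
  rfl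

/-- The pullback of a quasi-semimetric along a map of points. -/
def comap (f : κ → ι) (A : quasiSemimetrics ι) : quasiSemimetrics κ :=
  ⟨fun i j => A (f i) (f j), fun _ => apply_self A _, fun _ _ => nonneg A _ _,
    fun _ _ _ => triangle A _ _ _⟩

/-- Relabelling of the points, as an order isomorphism. -/
def relabel (e : κ ≃ ι) : quasiSemimetrics ι ≃o quasiSemimetrics κ where
  toFun := comap e
  invFun := comap e.symm
  left_inv A := by ext; simp [comap]
  right_inv A := by ext; simp [comap]
  map_rel_iff' := by simp [le_def, comap, e.forall_congr_left]

/-- Transposition, as an order isomorphism. -/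
def transpose : quasiSemimetrics ι ≃o quasiSemimetrics ι where
  toFun A := ⟨fun i j => A j i, apply_self A, fun i j => nonneg A j i,
    fun i j k => (triangle A k j i).trans_eq (add_comm _ _)⟩
  invFun A := ⟨fun i j => A j i, apply_self A, fun i j => nonneg A j i,
    fun i j k => (triangle A k j i).trans_eq (add_comm _ _)⟩
  left_inv _ := rfl
  right_inv _ := rfl
  map_rel_iff' := forall_comm

/-- The truncation of a quasi-semimetric at height `c`. -/
def truncate (A : quasiSemimetrics ι) {c : ℤ} (hc : 0 ≤ c) : quasiSemimetrics ι :=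
  ⟨fun i j => min (A i j) c, fun i => by simp [hc],
    fun i j => le_min (nonneg A i j) hc, fun i j k => by
      dsimp only
      have := triangle A i j k
      have := nonneg A i j
      have := nonneg A j k
      omega⟩

/-- The quasi-semimetric `max (f i - f j) 0` with potential `f`. -/
def potential (f : ι → ℤ) : quasiSemimetrics ι :=
  ⟨fun i j => max (f i - f j) 0, fun i => by simp, fun i j => le_max_right _ _,
    fun i j k => by dsimp only; omega⟩

theorem potential_apply (f : ι → ℤ) (i j : ι) : potential f i j = max (f i - f j) 0 := rfl

open Classical in
/-- The cut of `S` with multiplicity `c`: equal to `c` on `S × Sᶜ` and to `0` elsewhere. -/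
noncomputable def cut (c : ℕ) (S : Set ι) : quasiSemimetrics ι :=
  potential fun i => if i ∈ S then (c : ℤ) else 0

theorem cut_apply (c : ℕ) (S : Set ι) [DecidablePred (· ∈ S)] (i j : ι) :
    cut c S i j = if i ∈ S ∧ j ∉ S then (c : ℤ) else 0 := by
  rw [cut, potential_apply]
  grind

theorem cut_apply_of_mem_of_notMem (c : ℕ) {S : Set ι} {i j : ι} (hi : i ∈ S) (hj : j ∉ S) :
    cut c S i j = c := by
  classical rw [cut_apply, if_pos ⟨hi, hj⟩]

theorem cut_le_iff {c : ℕ} {S : Set ι} {A : quasiSemimetrics ι} :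
    cut c S ≤ A ↔ ∀ i ∈ S, ∀ j ∉ S, (c : ℤ) ≤ A i j := by
  classical
  refine ⟨fun h i hi j hj => (cut_apply_of_mem_of_notMem c hi hj).ge.trans (h i j),
    fun h i j => ?_⟩
  rw [cut_apply]
  split_ifs with hij
  · exact h i hij.1 j hij.2
  · exact nonneg A i j

theorem relabel_cut_image (e : κ ≃ ι) (c : ℕ) (S : Set κ) :
    relabel e (cut c (e '' S)) = cut c S := by
  classical
  ext i j
  change cut c (e '' S) (e i) (e j) = _
  simp only [cut_apply, e.injective.mem_set_image]

theorem transpose_cut (c : ℕ) (S : Set ι) : transpose (cut c S) = cut c Sᶜ := by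
  classical
  ext i j
  change cut c S j i = _
  simp only [cut_apply, Set.mem_compl_iff, not_not, and_comm]

theorem eq_of_cut_le_cut {c : ℕ} {S T : Set ι} (hS : IsProper S) (h : cut 1 S ≤ cut c T) :
    S = T := by
  classical
  have hsub : ∀ i ∈ S, ∀ j ∉ S, i ∈ T ∧ j ∉ T := fun i hi j hj => by
    have := cut_le_iff.1 h i hi j hj
    rw [cut_apply] at this
    by_contra hij
    rw [if_neg hij] at this
    omega
  obtain ⟨⟨a, ha⟩, b, hb⟩ := hS
  refine Set.Subset.antisymm (fun i hi => (hsub i hi b hb).1) fun i hi => ?_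
  by_contra hiS
  exact (hsub a ha i hiS).2 hi

theorem cut_one_inj {S T : Set ι} (hS : IsProper S) : cut 1 S = cut 1 T ↔ S = T :=
  ⟨fun h => eq_of_cut_le_cut hS h.le, congrArg _⟩

theorem cut_le_cut_iff {S : Set ι} (hS : IsProper S) {c d : ℕ} : cut c S ≤ cut d S ↔ c ≤ d := by
  obtain ⟨⟨a, ha⟩, b, hb⟩ := hS
  rw [cut_le_iff]
  refine ⟨fun h => ?_, fun h i hi j hj => ?_⟩
  · exact_mod_cast (h a ha b hb).trans_eq (cut_apply_of_mem_of_notMem d ha hb)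
  · exact (Nat.cast_le.2 h).trans_eq (cut_apply_of_mem_of_notMem d hi hj).symm

theorem cut_superlevel_le (A : quasiSemimetrics ι) (t : ℤ) (j : ι) :
    cut 1 {x | t < A x j} ≤ A := by
  refine cut_le_iff.2 fun x hx y hy => ?_
  have := triangle A x y j
  rw [Set.mem_ofPred_eq] at hx hy
  omega

theorem isProper_superlevel {A : quasiSemimetrics ι} {i j : ι} (h : 0 < A i j) :
    IsProper {x | 0 < A x j} :=
  ⟨⟨i, h⟩, j, by simp⟩

theorem cut_one_ne_bot {S : Set ι} (hS : IsProper S) : cut 1 S ≠ ⊥ := by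
  obtain ⟨⟨a, ha⟩, b, hb⟩ := hS
  exact ne_bot_iff.2 ⟨a, b, by simp [cut_apply_of_mem_of_notMem 1 ha hb]⟩

theorem exists_cut_le {A : quasiSemimetrics ι} (hA : A ≠ ⊥) : ∃ S, IsProper S ∧ cut 1 S ≤ A := by
  obtain ⟨i, j, hij⟩ := ne_bot_iff.1 hA
  exact ⟨_, isProper_superlevel hij, cut_superlevel_le A 0 j⟩

theorem isAtom_cut {S : Set ι} (hS : IsProper S) : IsAtom (cut 1 S) := by
  refine isAtom_iff_le_of_ge.2 ⟨cut_one_ne_bot hS, fun A hA hAS => ?_⟩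
  obtain ⟨T, hT, hTA⟩ := exists_cut_le hA
  rwa [← eq_of_cut_le_cut hT (hTA.trans hAS)]

theorem isAtom_iff {A : quasiSemimetrics ι} : IsAtom A ↔ ∃ S, IsProper S ∧ A = cut 1 S := by
  refine ⟨fun hA => ?_, fun ⟨S, hS, hA⟩ => hA ▸ isAtom_cut hS⟩
  obtain ⟨S, hS, hSA⟩ := exists_cut_le hA.ne_bot
  exact ⟨S, hS, ((hA.le_iff_eq (cut_one_ne_bot hS)).1 hSA).symm⟩

theorem exists_eq_cut {A : quasiSemimetrics ι} {S : Set ι} (hS : IsProper S)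
    (h : ∀ T, IsProper T → cut 1 T ≤ A → T = S) : ∃ c : ℕ, A = cut c S := by
  classical
  obtain ⟨⟨a, ha⟩, b, hb⟩ := hS
  have hzero : ∀ {i j}, ¬ (i ∈ S ∧ j ∉ S) → A i j = 0 := fun {i j} hij => by
    by_contra hne
    have hpos : 0 < A i j := (nonneg A i j).lt_of_ne' hne
    have hlevel := h _ (isProper_superlevel hpos) (cut_superlevel_le A 0 j)
    exact hij (hlevel ▸ ⟨hpos, by simp⟩)
  have hle : ∀ {i j k l}, k ∈ S → l ∉ S → A i j ≤ A k l := fun {i j k l} hk hl => by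
    have := triangle A i k j
    have := triangle A k l j
    have := hzero (i := i) (j := k) fun h => h.2 hk
    have := hzero (i := l) (j := j) fun h => hl h.1
    omega
  refine ⟨(A a b).toNat, ext fun i j => ?_⟩
  rw [cut_apply, Int.toNat_of_nonneg (nonneg A a b)]
  split_ifs with hij
  · exact (hle ha hb).antisymm (hle hij.1 hij.2)
  · exact hzero hij

theorem cut_le_potential_iff {S : Set ι} {f : ι → ℤ} :
    cut 1 S ≤ potential f ↔ ∀ i ∈ S, ∀ j ∉ S, f j < f i := by
  simp only [cut_le_iff, potential_apply, Nat.cast_one]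
  grind

theorem potential_col_le (A : quasiSemimetrics ι) (i k : ι) :
    potential (fun x => min (A x k) (A i k)) ≤ A := le_def.2 fun x y => by
  have := triangle A x y k
  have := nonneg A x y
  rw [potential_apply]
  omega

theorem potential_col_apply (A : quasiSemimetrics ι) (i k : ι) :
    potential (fun x => min (A x k) (A i k)) i k = A i k := by
  simp [potential_apply, nonneg]

theorem eq_potential_of_le {f : ι → ℤ} {a b : ι} (ha : ∀ x, f x ≤ f a) (hb : ∀ x, f b ≤ f x)
    {B : quasiSemimetrics ι} (hB : B ≤ potential f) (hab : f a - f b ≤ B a b) :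
    B = potential f := by
  refine hB.antisymm (le_def.2 fun x y => ?_)
  have hax := le_def.1 hB a x
  have hyb := le_def.1 hB y b
  have := ha x
  have := hb y
  have := triangle B a x b
  have := triangle B x y b
  have := nonneg B x y
  rw [potential_apply] at hax hyb ⊢
  omega

theorem apply_le_of_le_potential {f : ι → ℤ} {a b : ι} (ha : ∀ x, f x ≤ f a)
    (hb : ∀ x, f b ≤ f x) {B : quasiSemimetrics ι} (hB : B ≤ potential f) (x y : ι) :
    B x y ≤ B a b := by
  have hxa : B x a ≤ 0 := (hB x a).trans_eq (max_eq_right (sub_nonpos.2 (ha x)))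
  have hby : B b y ≤ 0 := (hB b y).trans_eq (max_eq_right (sub_nonpos.2 (hb y)))
  have := triangle B x a y
  have := triangle B a b y
  omega

theorem completelySupIrred_potential {f : ι → ℤ} {a b : ι} (ha : ∀ x, f x ≤ f a)
    (hb : ∀ x, f b ≤ f x) (hab : f b < f a) : CompletelySupIrred (potential f) := by
  intro s hs
  by_contra hfs
  have hlt : ∀ B ∈ s, B a b < f a - f b := fun B hB => by
    by_contra! h
    exact hfs (eq_potential_of_le ha hb (hs.1 hB) h ▸ hB)
  -- The truncation just below the maximum is the unique lower cover of `potential f`.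
  have hc : 0 ≤ f a - f b - 1 := by omega
  have hle : potential f ≤ truncate (potential f) hc := hs.2 fun B hB x y =>
    le_min (hs.1 hB x y)
      ((apply_le_of_le_potential ha hb (hs.1 hB) x y).trans (Int.le_sub_one_of_lt (hlt B hB)))
  have : f a - f b ≤ f a - f b - 1 :=
    (le_max_left _ _).trans ((hle a b).trans (min_le_right _ _))
  omega

theorem completelySupIrred_potential_col {A : quasiSemimetrics ι} {i k : ι} (h : 0 < A i k) :
    CompletelySupIrred (potential fun x => min (A x k) (A i k)) :=
  completelySupIrred_potential (a := i) (b := k) (fun x => by simp) (fun x => by simp [nonneg])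
    (by simpa using h)

theorem isLUB_potential_col (A : quasiSemimetrics ι) :
    IsLUB {B | ∃ i k, B = potential fun x => min (A x k) (A i k)} A := by
  refine ⟨?_, fun B hB i k => ?_⟩
  · rintro _ ⟨i, k, rfl⟩
    exact potential_col_le A i k
  · exact (potential_col_apply A i k).ge.trans (hB ⟨i, k, rfl⟩ i k)

theorem exists_eq_potential_of_completelySupIrred {A : quasiSemimetrics ι}
    (hA : CompletelySupIrred A) : ∃ f, A = potential f := by
  obtain ⟨i, k, h⟩ := hA _ (isLUB_potential_col A)
  exact ⟨_, h⟩

theorem le_of_forall_completelySupIrred_le {A B : quasiSemimetrics ι}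
    (h : ∀ C, CompletelySupIrred C → C ≤ A → C ≤ B) : A ≤ B := fun i k => by
  rcases (nonneg A i k).eq_or_lt with hik | hik
  · exact hik.symm.trans_le (nonneg B i k)
  · rw [← potential_col_apply A i k]
    exact h _ (completelySupIrred_potential_col hik) (potential_col_le A i k) i k

theorem potential_le_of_forall_cut_le {f g : ι → ℤ}
    (h : ∀ (c : ℕ) (S : Set ι), IsProper S → cut c S ≤ potential f → cut c S ≤ potential g) :
    potential f ≤ potential g := by
  -- A difference `f i - f j` splits at any value of `f` strictly between, and a difference of
  -- consecutive values is the multiplicity of a cut below `potential f`.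
  have hsub : ∀ i j, f j < f i → f i - f j ≤ g i - g j := fun i j hij => by
    induction hm : (f i - f j).toNat using Nat.strong_induction_on generalizing i j with
    | _ m ih =>
      by_cases hbetween : ∃ x, f j < f x ∧ f x < f i
      · obtain ⟨x, hjx, hxi⟩ := hbetween
        have := ih _ (by omega) i x hxi rfl
        have := ih _ (by omega) x j hjx rfl
        omega
      · have hcut : cut (f i - f j).toNat {x | f j < f x} ≤ potential f :=
          cut_le_iff.2 fun y hy z hz => by
            have hiy : f i ≤ f y := not_lt.1 fun hyi => hbetween ⟨y, hy, hyi⟩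
            have hzj : f z ≤ f j := not_lt.1 hz
            rw [potential_apply]
            omega
        have := cut_le_iff.1 (h _ _ ⟨⟨i, hij⟩, j, by simp⟩ hcut) i hij j (by simp)
        rw [potential_apply] at this
        omega
  refine le_def.2 fun i j => ?_
  have := hsub i j
  rw [potential_apply, potential_apply]
  omega

theorem nested_iff_exists_completelySupIrred {S T : Set ι} (hS : IsProper S) (hT : IsProper T) :
    S ⊆ T ∨ T ⊆ S ↔
      ∃ C : quasiSemimetrics ι, CompletelySupIrred C ∧ cut 1 S ≤ C ∧ cut 1 T ≤ C := by
  classical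
  refine ⟨fun h => ?_, ?_⟩
  · wlog hST : S ⊆ T generalizing S T
    · simpa only [and_comm] using this hT hS h.symm (h.resolve_left hST)
    obtain ⟨a, ha⟩ := hS.1
    obtain ⟨b, hb⟩ := hT.2
    let f : ι → ℤ := fun i => if i ∈ S then 2 else if i ∈ T then 1 else 0
    have hfa : f a = 2 := if_pos ha
    have hfb : f b = 0 := (if_neg fun h => hb (hST h)).trans (if_neg hb)
    refine ⟨potential f, completelySupIrred_potential (a := a) (b := b) ?_ ?_ ?_,
      cut_le_potential_iff.2 ?_, cut_le_potential_iff.2 ?_⟩ <;> grind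
  · rintro ⟨C, hC, hSC, hTC⟩
    obtain ⟨f, rfl⟩ := exists_eq_potential_of_completelySupIrred hC
    by_contra! hcon
    obtain ⟨⟨a, haS, haT⟩, b, hbT, hbS⟩ := hcon.imp Set.not_subset.1 Set.not_subset.1
    exact (cut_le_potential_iff.1 hSC a haS b hbS).asymm (cut_le_potential_iff.1 hTC b hbT a haT)

theorem cut_le_sup_cut_iff {C S B : Set ι} : cut 1 C ≤ cut 1 S ⊔ cut 1 B ↔
    ∀ x ∈ C, ∀ y ∉ C, (x ∈ S ∧ y ∉ S) ∨ (x ∈ B ∧ y ∉ B) := by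
  classical
  simp only [cut_le_iff, sup_apply, cut_apply, Nat.cast_one, le_max_iff]
  grind

theorem isCrossing_cut_iff {S : Set ι} :
    IsCrossing (cut 1 S) ↔ S.Nontrivial ∧ Sᶜ.Nontrivial := by
  constructor
  · rintro ⟨_, _, _, hb, ⟨hc, hcS, hcB, hcle⟩, ⟨hd, hdS, hdB, hdle⟩, hcd⟩
    obtain ⟨B, -, rfl⟩ := isAtom_iff.1 hb
    obtain ⟨C, hC, rfl⟩ := isAtom_iff.1 hc
    obtain ⟨E, hE, rfl⟩ := isAtom_iff.1 hd
    have inter_or_union : ∀ {D}, IsProper D → cut 1 D ≠ cut 1 S → cut 1 D ≠ cut 1 B →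
        cut 1 D ≤ cut 1 S ⊔ cut 1 B → D = S ∩ B ∨ D = S ∪ B := fun hD hDS hDB hle =>
      ((eq_of_prod_compl_subset hD (cut_le_sup_cut_iff.1 hle)).resolve_left
        fun h => hDS (congrArg _ h)).resolve_left fun h => hDB (congrArg _ h)
    obtain ⟨⟨hinter, hinterS⟩, hunion, hunionS⟩ : ((S ∩ B).Nonempty ∧ S ∩ B ≠ S) ∧
        (S ∪ B)ᶜ.Nonempty ∧ S ∪ B ≠ S := by
      rw [ne_eq, cut_one_inj hC] at hcd
      rcases inter_or_union hC hcS hcB hcle with rfl | rfl <;>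
      rcases inter_or_union hE hdS hdB hdle with rfl | rfl
      · exact absurd rfl hcd
      · exact ⟨⟨hC.1, fun h => hcS (congrArg _ h)⟩, hE.2, fun h => hdS (congrArg _ h)⟩
      · exact ⟨⟨hE.1, fun h => hdS (congrArg _ h)⟩, hC.2, fun h => hcS (congrArg _ h)⟩
      · exact absurd rfl hcd
    exact ⟨nontrivial_of_ssubset hinter (Set.inter_subset_left.ssubset_of_ne hinterS),
      nontrivial_of_ssubset hunion (compl_lt_compl_iff_lt.2
        (Set.subset_union_left.ssubset_of_ne hunionS.symm))⟩
  · rintro ⟨⟨a, ha, b, hb, hab⟩, c, hc, d, hd, hcd⟩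
    have hB : IsProper {a, c} := ⟨⟨a, by grind⟩, b, by grind⟩
    have hC : IsProper {a} := ⟨⟨a, rfl⟩, b, hab.symm⟩
    have hE : IsProper (insert c S) := ⟨⟨c, by grind⟩, d, by grind⟩
    refine ⟨cut 1 {a, c}, cut 1 {a}, cut 1 (insert c S), isAtom_cut hB, ⟨isAtom_cut hC, ?_⟩,
      ⟨isAtom_cut hE, ?_⟩, ?_⟩ <;>
    simp only [ne_eq, cut_one_inj hC, cut_one_inj hE, cut_le_sup_cut_iff] <;>
    grind

section Automorphism

variable (φ : quasiSemimetrics ι ≃o quasiSemimetrics ι)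

theorem exists_map_cut {S : Set ι} (hS : IsProper S) :
    ∃ T, IsProper T ∧ φ (cut 1 S) = cut 1 T :=
  isAtom_iff.1 ((φ.isAtom_iff _).2 (isAtom_cut hS))

variable {φ}

theorem le_map_cut (hφ : ∀ S, IsProper S → φ (cut 1 S) = cut 1 S) {S : Set ι} (hS : IsProper S)
    (c : ℕ) : cut c S ≤ φ (cut c S) := by
  have hmultiple : ∀ c, ∃ d, φ (cut c S) = cut d S := fun c =>
    exists_eq_cut hS fun T hT hTc => by
      rw [← hφ T hT, φ.le_iff_le] at hTc
      exact eq_of_cut_le_cut hT hTc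
  choose h hh using hmultiple
  have hmono : StrictMono h := strictMono_of_le_iff_le fun c d => by
    rw [← cut_le_cut_iff hS, ← cut_le_cut_iff hS, ← hh, ← hh, φ.le_iff_le]
  rw [hh, cut_le_cut_iff hS]
  exact hmono.le_apply

theorem map_cut_eq_self (hφ : ∀ S, IsProper S → φ (cut 1 S) = cut 1 S) {S : Set ι}
    (hS : IsProper S) (c : ℕ) : φ (cut c S) = cut c S := by
  refine le_antisymm ?_ (le_map_cut hφ hS c)
  rw [← φ.le_symm_apply]
  exact le_map_cut (fun T hT => φ.symm_apply_eq.2 (hφ T hT).symm) hS c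

theorem map_completelySupIrred_eq_self (hφ : ∀ S, IsProper S → φ (cut 1 S) = cut 1 S)
    {A : quasiSemimetrics ι} (hA : CompletelySupIrred A) : φ A = A := by
  have hcut : ∀ (c : ℕ) (S : Set ι), IsProper S → (cut c S ≤ φ A ↔ cut c S ≤ A) :=
    fun c S hS => by rw [← φ.le_iff_le (x := cut c S) (y := A), map_cut_eq_self hφ hS]
  obtain ⟨g, hg⟩ := exists_eq_potential_of_completelySupIrred (hA.map φ)
  obtain ⟨f, rfl⟩ := exists_eq_potential_of_completelySupIrred hA
  rw [hg] at hcut ⊢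
  exact le_antisymm (potential_le_of_forall_cut_le fun c S hS => (hcut c S hS).1)
    (potential_le_of_forall_cut_le fun c S hS => (hcut c S hS).2)

theorem map_eq_self (hφ : ∀ S, IsProper S → φ (cut 1 S) = cut 1 S) (A : quasiSemimetrics ι) :
    φ A = A := by
  have hirred : ∀ C, CompletelySupIrred C → (C ≤ φ A ↔ C ≤ A) := fun C hC => by
    rw [← φ.le_iff_le (x := C) (y := A), map_completelySupIrred_eq_self hφ hC]
  exact le_antisymm (le_of_forall_completelySupIrred_le fun C hC => (hirred C hC).1)
    (le_of_forall_completelySupIrred_le fun C hC => (hirred C hC).2)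

theorem nested_of_map_cut {S T S' T' : Set ι} (hS : IsProper S) (hT : IsProper T)
    (hS' : IsProper S') (hT' : IsProper T') (hSS' : φ (cut 1 S) = cut 1 S')
    (hTT' : φ (cut 1 T) = cut 1 T') (h : S ⊆ T ∨ T ⊆ S) : S' ⊆ T' ∨ T' ⊆ S' := by
  rw [nested_iff_exists_completelySupIrred hS hT] at h
  obtain ⟨C, hC, hSC, hTC⟩ := h
  rw [nested_iff_exists_completelySupIrred hS' hT', ← hSS', ← hTT']
  exact ⟨φ C, hC.map φ, φ.monotone hSC, φ.monotone hTC⟩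

theorem nested_map_cut_iff {S T S' T' : Set ι} (hS : IsProper S) (hT : IsProper T)
    (hS' : IsProper S') (hT' : IsProper T') (hSS' : φ (cut 1 S) = cut 1 S')
    (hTT' : φ (cut 1 T) = cut 1 T') : (S' ⊆ T' ∨ T' ⊆ S') ↔ (S ⊆ T ∨ T ⊆ S) :=
  ⟨nested_of_map_cut hS' hT' hS hT (φ.symm_apply_eq.2 hSS'.symm) (φ.symm_apply_eq.2 hTT'.symm),
    nested_of_map_cut hS hT hS' hT' hSS' hTT'⟩

variable (φ) in
theorem map_cut_singleton [Nontrivial ι] (i : ι) :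
    (∃ j, φ (cut 1 {i}) = cut 1 {j}) ∨ ∃ j, φ (cut 1 {i}) = cut 1 {j}ᶜ := by
  obtain ⟨T, hT, hiT⟩ := exists_map_cut φ (isProper_singleton i)
  have hcross : ¬ IsCrossing (cut 1 T) := by
    rw [← hiT, isCrossing_map_iff, isCrossing_cut_iff]
    exact fun h => Set.not_nontrivial_singleton h.1
  rw [isCrossing_cut_iff, not_and_or] at hcross
  refine hcross.imp (fun h => ?_) fun h => ?_
  · obtain ⟨j, rfl⟩ := exists_eq_singleton_of_not_nontrivial hT.1 h
    exact ⟨j, hiT⟩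
  · obtain ⟨j, hj⟩ := exists_eq_singleton_of_not_nontrivial hT.2 h
    exact ⟨j, by rw [hiT, ← hj, compl_compl]⟩

theorem map_cut_singleton_injective [Nontrivial ι] {i j : ι}
    (h : φ (cut 1 {i}) = φ (cut 1 {j})) : i = j := by
  rwa [φ.injective.eq_iff, cut_one_inj (isProper_singleton i), Set.singleton_eq_singleton_iff] at h

theorem eq_of_map_cut_singleton [Nontrivial ι] {i j i' j' : ι} (hij : i ≠ j)
    (hi : φ (cut 1 {i}) = cut 1 {i'}ᶜ) (hj : φ (cut 1 {j}) = cut 1 {j'}) : j' = i' := by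
  by_contra hne
  refine hij ((singleton_nested_iff (Set.singleton_nonempty j)).1 ?_)
  exact (nested_map_cut_iff (isProper_singleton i) (isProper_singleton j)
    (isProper_singleton i').compl (isProper_singleton j') hi hj).1
    (Or.inr (Set.singleton_subset_iff.2 hne))

variable (φ) in
theorem map_cut_singletons [Nontrivial ι] :
    (∀ i, ∃ j, φ (cut 1 {i}) = cut 1 {j}) ∨ ∀ i, ∃ j, φ (cut 1 {i}) = cut 1 {j}ᶜ := by
  by_contra! ⟨⟨i, hi⟩, j, hj⟩
  obtain ⟨i', hi'⟩ := (map_cut_singleton φ i).resolve_left fun ⟨k, hk⟩ => hi k hk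
  obtain ⟨j', hj'⟩ := (map_cut_singleton φ j).resolve_right fun ⟨k, hk⟩ => hj k hk
  have hij : i ≠ j := fun h => hj i' (h ▸ hi')
  obtain ⟨k, hki, hkj⟩ := exists_ne_ne_of_singleton_ne_compl
    (fun m hm => hj m (hj'.trans (congrArg _ hm))) i j
  obtain rfl : j' = i' := eq_of_map_cut_singleton hij hi' hj'
  rcases map_cut_singleton φ k with ⟨k', hk'⟩ | ⟨k', hk'⟩
  · obtain rfl : k' = j' := eq_of_map_cut_singleton hki.symm hi' hk'
    exact hkj (map_cut_singleton_injective (hk'.trans hj'.symm))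
  · obtain rfl : j' = k' := eq_of_map_cut_singleton hkj hk' hj'
    exact hki (map_cut_singleton_injective (hk'.trans hi'.symm))

theorem exists_perm_map_cut [Nontrivial ι] (h : ∀ i, ∃ j, φ (cut 1 {i}) = cut 1 {j}) :
    ∃ π : Equiv.Perm ι, ∀ S, IsProper S → φ (cut 1 S) = cut 1 (π '' S) := by
  choose p hp using h
  have mem_iff : ∀ {i S T}, IsProper S → IsProper T → φ (cut 1 S) = cut 1 T →
      (p i ∈ T ↔ i ∈ S) := fun {i S T} hS hT hST => by
    rw [← singleton_nested_iff hS.1, ← singleton_nested_iff hT.1]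
    exact nested_map_cut_iff (isProper_singleton i) hS (isProper_singleton _) hT (hp i) hST
  have hinj : Function.Injective p := fun i j hij =>
    map_cut_singleton_injective ((hp i).trans (hij ▸ (hp j).symm))
  have hsurj : Function.Surjective p := fun y => by
    obtain ⟨U, hU, hyU⟩ := exists_map_cut φ.symm (isProper_singleton y)
    obtain ⟨i, hi⟩ := hU.1
    exact ⟨i, (mem_iff hU (isProper_singleton y) (φ.symm_apply_eq.1 hyU).symm).2 hi⟩
  have hbij : Function.Bijective p := ⟨hinj, hsurj⟩
  refine ⟨Equiv.ofBijective p hbij, fun S hS => ?_⟩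
  obtain ⟨T, hT, hST⟩ := exists_map_cut φ hS
  rw [hST]
  congr 1
  ext y
  obtain ⟨i, rfl⟩ := hsurj y
  rw [mem_iff hS hT hST, Equiv.coe_ofBijective, hinj.mem_set_image]

theorem exists_perm_of_map_cut_singleton [Nontrivial ι]
    (h : ∀ i, ∃ j, φ (cut 1 {i}) = cut 1 {j}) :
    ∃ π : Equiv.Perm ι, ∀ A i j, φ A (π i) (π j) = A i j := by
  obtain ⟨π, hπ⟩ := exists_perm_map_cut h
  have hfix : ∀ A, (φ.trans (relabel π)) A = A :=
    map_eq_self fun S hS => by rw [OrderIso.trans_apply, hπ S hS, relabel_cut_image]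
  exact ⟨π, fun A i j => congrArg (fun B : quasiSemimetrics ι => B i j) (hfix A)⟩

variable (φ) in
theorem exists_perm_of_orderIso : ∃ π : Equiv.Perm ι,
    (∀ A i j, φ A (π i) (π j) = A i j) ∨ ∀ A i j, φ A (π i) (π j) = A j i := by
  rcases subsingleton_or_nontrivial ι with hι | hι
  · exact ⟨1, Or.inl fun A i j => by simp [Subsingleton.elim i j]⟩
  rcases map_cut_singletons φ with h | h
  · exact (exists_perm_of_map_cut_singleton h).imp fun π => Or.inl
  · have htr : ∀ i, ∃ j, (φ.trans transpose) (cut 1 {i}) = cut 1 {j} := fun i =>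
      (h i).imp fun j hj => by rw [OrderIso.trans_apply, hj, transpose_cut, compl_compl]
    obtain ⟨π, hπ⟩ := exists_perm_of_map_cut_singleton htr
    exact ⟨π, Or.inr fun A i j => hπ A j i⟩

end Automorphism

end quasiSemimetrics

theorem stmt3_general {ι : Type*} (φ : (ι → ι → ℤ) → (ι → ι → ℤ))
    (hbij : Set.BijOn φ (quasiSemimetrics ι) (quasiSemimetrics ι))
    (hhom : ∀ A ∈ quasiSemimetrics ι, ∀ B ∈ quasiSemimetrics ι, φ (A ⊔ B) = φ A ⊔ φ B) :
    ∃ π : Equiv.Perm ι,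
      (∀ A ∈ quasiSemimetrics ι, ∀ i j, φ A (π i) (π j) = A i j) ∨
      (∀ A ∈ quasiSemimetrics ι, ∀ i j, φ A (π i) (π j) = A j i) := by
  obtain ⟨π, h⟩ := quasiSemimetrics.exists_perm_of_orderIso
    (orderIsoOfMapSup (hbij.equiv φ) fun A B => Subtype.ext (hhom A A.2 B B.2))
  exact ⟨π, h.imp (fun h A hA => h ⟨A, hA⟩) fun h A hA => h ⟨A, hA⟩⟩

/-- The automorphism group of the monoid `(E_n, ⊕)` (entrywise maximum) is `Sₙ × ℤ₂`:
every `⊕`-automorphism of `E_n` is a coordinate permutation, possibly composed with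
transposition. -/
theorem stmt3 (n : ℕ) (hn : 3 ≤ n)
    (φ : (Fin n → Fin n → ℤ) → (Fin n → Fin n → ℤ))
    (hbij : Set.BijOn φ (EZ n) (EZ n))
    (hhom : ∀ A ∈ EZ n, ∀ B ∈ EZ n, φ (A ⊔ B) = φ A ⊔ φ B) :
    ∃ π : Equiv.Perm (Fin n),
      (∀ A ∈ EZ n, ∀ i j : Fin n, i ≠ j → φ A (π i) (π j) = A i j) ∨
      (∀ A ∈ EZ n, ∀ i j : Fin n, i ≠ j → φ A (π i) (π j) = A j i) := by
  rw [EZ_eq_quasiSemimetrics] at hbij hhom ⊢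
  obtain ⟨π, h⟩ := stmt3_general φ hbij hhom
  exact ⟨π, h.imp (fun h A hA i j _ => h A hA i j) fun h A hA i j _ => h A hA i j⟩
end

section
/- Let N be a finite type and let C be a subset of the functions N → ℕ such that 0 ∈ C, C is closed under pointwise addition, C is closed under pointwise maximum ⊕, and C is very full: for every i ∈ N, both 𝟙 + e_i and 𝟙 − e_i belong to C, where 𝟙 is the all-ones vector and e_i is the i-th standard basis vector. Let φ : C → C be a bijection with φ(u ⊕ v) = φ(u) ⊕ φ(v) for all u, v ∈ C. If there exists a positive integer r with φ(r·𝟙) = r·𝟙, then φ is permutational: there exists a permutation π of N such that φ(a)(π(i)) = a(i) for every a ∈ C and every i ∈ N. -/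
/-- The all-ones vector. -/
def oneVec (N : Type*) : N → ℕ := fun _ => 1

/-- The `i`-th standard basis vector (indicator of `i`). -/
def eVec {N : Type*} [DecidableEq N] (i : N) : N → ℕ := fun j => if j = i then 1 else 0

/-! A `⊕`-automorphism is an order automorphism of `C`, so it permutes the order ideals of `C`. When
`N` has two elements `i ≠ j`, `𝟙 = (𝟙 - e_i) ⊔ (𝟙 - e_j)` lies in `C`, and so does
`k • 𝟙 + m • (𝟙 - e_i)`, which has value `k` at `i` and at least `m` elsewhere. Hence the ideals
`{a | a i ≤ k}` form disjoint chains, one for each `i`, and they are exactly the proper ideals whose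
proper super-ideals form a chain. So they are permuted too. An automorphism of a disjoint union of
copies of `ℕ` only permutes the copies, which yields `π` with `a i ≤ k ↔ φ a (π i) ≤ k` for all `k`.
When `N` has at most one element, `C` is well-ordered, hence rigid. -/

section Order

variable {α β : Type*}

theorem le_iff_le_of_injOn_of_map_sup [SemilatticeSup α] [SemilatticeSup β] {f : α → β} {s : Set α}
    (hs : SupClosed s) (hinj : s.InjOn f) (hsup : ∀ a ∈ s, ∀ b ∈ s, f (a ⊔ b) = f a ⊔ f b)
    {a b : α} (ha : a ∈ s) (hb : b ∈ s) : f a ≤ f b ↔ a ≤ b := by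
  rw [← sup_eq_right, ← hsup a ha b hb, hinj.eq_iff (hs ha hb) hb, sup_eq_right]

theorem pi_le_total_of_subsingleton {ι : Type*} [Subsingleton ι] {α : ι → Type*}
    [∀ i, LinearOrder (α i)] (a b : ∀ i, α i) : a ≤ b ∨ b ≤ a := by
  refine or_iff_not_imp_left.2 fun hab j => ?_
  obtain ⟨i, hi⟩ := not_forall.1 hab
  obtain rfl := Subsingleton.elim i j
  exact (not_le.1 hi).le

theorem orderIso_apply_eq_of_total [PartialOrder α] [WellFoundedLT α]
    (htotal : ∀ a b : α, a ≤ b ∨ b ≤ a) (e : α ≃o α) (a : α) : e a = a := by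
  classical
  let : LinearOrder α :=
    { (inferInstance : PartialOrder α) with
      le_total := htotal
      toDecidableLE := Classical.decRel _ }
  exact DFunLike.congr_fun (Subsingleton.elim e (OrderIso.refl α)) a

end Order

section SigmaOrderIso

variable {ι κ α : Type*} [LinearOrder α]

theorem snd_le_snd_apply_of_sigma_orderIso [WellFoundedLT α] (Φ : (Σ _ : ι, α) ≃o (Σ _ : κ, α))
    (x : Σ _ : ι, α) : x.2 ≤ (Φ x).2 := by
  have snd_lt_snd {y z : Σ _ : κ, α} : y < z → y.2 < z.2 := by
    rintro ⟨_, _, _, h⟩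
    exact h
  have hmono : StrictMono fun k => (Φ ⟨x.1, k⟩).2 := fun _ _ hkl =>
    snd_lt_snd (Φ.strictMono (Sigma.mk_lt_mk_iff.2 hkl))
  exact hmono.le_apply

variable [WellFoundedLT α] [OrderBot α]

theorem sigma_orderIso_apply_mk (Φ : (Σ _ : ι, α) ≃o (Σ _ : κ, α)) (i : ι) (k : α) :
    Φ ⟨i, k⟩ = ⟨(Φ ⟨i, ⊥⟩).1, k⟩ := by
  have fst_eq : (Φ ⟨i, ⊥⟩).1 = (Φ ⟨i, k⟩).1 :=
    (Sigma.le_def.1 (Φ.monotone (Sigma.mk_le_mk_iff.2 bot_le))).1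
  have snd_eq : (Φ ⟨i, k⟩).2 = k :=
    le_antisymm (by simpa using snd_le_snd_apply_of_sigma_orderIso Φ.symm (Φ ⟨i, k⟩))
      (snd_le_snd_apply_of_sigma_orderIso Φ ⟨i, k⟩)
  exact Sigma.ext fst_eq.symm (heq_of_eq snd_eq)

theorem exists_equiv_of_sigma_orderIso (Φ : (Σ _ : ι, α) ≃o (Σ _ : κ, α)) :
    ∃ π : ι ≃ κ, ∀ i k, Φ ⟨i, k⟩ = ⟨π i, k⟩ :=
  ⟨{ toFun := fun i => (Φ ⟨i, ⊥⟩).1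
     invFun := fun j => (Φ.symm ⟨j, ⊥⟩).1
     left_inv := fun i => by simp [← sigma_orderIso_apply_mk Φ]
     right_inv := fun j => by simp [← sigma_orderIso_apply_mk Φ.symm] },
    sigma_orderIso_apply_mk Φ⟩

end SigmaOrderIso

section ProperIdealsAbove

variable {α β : Type*} [Preorder α] [Preorder β]

/-- The proper order ideals containing `J`, as sets. Whether they form a chain is invariant under
order isomorphisms; this property singles out the ideals given by a bound on one coordinate. -/
def properIdealsAbove (J : Set α) : Set (Set α) :=
  {K | Order.IsIdeal K ∧ K ≠ Set.univ ∧ J ⊆ K}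

theorem isIdeal_preimage_orderIso (e : α ≃o β) {J : Set β} (hJ : Order.IsIdeal J) :
    Order.IsIdeal (e ⁻¹' J) where
  IsLowerSet := hJ.IsLowerSet.preimage e.monotone
  Nonempty := hJ.Nonempty.preimage e.surjective
  Directed a ha b hb := by
    obtain ⟨c, hc, hac, hbc⟩ := hJ.Directed (e a) ha (e b) hb
    exact ⟨e.symm c, by simpa using hc, e.le_symm_apply.2 hac, e.le_symm_apply.2 hbc⟩

theorem preimage_orderIso_mem_properIdealsAbove (e : α ≃o β) {J K : Set β}
    (hK : K ∈ properIdealsAbove J) : e ⁻¹' K ∈ properIdealsAbove (e ⁻¹' J) :=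
  ⟨isIdeal_preimage_orderIso e hK.1,
    fun h => hK.2.1 (e.surjective.preimage_injective (h.trans Set.preimage_univ.symm)),
    Set.preimage_mono hK.2.2⟩

theorem isChain_properIdealsAbove_preimage_orderIso (e : α ≃o β) {J : Set β}
    (hJ : IsChain (· ⊆ ·) (properIdealsAbove J)) :
    IsChain (· ⊆ ·) (properIdealsAbove (e ⁻¹' J)) := by
  have preimage_mem {K : Set α} (hK : K ∈ properIdealsAbove (e ⁻¹' J)) :
      e.symm ⁻¹' K ∈ properIdealsAbove J := by
    simpa only [e.symm_preimage_preimage] using preimage_orderIso_mem_properIdealsAbove e.symm hK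
  intro K hK L hL _
  simpa only [e.symm.surjective.preimage_subset_preimage_iff] using
    hJ.total (preimage_mem hK) (preimage_mem hL)

end ProperIdealsAbove

theorem mem_of_isIdeal_of_forall_exists_le {ι : Type*} [Finite ι] {α : ι → Type*}
    [∀ i, Preorder (α i)] {C : Set (∀ i, α i)} {J : Set C} (hJ : Order.IsIdeal J) {c : C}
    (h : ∀ i, ∃ a ∈ J, c.1 i ≤ a.1 i) : c ∈ J := by
  choose a ha hca using h
  have := hJ.Nonempty.to_subtype
  obtain ⟨b, hb⟩ := (directedOn_iff_directed.1 hJ.Directed).finite_le fun i => ⟨a i, ha i⟩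
  exact hJ.IsLowerSet (show c ≤ b.1 from fun i => (hca i).trans (hb i i)) b.2

section CoordIdeal

variable {ι κ : Type*} {C : Set (ι → ℕ)} {D : Set (κ → ℕ)}

/-- The order ideal of those elements of `C` whose `i`-th coordinate is at most `k`. The pair
`(i, k)` is encoded in `Σ _ : ι, ℕ`, whose order is that of a disjoint union of copies of `ℕ`. -/
def coordIdeal (C : Set (ι → ℕ)) (x : Σ _ : ι, ℕ) : Set C := {a | a.1 x.1 ≤ x.2}

/-- A set of vectors isolates coordinates if a single coordinate can be prescribed while all the
others are arbitrarily large. It makes the ideals `coordIdeal C ⟨i, k⟩` for distinct `i`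
incomparable. -/
def IsolatesCoordinates (C : Set (ι → ℕ)) : Prop :=
  ∀ i k m, ∃ a ∈ C, a i = k ∧ ∀ j ≠ i, m ≤ a j

theorem isIdeal_coordIdeal (hsup : SupClosed C) (hC : IsolatesCoordinates C) (x : Σ _ : ι, ℕ) :
    Order.IsIdeal (coordIdeal C x) where
  IsLowerSet _ _ hab ha := (hab x.1).trans ha
  Nonempty := by
    obtain ⟨a, haC, ha, -⟩ := hC x.1 x.2 0
    exact ⟨⟨a, haC⟩, ha.le⟩
  Directed a ha b hb :=
    ⟨⟨a.1 ⊔ b.1, hsup a.2 b.2⟩, sup_le (α := ℕ) ha hb, le_sup_left (a := a.1),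
      le_sup_right (a := a.1)⟩

theorem coordIdeal_ne_univ (hC : IsolatesCoordinates C) (x : Σ _ : ι, ℕ) :
    coordIdeal C x ≠ Set.univ := by
  obtain ⟨a, haC, ha, -⟩ := hC x.1 (x.2 + 1) 0
  refine (Set.ne_univ_iff_exists_notMem _).2 ⟨⟨a, haC⟩, fun hle : a x.1 ≤ x.2 => ?_⟩
  omega

theorem coordIdeal_subset_coordIdeal (hC : IsolatesCoordinates C) {x y : Σ _ : ι, ℕ} :
    coordIdeal C x ⊆ coordIdeal C y ↔ x ≤ y := by
  constructor
  · obtain ⟨i, k⟩ := x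
    obtain ⟨j, l⟩ := y
    intro hsub
    obtain ⟨a, haC, hai, haj⟩ := hC i k (l + 1)
    have hle : a j ≤ l := hsub (show (⟨a, haC⟩ : C) ∈ coordIdeal C ⟨i, k⟩ from hai.le)
    obtain rfl : j = i := by
      by_contra hne
      have := haj j hne
      omega
    exact Sigma.mk_le_mk_iff.2 (hai ▸ hle)
  · rintro ⟨i, k, l, hkl⟩ a ha
    exact le_trans ha hkl

theorem coordIdeal_injective (hC : IsolatesCoordinates C) : Function.Injective (coordIdeal C) :=
  fun _ _ h => le_antisymm ((coordIdeal_subset_coordIdeal hC).1 h.subset)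
    ((coordIdeal_subset_coordIdeal hC).1 h.superset)

theorem exists_subset_coordIdeal [Finite ι] {J : Set C} (hJ : Order.IsIdeal J)
    (hne : J ≠ Set.univ) : ∃ x, J ⊆ coordIdeal C x := by
  contrapose! hne
  refine Set.eq_univ_of_forall fun c => mem_of_isIdeal_of_forall_exists_le hJ fun i => ?_
  obtain ⟨a, haJ, ha⟩ := Set.not_subset.1 (hne ⟨i, c.1 i⟩)
  exact ⟨a, haJ, (not_le.1 ha).le⟩

theorem exists_eq_coordIdeal_of_unbounded [Finite ι] {J : Set C} (hJ : Order.IsIdeal J)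
    (hne : J ≠ Set.univ) {i : ι} (h : ∀ j ≠ i, ∀ l, ¬J ⊆ coordIdeal C ⟨j, l⟩) :
    ∃ k, J = coordIdeal C ⟨i, k⟩ := by
  have mem_of_le {a c : C} (ha : a ∈ J) (hca : c.1 i ≤ a.1 i) : c ∈ J := by
    refine mem_of_isIdeal_of_forall_exists_le hJ fun j => ?_
    rcases eq_or_ne j i with rfl | hji
    · exact ⟨a, ha, hca⟩
    · obtain ⟨b, hbJ, hb⟩ := Set.not_subset.1 (h j hji (c.1 j))
      exact ⟨b, hbJ, (not_le.1 hb).le⟩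
  obtain ⟨c, hc⟩ := (Set.ne_univ_iff_exists_notMem J).1 hne
  have hbdd : BddAbove ((fun a : C => a.1 i) '' J) :=
    ⟨c.1 i, Set.forall_mem_image.2 fun a ha => (not_le.1 fun hca => hc (mem_of_le ha hca)).le⟩
  obtain ⟨b, hbJ, hb⟩ := Nat.sSup_mem (hJ.Nonempty.image _) hbdd
  refine ⟨b.1 i, Set.Subset.antisymm (fun a ha => ?_) fun a ha => mem_of_le hbJ ha⟩
  exact (le_csSup hbdd (Set.mem_image_of_mem _ ha)).trans hb.ge

theorem coordIdeal_mem_properIdealsAbove (hsup : SupClosed C) (hC : IsolatesCoordinates C)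
    {J : Set C} {x : Σ _ : ι, ℕ} (hJ : J ⊆ coordIdeal C x) : coordIdeal C x ∈ properIdealsAbove J :=
  ⟨isIdeal_coordIdeal hsup hC x, coordIdeal_ne_univ hC x, hJ⟩

theorem isChain_properIdealsAbove_coordIdeal [Finite ι] (hC : IsolatesCoordinates C)
    (x : Σ _ : ι, ℕ) : IsChain (· ⊆ ·) (properIdealsAbove (coordIdeal C x)) := by
  have eq_coordIdeal {K : Set C} (hK : K ∈ properIdealsAbove (coordIdeal C x)) :
      ∃ k, K = coordIdeal C ⟨x.1, k⟩ :=
    exists_eq_coordIdeal_of_unbounded hK.1 hK.2.1 fun _ hj _ hKl =>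
      hj (Sigma.le_def.1 ((coordIdeal_subset_coordIdeal hC).1 (hK.2.2.trans hKl))).1.symm
  intro K hK L hL _
  obtain ⟨k, rfl⟩ := eq_coordIdeal hK
  obtain ⟨l, rfl⟩ := eq_coordIdeal hL
  simpa only [coordIdeal_subset_coordIdeal hC, Sigma.mk_le_mk_iff] using le_total k l

theorem exists_eq_coordIdeal_of_isChain [Finite ι] (hsup : SupClosed C)
    (hC : IsolatesCoordinates C) {J : Set C} (hJ : Order.IsIdeal J) (hne : J ≠ Set.univ)
    (hchain : IsChain (· ⊆ ·) (properIdealsAbove J)) : ∃ x, J = coordIdeal C x := by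
  obtain ⟨x, hJx⟩ := exists_subset_coordIdeal hJ hne
  have unbounded (j) (hj : j ≠ x.1) (l) : ¬J ⊆ coordIdeal C ⟨j, l⟩ := by
    intro hJl
    rcases hchain.total (coordIdeal_mem_properIdealsAbove hsup hC hJl)
      (coordIdeal_mem_properIdealsAbove hsup hC hJx) with hle | hle
    · exact hj (Sigma.le_def.1 ((coordIdeal_subset_coordIdeal hC).1 hle)).1
    · exact hj (Sigma.le_def.1 ((coordIdeal_subset_coordIdeal hC).1 hle)).1.symm
  obtain ⟨k, hk⟩ := exists_eq_coordIdeal_of_unbounded hJ hne unbounded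
  exact ⟨_, hk⟩

section OrderIso

variable [Finite ι] [Finite κ]

theorem exists_preimage_coordIdeal_eq (hCsup : SupClosed C) (hC : IsolatesCoordinates C)
    (hDsup : SupClosed D) (hD : IsolatesCoordinates D) (φ : C ≃o D) (y : Σ _ : κ, ℕ) :
    ∃ x, φ ⁻¹' coordIdeal D y = coordIdeal C x := by
  obtain ⟨hideal, hne, -⟩ := preimage_orderIso_mem_properIdealsAbove φ
    (coordIdeal_mem_properIdealsAbove hDsup hD (subset_refl (coordIdeal D y)))
  exact exists_eq_coordIdeal_of_isChain hCsup hC hideal hne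
    (isChain_properIdealsAbove_preimage_orderIso φ (isChain_properIdealsAbove_coordIdeal hD y))

theorem exists_sigma_orderIso_preimage_coordIdeal (hCsup : SupClosed C)
    (hC : IsolatesCoordinates C) (hDsup : SupClosed D) (hD : IsolatesCoordinates D) (φ : C ≃o D) :
    ∃ Φ : (Σ _ : ι, ℕ) ≃o (Σ _ : κ, ℕ), ∀ x, φ ⁻¹' coordIdeal D (Φ x) = coordIdeal C x := by
  choose Ψ hΨ using exists_preimage_coordIdeal_eq hCsup hC hDsup hD φ
  choose Φ hΦ using exists_preimage_coordIdeal_eq hDsup hD hCsup hC φ.symm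
  have hΦ' (x) : φ ⁻¹' coordIdeal D (Φ x) = coordIdeal C x := by
    rw [← hΦ, φ.preimage_symm_preimage]
  refine ⟨⟨⟨Φ, Ψ, fun x => ?_, fun y => ?_⟩, fun {x y} => ?_⟩, hΦ'⟩
  · exact coordIdeal_injective hC ((hΨ _).symm.trans (hΦ' x))
  · refine coordIdeal_injective hD ((hΦ _).symm.trans ?_)
    rw [← hΨ, φ.symm_preimage_preimage]
  · rw [← coordIdeal_subset_coordIdeal hC, ← hΦ', ← hΦ',
      φ.surjective.preimage_subset_preimage_iff]
    exact (coordIdeal_subset_coordIdeal hD).symm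

theorem exists_equiv_orderIso_apply_eq (hCsup : SupClosed C) (hC : IsolatesCoordinates C)
    (hDsup : SupClosed D) (hD : IsolatesCoordinates D) (φ : C ≃o D) :
    ∃ π : ι ≃ κ, ∀ (a : C) (i : ι), (φ a).1 (π i) = a.1 i := by
  obtain ⟨Φ, hΦ⟩ := exists_sigma_orderIso_preimage_coordIdeal hCsup hC hDsup hD φ
  obtain ⟨π, hπ⟩ := exists_equiv_of_sigma_orderIso Φ
  refine ⟨π, fun a i => eq_of_forall_ge_iff fun k => ?_⟩
  have mem_iff : φ a ∈ coordIdeal D (Φ ⟨i, k⟩) ↔ a ∈ coordIdeal C ⟨i, k⟩ :=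
    Set.ext_iff.1 (hΦ ⟨i, k⟩) a
  rwa [hπ] at mem_iff

end OrderIso

end CoordIdeal

theorem oneVec_sub_eVec_sup_oneVec_sub_eVec {N : Type*} [DecidableEq N] {i j : N} (hij : i ≠ j) :
    (oneVec N - eVec i) ⊔ (oneVec N - eVec j) = oneVec N := by
  funext t
  rcases eq_or_ne t i with rfl | hti
  · simp [oneVec, eVec, hij]
  · simp [oneVec, eVec, hti]

theorem isolatesCoordinates_of_oneVec_sub_eVec_mem {N : Type*} [Nontrivial N] [DecidableEq N]
    (M : AddSubmonoid (N → ℕ)) (hsup : SupClosed (M : Set (N → ℕ)))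
    (hsub : ∀ i, oneVec N - eVec i ∈ M) : IsolatesCoordinates (M : Set (N → ℕ)) := by
  have hone : oneVec N ∈ M := by
    obtain ⟨i, j, hij⟩ := exists_pair_ne N
    rw [← oneVec_sub_eVec_sup_oneVec_sub_eVec hij]
    exact hsup (hsub i) (hsub j)
  intro i k m
  refine ⟨k • oneVec N + m • (oneVec N - eVec i),
    add_mem (nsmul_mem hone k) (nsmul_mem (hsub i) m), ?_, fun j hj => ?_⟩
  · simp [oneVec, eVec]
  · simp [oneVec, eVec, hj]

theorem stmt4_general {N : Type*} [Finite N] [DecidableEq N] (C : Set (N → ℕ))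
    (h0 : (0 : N → ℕ) ∈ C)
    (hadd : ∀ u ∈ C, ∀ v ∈ C, u + v ∈ C)
    (hmax : ∀ u ∈ C, ∀ v ∈ C, u ⊔ v ∈ C)
    (hsub : ∀ i : N, oneVec N - eVec i ∈ C)
    (φ : (N → ℕ) → (N → ℕ)) (hbij : Set.BijOn φ C C)
    (hhom : ∀ u ∈ C, ∀ v ∈ C, φ (u ⊔ v) = φ u ⊔ φ v) :
    ∃ π : Equiv.Perm N, ∀ a ∈ C, ∀ i : N, φ a (π i) = a i := by
  have hsup : SupClosed C := fun u hu v hv => hmax u hu v hv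
  let e : C ≃o C :=
    { hbij.equiv φ with
      map_rel_iff' := fun {a b} => le_iff_le_of_injOn_of_map_sup hsup hbij.injOn hhom a.2 b.2 }
  rcases subsingleton_or_nontrivial N with hN | hN
  · have e_apply_eq : ∀ a, e a = a :=
      orderIso_apply_eq_of_total (fun a b => pi_le_total_of_subsingleton a.1 b.1) e
    exact ⟨Equiv.refl N, fun a ha i => congrFun (congrArg Subtype.val (e_apply_eq ⟨a, ha⟩)) i⟩
  · let M : AddSubmonoid (N → ℕ) :=
      { carrier := C
        zero_mem' := h0
        add_mem' := fun {u v} hu hv => hadd u hu v hv }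
    have hC : IsolatesCoordinates C := isolatesCoordinates_of_oneVec_sub_eVec_mem M hsup hsub
    obtain ⟨π, hπ⟩ := exists_equiv_orderIso_apply_eq hsup hC hsup hC e
    exact ⟨π, fun a ha i => hπ ⟨a, ha⟩ i⟩

/-- A `⊕`-automorphism of a very full subset of `ℕ^N` closed under `+` and `⊕` which
fixes a nonzero multiple of the all-ones vector is permutational. -/
theorem stmt4 {N : Type*} [Fintype N] [DecidableEq N] (C : Set (N → ℕ))
    (h0 : (0 : N → ℕ) ∈ C)
    (hadd : ∀ u ∈ C, ∀ v ∈ C, u + v ∈ C)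
    (hmax : ∀ u ∈ C, ∀ v ∈ C, u ⊔ v ∈ C)
    (hvf : ∀ i : N, oneVec N + eVec i ∈ C ∧ oneVec N - eVec i ∈ C)
    (φ : (N → ℕ) → (N → ℕ)) (hbij : Set.BijOn φ C C)
    (hhom : ∀ u ∈ C, ∀ v ∈ C, φ (u ⊔ v) = φ u ⊔ φ v)
    (r : ℕ) (hr : 0 < r) (hrC : r • oneVec N ∈ C)
    (hfix : φ (r • oneVec N) = r • oneVec N) :
    ∃ π : Equiv.Perm N, ∀ a ∈ C, ∀ i : N, φ a (π i) = a i := by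
  exact stmt4_general C h0 hadd hmax (fun i => (hvf i).2) φ hbij hhom
end

section
/- Let N be a finite type and let C be a subset of the functions N → ℕ such that 0 ∈ C, C is closed under pointwise addition, C is closed under pointwise maximum ⊕, and C is very full: for every i ∈ N, both 𝟙 + e_i and 𝟙 − e_i belong to C. Suppose moreover there is a subgroup G of the group of permutations of N acting transitively on N such that for every π ∈ G and every a ∈ C, the function a ∘ π belongs to C. Then every bijection φ : C → C with φ(u ⊕ v) = φ(u) ⊕ φ(v) for all u, v ∈ C is permutational: there exists a permutation σ of N with φ(a)(σ(i)) = a(i) for every a ∈ C and every i ∈ N. -/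
/-!
For a coordinate `i` and `t : ℕ`, let `x` be the constant vector `t + 1`, and let `y` have value `t`
at `i` and values larger than `t` elsewhere. Then `x ≤ c ⊔ y ↔ t < c i`, so a `⊕`-automorphism `φ`
turns the threshold condition `t < c i` into `φ x ≤ φ c ⊔ φ y`. Choose `j` with `φ y j < φ x j`.
Testing the threshold `φ y j` at `j` in the same way and pulling back along `φ` shows that
`t < c i ↔ φ y j < φ c j`: thresholds at a single coordinate go to thresholds at a single
coordinate. Since thresholds at distinct coordinates are not comparable, `j` does not depend on `t`;
put `σ i = j`. The thresholds at `i` go to those at `σ i` strictly monotonically, which forces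
`c i ≤ φ c (σ i)`, and the same bound for `φ⁻¹` gives equality.

If there is only one coordinate, the constants need not belong to `C`, but `C` is then a
well-order and has no automorphism other than the identity.
-/

theorem apply_le_apply_sup_apply_iff {α β : Type*} [SemilatticeSup α] [SemilatticeSup β]
    {C : Set α} {D : Set β} (hC : SupClosed C) (hD : SupClosed D) (φ : C ≃o D) (x y z : C) :
    (φ x : β) ≤ (φ y : β) ⊔ φ z ↔ (x : α) ≤ (y : α) ⊔ z := by
  let := Subtype.semilatticeSup (P := (· ∈ C)) fun _ _ ha hb => hC ha hb
  let := Subtype.semilatticeSup (P := (· ∈ D)) fun _ _ ha hb => hD ha hb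
  have h : φ x ≤ φ y ⊔ φ z ↔ x ≤ y ⊔ z := by rw [← map_sup, φ.le_iff_le]
  exact h

theorem apply_le_apply_iff_of_map_sup {α β : Type*} [SemilatticeSup α] [SemilatticeSup β]
    {C : Set α} {φ : α → β} (hC : SupClosed C) (hinj : Set.InjOn φ C)
    (hsup : ∀ u ∈ C, ∀ v ∈ C, φ (u ⊔ v) = φ u ⊔ φ v) {a b : α} (ha : a ∈ C) (hb : b ∈ C) :
    φ a ≤ φ b ↔ a ≤ b := by
  rw [← sup_eq_right, ← hsup a ha b hb, hinj.eq_iff (hC ha hb) hb, sup_eq_right]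

theorem subsingleton_orderIso_of_orderEmbedding {α β γ : Type*} [Preorder α] [LinearOrder β]
    [WellFoundedLT β] [Preorder γ] (e : α ↪o β) : Subsingleton (α ≃o γ) where
  allEq φ ψ := by
    have h : e.orderIso.symm.trans φ = e.orderIso.symm.trans ψ := Subsingleton.elim _ _
    ext a
    obtain ⟨b, rfl⟩ := e.orderIso.symm.surjective a
    exact DFunLike.congr_fun h b

theorem orderIso_apply_eq_self_of_subsingleton {N : Type*} [Subsingleton N] {C : Set (N → ℕ)}
    (φ : C ≃o C) (a : C) : φ a = a := by
  cases isEmpty_or_nonempty N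
  · exact Subsingleton.elim _ _
  · obtain ⟨_⟩ := nonempty_unique N
    have := subsingleton_orderIso_of_orderEmbedding (γ := C)
      ((OrderEmbedding.subtype (· ∈ C)).trans (OrderIso.funUnique N ℕ).toOrderEmbedding)
    exact DFunLike.congr_fun (Subsingleton.elim φ (OrderIso.refl C)) a

theorem le_sup_iff_lt_apply_of_covBy {ι α : Type*} [LinearOrder α] {i : ι} {x y : ι → α}
    (hi : y i ⋖ x i) (hne : ∀ k ≠ i, x k ≤ y k) (c : ι → α) : x ≤ c ⊔ y ↔ y i < c i := by
  refine ⟨fun h => ?_, fun h k => ?_⟩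
  · exact hi.lt.trans_le ((le_sup_iff.1 (h i)).resolve_right hi.lt.not_ge)
  · obtain rfl | hk := eq_or_ne k i
    · exact le_sup_of_le_left (hi.ge_of_gt h)
    · exact le_sup_of_le_right (hne k hk)

/-- The `⊕`-closed sets of vectors that contain the constants and, for every coordinate `i`,
vectors vanishing at `i` that are arbitrarily large at all other coordinates. It isolates what
very fullness, together with closure under addition, contributes to the argument. -/
structure SeparatesCoordinates {N : Type*} (C : Set (N → ℕ)) : Prop where
  supClosed : SupClosed C
  const_mem (t : ℕ) : Function.const N t ∈ C
  exists_apply_eq_zero (i : N) (t : ℕ) : ∃ a ∈ C, a i = 0 ∧ ∀ j ≠ i, t ≤ a j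

namespace SeparatesCoordinates

section

variable {N : Type*} {C : Set (N → ℕ)}

theorem eq_of_forall_lt_imp_lt (hC : SeparatesCoordinates C) {i j : N} {s t : ℕ}
    (h : ∀ a ∈ C, s < a i → t < a j) : i = j := by
  by_contra hij
  obtain ⟨a, ha, haj, hai⟩ := hC.exists_apply_eq_zero j (s + 1)
  exact Nat.not_lt_zero t (haj ▸ h a ha (hai i hij))

theorem eq_of_forall_apply_le (hC : SeparatesCoordinates C) {i j : N}
    (h : ∀ a ∈ C, a i ≤ a j) : i = j :=
  hC.eq_of_forall_lt_imp_lt (s := 0) (t := 0) fun a ha hi => hi.trans_le (h a ha)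

theorem exists_apply_covBy_apply (hC : SeparatesCoordinates C) (i : N) (t : ℕ) :
    ∃ x y : C, y.1 i = t ∧ y.1 i ⋖ x.1 i ∧ ∀ k ≠ i, x.1 k ≤ y.1 k := by
  obtain ⟨a, ha, hai, hane⟩ := hC.exists_apply_eq_zero i (t + 1)
  exact ⟨⟨_, hC.const_mem (t + 1)⟩, ⟨_, hC.supClosed (hC.const_mem t) ha⟩, by simp [hai],
    by simp [hai, Order.covBy_add_one], fun k hk => le_sup_of_le_right (hane k hk)⟩

end

variable {M N : Type*} {C : Set (M → ℕ)} {D : Set (N → ℕ)}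

theorem exists_forall_lt_apply_iff (hC : SeparatesCoordinates C) (hD : SeparatesCoordinates D)
    (φ : C ≃o D) (i : M) (t : ℕ) : ∃ j s, ∀ c : C, t < c.1 i ↔ s < (φ c).1 j := by
  have le_sup_iff_φ := apply_le_apply_sup_apply_iff hC.supClosed hD.supClosed φ
  obtain ⟨x, y, rfl, hyxi, hxy⟩ := hC.exists_apply_covBy_apply i t
  obtain ⟨j, hj⟩ : ∃ j, (φ y).1 j < (φ x).1 j := by
    by_contra! h
    have hle : x ≤ y := φ.le_iff_le.1 h
    exact hyxi.lt.not_ge (hle i)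
  obtain ⟨p, q, hqj, hqp, hpq⟩ := hD.exists_apply_covBy_apply j ((φ y).1 j)
  obtain ⟨u, rfl⟩ := φ.surjective p
  obtain ⟨v, rfl⟩ := φ.surjective q
  have hyx : ∀ c : C, x.1 ≤ c.1 ⊔ y.1 ↔ y.1 i < c.1 i := fun c =>
    le_sup_iff_lt_apply_of_covBy hyxi hxy c
  have huv : ∀ c : C, u.1 ≤ c.1 ⊔ v.1 ↔ (φ y).1 j < (φ c).1 j := fun c => by
    rw [← le_sup_iff_φ, le_sup_iff_lt_apply_of_covBy hqp hpq, hqj]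
  -- By `huv` and `hj`, `u ≤ x ⊔ v` but not `u ≤ y ⊔ v`; as `x` exceeds `y` only at `i`, the
  -- second inequality must fail at `i`.
  have hui : y.1 i < u.1 i ∧ v.1 i < u.1 i := by
    obtain ⟨k, hk⟩ : ∃ k, y.1 k ⊔ v.1 k < u.1 k := by
      by_contra! h
      exact lt_irrefl _ ((huv y).1 h)
    obtain ⟨hyk, hvk⟩ := sup_lt_iff.1 hk
    have hux : u.1 k ≤ x.1 k := (le_sup_iff.1 ((huv x).2 hj k)).resolve_right hvk.not_ge
    obtain rfl : k = i := by
      by_contra hki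
      exact (hyk.trans_le hux).not_ge (hxy k hki)
    exact ⟨hyk, hvk⟩
  refine ⟨j, (φ y).1 j, fun c => ⟨fun hc => ?_, fun hc => ?_⟩⟩
  · have hφ : (φ x).1 j ≤ (φ c).1 j ⊔ (φ y).1 j := (le_sup_iff_φ x c y).2 ((hyx c).2 hc) j
    exact hj.trans_le ((le_sup_iff.1 hφ).resolve_right hj.not_ge)
  · exact hui.1.trans_le ((le_sup_iff.1 ((huv c).2 hc i)).resolve_right hui.2.not_ge)

theorem exists_strictMono_forall_lt_apply_iff (hC : SeparatesCoordinates C)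
    (hD : SeparatesCoordinates D) (φ : C ≃o D) (i : M) :
    ∃ j, ∃ s : ℕ → ℕ, StrictMono s ∧ ∀ t, ∀ c : C, t < c.1 i ↔ s t < (φ c).1 j := by
  choose j s hs using hC.exists_forall_lt_apply_iff hD φ i
  have hj : ∀ t, j t = j 0 := fun t => hD.eq_of_forall_lt_imp_lt fun d hd hlt => by
    obtain ⟨c, hc⟩ := φ.surjective ⟨d, hd⟩
    have hφ := (hs 0 c).1 (t.zero_le.trans_lt ((hs t c).2 (by rwa [hc])))
    rwa [hc] at hφ
  simp only [hj] at hs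
  refine ⟨j 0, s, strictMono_nat_of_lt_succ fun t => ?_, hs⟩
  let c : C := ⟨_, hC.const_mem (t + 1)⟩
  calc s t < (φ c).1 (j 0) := (hs t c).1 t.lt_succ_self
    _ ≤ s (t + 1) := not_lt.1 ((hs (t + 1) c).not.1 (lt_irrefl _))

theorem exists_forall_apply_le (hC : SeparatesCoordinates C) (hD : SeparatesCoordinates D)
    (φ : C ≃o D) (i : M) : ∃ j, ∀ c : C, c.1 i ≤ (φ c).1 j := by
  obtain ⟨j, s, hmono, hs⟩ := hC.exists_strictMono_forall_lt_apply_iff hD φ i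
  exact ⟨j, fun c => not_lt.1 fun h => ((hs _ c).1 h).not_ge hmono.le_apply⟩

theorem exists_equiv_forall_apply_eq (hC : SeparatesCoordinates C) (hD : SeparatesCoordinates D)
    (φ : C ≃o D) : ∃ σ : M ≃ N, ∀ c : C, ∀ i, (φ c).1 (σ i) = c.1 i := by
  choose σ hσ using hC.exists_forall_apply_le hD φ
  choose τ hτ using hD.exists_forall_apply_le hC φ.symm
  have hτφ : ∀ (c : C) (j : N), (φ c).1 j ≤ c.1 (τ j) := fun c j => by
    simpa only [φ.symm_apply_apply] using hτ j (φ c)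
  have hσφ : ∀ (d : D) (i : M), (φ.symm d).1 i ≤ d.1 (σ i) := fun d i => by
    simpa only [φ.apply_symm_apply] using hσ i (φ.symm d)
  have hτσ : ∀ i, τ (σ i) = i := fun i =>
    (hC.eq_of_forall_apply_le fun a ha => (hσ i ⟨a, ha⟩).trans (hτφ _ (σ i))).symm
  have hστ : ∀ j, σ (τ j) = j := fun j =>
    (hD.eq_of_forall_apply_le fun b hb => (hτ j ⟨b, hb⟩).trans (hσφ _ (τ j))).symm
  refine ⟨⟨σ, τ, hτσ, hστ⟩, fun c i => le_antisymm ?_ (hσ i c)⟩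
  exact (hτφ c (σ i)).trans_eq (by rw [hτσ])

theorem of_oneVec_sub_eVec_mem {N : Type*} [DecidableEq N] [Nontrivial N]
    {S : AddSubmonoid (N → ℕ)} (hS : SupClosed (S : Set (N → ℕ)))
    (hvf : ∀ i, oneVec N - eVec i ∈ S) : SeparatesCoordinates (S : Set (N → ℕ)) where
  supClosed := hS
  const_mem t := by
    obtain ⟨i, j, hij⟩ := exists_pair_ne N
    have hone : oneVec N = (oneVec N - eVec i) ⊔ (oneVec N - eVec j) := by
      ext k
      obtain rfl | hk := eq_or_ne k i <;> simp [oneVec, eVec, *]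
    have hmem : oneVec N ∈ S := hone ▸ hS (hvf i) (hvf j)
    have hconst : Function.const N t = t • oneVec N := by
      ext
      simp [oneVec]
    exact hconst ▸ S.nsmul_mem hmem t
  exists_apply_eq_zero i t :=
    ⟨t • (oneVec N - eVec i), S.nsmul_mem (hvf i) t, by simp [oneVec, eVec],
      fun j hj => by simp [oneVec, eVec, hj]⟩

end SeparatesCoordinates

theorem stmt5_general {N : Type*} [DecidableEq N] (C : Set (N → ℕ))
    (h0 : (0 : N → ℕ) ∈ C)
    (hadd : ∀ u ∈ C, ∀ v ∈ C, u + v ∈ C)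
    (hmax : ∀ u ∈ C, ∀ v ∈ C, u ⊔ v ∈ C)
    (hvf : ∀ i : N, oneVec N - eVec i ∈ C)
    (φ : (N → ℕ) → (N → ℕ)) (hbij : Set.BijOn φ C C)
    (hhom : ∀ u ∈ C, ∀ v ∈ C, φ (u ⊔ v) = φ u ⊔ φ v) :
    ∃ σ : Equiv.Perm N, ∀ a ∈ C, ∀ i : N, φ a (σ i) = a i := by
  have hC : SupClosed C := fun u hu v hv => hmax u hu v hv
  let Φ : C ≃o C :=
    { hbij.equiv φ with
      map_rel_iff' := fun {a b} => apply_le_apply_iff_of_map_sup hC hbij.injOn hhom a.2 b.2 }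
  cases subsingleton_or_nontrivial N
  · exact ⟨1, fun a ha i => congr_arg (fun b : C => b.1 i)
      (orderIso_apply_eq_self_of_subsingleton Φ ⟨a, ha⟩)⟩
  · let S : AddSubmonoid (N → ℕ) :=
      { carrier := C, zero_mem' := h0, add_mem' := fun {u v} hu hv => hadd u hu v hv }
    have hS : SeparatesCoordinates C := .of_oneVec_sub_eVec_mem (S := S) hC hvf
    obtain ⟨σ, hσ⟩ := hS.exists_equiv_forall_apply_eq hS Φ
    exact ⟨σ, fun a ha => hσ ⟨a, ha⟩⟩

/-- If a very full subset of `ℕ^N` closed under `+` and `⊕` is invariant under a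
transitive group of coordinate permutations, then every `⊕`-automorphism of it is
permutational. -/
theorem stmt5 {N : Type*} [Fintype N] [DecidableEq N] (C : Set (N → ℕ))
    (h0 : (0 : N → ℕ) ∈ C)
    (hadd : ∀ u ∈ C, ∀ v ∈ C, u + v ∈ C)
    (hmax : ∀ u ∈ C, ∀ v ∈ C, u ⊔ v ∈ C)
    (hvf : ∀ i : N, oneVec N + eVec i ∈ C ∧ oneVec N - eVec i ∈ C)
    (G : Subgroup (Equiv.Perm N))
    (htrans : ∀ i j : N, ∃ π ∈ G, π i = j)
    (hGinv : ∀ π ∈ G, ∀ a ∈ C, (a ∘ π) ∈ C)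
    (φ : (N → ℕ) → (N → ℕ)) (hbij : Set.BijOn φ C C)
    (hhom : ∀ u ∈ C, ∀ v ∈ C, φ (u ⊔ v) = φ u ⊔ φ v) :
    ∃ σ : Equiv.Perm N, ∀ a ∈ C, ∀ i : N, φ a (σ i) = a i := by
  exact stmt5_general C h0 hadd hmax (fun i => (hvf i).2) φ hbij hhom
end

section
/- Let N be a finite type and let C be a subset of the functions N → ℕ such that 0 ∈ C, C ≠ {0}, and C is closed under pointwise maximum ⊕. Suppose there is a subgroup G of the group of permutations of N acting transitively on N such that for every π ∈ G and every a ∈ C, the function a ∘ π belongs to C. Then every bijection φ : C → C with φ(u ⊕ v) = φ(u) ⊕ φ(v) for all u, v ∈ C fixes a nonzero multiple of the all-ones vector: there exists a positive integer k such that k·𝟙 ∈ C and φ(k·𝟙) = k·𝟙. -/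
/-!
In a well-quasi-order a strictly monotone self-map cannot move a point strictly downwards, so every
orbit of the group of order automorphisms is an antichain and hence finite. In a join-semilattice
the supremum of such an orbit is fixed by all automorphisms. For a `⊔`-closed `C ⊆ αᴺ` the
permutations in `G` act by automorphisms as well, so the fixed point obtained from an element of `C`
is `G`-invariant, and by transitivity of `G` it is a constant function.
-/

section OrderAutomorphisms

variable {P : Type*}

theorem not_apply_lt_of_strictMono [Preorder P] [WellFoundedLT P] {f : P → P} (hf : StrictMono f)
    (a : P) : ¬ f a < a := fun h =>
  not_strictAnti_of_wellFoundedLT _ (hf.strictAnti_iterate_of_map_lt h)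

theorem isAntichain_orbit_orderIso [PartialOrder P] [WellFoundedLT P] (a : P) :
    IsAntichain (· ≤ ·) (MulAction.orbit (P ≃o P) a) := by
  intro b hb c hc hne hle
  obtain ⟨e, rfl⟩ : b ∈ MulAction.orbit (P ≃o P) c := by rwa [MulAction.orbit_eq_iff.mpr hc]
  exact not_apply_lt_of_strictMono e.strictMono c (hle.lt_of_ne hne)

theorem finite_orbit_orderIso [PartialOrder P] [WellQuasiOrderedLE P] (a : P) :
    (MulAction.orbit (P ≃o P) a).Finite :=
  WellQuasiOrderedLE.finite_of_isAntichain (isAntichain_orbit_orderIso a)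

theorem exists_isLUB_of_finite [SemilatticeSup P] {s : Set P} (hs : s.Finite) (hne : s.Nonempty) :
    ∃ b, IsLUB s b := by
  lift s to Finset P using hs
  exact ⟨s.sup' hne id, Finset.isLUB_sup' hne⟩

theorem exists_ge_forall_orderIso_apply_eq [SemilatticeSup P] [WellQuasiOrderedLE P] (a : P) :
    ∃ b, a ≤ b ∧ ∀ e : P ≃o P, e b = b := by
  obtain ⟨b, hb⟩ := exists_isLUB_of_finite (finite_orbit_orderIso a) (MulAction.nonempty_orbit a)
  refine ⟨b, hb.1 (MulAction.mem_orbit_self a), fun e => ?_⟩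
  have he : IsLUB (e '' MulAction.orbit (P ≃o P) a) (e b) := e.isLUB_image'.mpr hb
  have horbit : e '' MulAction.orbit (P ≃o P) a = MulAction.orbit (P ≃o P) a :=
    MulAction.smul_orbit e a
  exact (horbit ▸ he).unique hb

end OrderAutomorphisms

section SupAutomorphisms

variable {P : Type*} [SemilatticeSup P] {φ : P → P} {C : Set P}

/-- `φ` restricts to a `⊔`-automorphism of `C`. The map is defined on the whole semilattice, but
only its values on `C` matter. -/
structure IsSupAutOn (φ : P → P) (C : Set P) : Prop where
  bijOn : Set.BijOn φ C C
  map_sup : ∀ u ∈ C, ∀ v ∈ C, φ (u ⊔ v) = φ u ⊔ φ v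

theorem IsSupAutOn.le_iff_le (hφ : IsSupAutOn φ C) (hC : SupClosed C) {u v : P} (hu : u ∈ C)
    (hv : v ∈ C) : φ u ≤ φ v ↔ u ≤ v := by
  rw [← sup_eq_right, ← hφ.map_sup u hu v hv, hφ.bijOn.injOn.eq_iff (hC hu hv) hv, sup_eq_right]

/-- The order automorphism of the subtype `C` induced by a `⊔`-automorphism of `C`. -/
noncomputable def IsSupAutOn.orderIso (hφ : IsSupAutOn φ C) (hC : SupClosed C) : C ≃o C where
  toEquiv := hφ.bijOn.equiv φ
  map_rel_iff' {u v} := hφ.le_iff_le hC u.2 v.2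

theorem exists_mem_ge_forall_isSupAutOn_apply_eq [WellQuasiOrderedLE P] (hC : SupClosed C)
    {a : P} (ha : a ∈ C) : ∃ b ∈ C, a ≤ b ∧ ∀ φ, IsSupAutOn φ C → φ b = b := by
  let _ : SemilatticeSup C := Subtype.semilatticeSup fun _ _ hu hv => hC hu hv
  have : WellQuasiOrderedLE C := ⟨fun f => wellQuasiOrdered_le fun n => (f n : P)⟩
  obtain ⟨b, hab, hb⟩ := exists_ge_forall_orderIso_apply_eq (⟨a, ha⟩ : C)
  exact ⟨b, b.2, hab, fun φ hφ => congrArg Subtype.val (hb (hφ.orderIso hC))⟩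

end SupAutomorphisms

section CoordinatePermutations

variable {N α : Type*} {G : Subgroup (Equiv.Perm N)}

theorem isSupAutOn_comp_perm [SemilatticeSup α] {C : Set (N → α)}
    (hGinv : ∀ π ∈ G, ∀ a ∈ C, a ∘ π ∈ C) {π : Equiv.Perm N} (hπ : π ∈ G) :
    IsSupAutOn (fun a : N → α => a ∘ π) C where
  bijOn := by
    have hinv : Set.InvOn (fun a : N → α => a ∘ ⇑π⁻¹) (fun a => a ∘ π) C C :=
      ⟨fun a _ => by ext; simp, fun a _ => by ext; simp⟩
    exact hinv.bijOn (hGinv π hπ) (hGinv π⁻¹ (G.inv_mem hπ))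
  map_sup _ _ _ _ := rfl

theorem eq_const_of_forall_comp_perm_eq (htrans : ∀ i j : N, ∃ π ∈ G, π i = j) {a : N → α}
    (ha : ∀ π ∈ G, a ∘ π = a) (i : N) : a = fun _ => a i := by
  ext j
  obtain ⟨π, hπ, rfl⟩ := htrans i j
  exact congrFun (ha π hπ) i

theorem exists_const_mem_ge_forall_isSupAutOn_apply_eq [Finite N] [Nonempty N] [SemilatticeSup α]
    [WellQuasiOrderedLE α] {C : Set (N → α)} (hC : SupClosed C)
    (htrans : ∀ i j : N, ∃ π ∈ G, π i = j) (hGinv : ∀ π ∈ G, ∀ a ∈ C, a ∘ π ∈ C)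
    {a : N → α} (ha : a ∈ C) :
    ∃ k : α, (fun _ : N => k) ∈ C ∧ (a ≤ fun _ => k) ∧
      ∀ φ, IsSupAutOn φ C → φ (fun _ => k) = fun _ => k := by
  obtain ⟨b, hbC, hab, hb⟩ := exists_mem_ge_forall_isSupAutOn_apply_eq hC ha
  have hconst := eq_const_of_forall_comp_perm_eq htrans
    (fun π hπ => hb _ (isSupAutOn_comp_perm hGinv hπ)) (Classical.arbitrary N)
  rw [hconst] at hbC hab hb
  exact ⟨_, hbC, hab, hb⟩

end CoordinatePermutations

theorem stmt6_general {N α : Type*} [Finite N] [SemilatticeSup α] [OrderBot α]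
    [WellQuasiOrderedLE α] {C : Set (N → α)} (hne : ¬ C ⊆ {⊥}) (hC : SupClosed C)
    {G : Subgroup (Equiv.Perm N)} (htrans : ∀ i j : N, ∃ π ∈ G, π i = j)
    (hGinv : ∀ π ∈ G, ∀ a ∈ C, a ∘ π ∈ C) :
    ∃ k : α, ⊥ < k ∧ (fun _ : N => k) ∈ C ∧
      ∀ φ, IsSupAutOn φ C → φ (fun _ => k) = fun _ => k := by
  obtain ⟨a, ha, ha_ne⟩ := Set.not_subset.mp hne
  obtain ⟨i, hi⟩ := Function.ne_iff.mp ha_ne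
  have : Nonempty N := ⟨i⟩
  obtain ⟨k, hkC, hak, hk⟩ :=
    exists_const_mem_ge_forall_isSupAutOn_apply_eq hC htrans hGinv ha
  exact ⟨k, (bot_lt_iff_ne_bot.mpr hi).trans_le (hak i), hkC, hk⟩

/-- If a `⊕`-submonoid `C ≠ {0}` of `ℕ^N` is invariant under a transitive group of
coordinate permutations, then every `⊕`-automorphism of `C` fixes a nonzero multiple
of the all-ones vector. -/
theorem stmt6 {N : Type*} [Fintype N] (C : Set (N → ℕ))
    (h0 : (0 : N → ℕ) ∈ C) (hne : C ≠ {0})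
    (hmax : ∀ u ∈ C, ∀ v ∈ C, u ⊔ v ∈ C)
    (G : Subgroup (Equiv.Perm N))
    (htrans : ∀ i j : N, ∃ π ∈ G, π i = j)
    (hGinv : ∀ π ∈ G, ∀ a ∈ C, (a ∘ π) ∈ C)
    (φ : (N → ℕ) → (N → ℕ)) (hbij : Set.BijOn φ C C)
    (hhom : ∀ u ∈ C, ∀ v ∈ C, φ (u ⊔ v) = φ u ⊔ φ v) :
    ∃ k : ℕ, 0 < k ∧ (fun _ : N => k) ∈ C ∧ φ (fun _ : N => k) = fun _ : N => k := by
  obtain ⟨k, hk, hkC, hfix⟩ := stmt6_general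
    (fun h => hne (h.antisymm (Set.singleton_subset_iff.mpr h0))) hmax htrans hGinv
  exact ⟨k, hk, hkC, hfix φ ⟨hbij, hhom⟩⟩
end

section
/- Let N be a finite type, let S be a finite set of nonzero vectors in ℝ^N, and let C = {x ∈ ℝ^N : ⟨a, x⟩ ≥ 0 for all a ∈ S}, where ⟨a, x⟩ = Σ_i a_i x_i. Assume C is full-dimensional in the sense that there exists x with ⟨a, x⟩ > 0 for all a ∈ S, and that every a ∈ S is facet-defining: for each a ∈ S there exists x ∈ C with ⟨a, x⟩ = 0 and ⟨b, x⟩ > 0 for all b ∈ S with b ≠ a. Then C is closed under componentwise maximum if and only if every a ∈ S has at most one index i with a_i < 0. -/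
/-!
A vector `v` with `⟨a, v⟩ = 0` points along the facet cut out by `a`, so from a relative interior
point `x` of that facet both `t • x` and `t • x + c • v` lie in the cone for suitable `t ≥ 0` and
`c > 0`. Their maximum is `t • x + c • v⁺`, so max-closedness forces `0 ≤ ⟨a, v⁺⟩` for every
`v` orthogonal to `a`. If `a j < 0` and `a k < 0` with `j ≠ k`, then `v = -a k • e_j + a j • e_k`
violates this, because `⟨a, v⁺⟩ = -(a j * a k)`.

Conversely, if `a` has at most one negative coordinate, then for all `x` and `y` one of `⟨a, x⟩`
and `⟨a, y⟩` is at most `⟨a, x ⊔ y⟩`, so the half-space `0 ≤ ⟨a, x⟩` is max-closed.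
-/

section OrderedSemiring

variable {R N : Type*} [LinearOrder R] [Fintype N] {a x y : N → R}

theorem dotProduct_le_dotProduct_sup_left [Semiring R] [IsOrderedRing R]
    (h : ∀ i, a i < 0 → y i ≤ x i) : a ⬝ᵥ x ≤ a ⬝ᵥ (x ⊔ y) := by
  refine Finset.sum_le_sum fun i _ => ?_
  rcases lt_or_ge (a i) 0 with hi | hi
  · rw [Pi.sup_apply, sup_eq_left.2 (h i hi)]
  · exact mul_le_mul_of_nonneg_left le_sup_left hi

theorem supClosed_setOf_dotProduct_nonneg [Semiring R] [IsOrderedRing R]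
    (ha : {i | a i < 0}.Subsingleton) : SupClosed {x | 0 ≤ a ⬝ᵥ x} := by
  intro x hx y hy
  by_cases h : ∀ i, a i < 0 → y i ≤ x i
  · exact hx.trans (dotProduct_le_dotProduct_sup_left h)
  · push Not at h
    obtain ⟨j, hj, hxy⟩ := h
    have hyx : ∀ i, a i < 0 → x i ≤ y i := fun i hi => ha hi hj ▸ hxy.le
    rw [sup_comm]
    exact hy.trans (dotProduct_le_dotProduct_sup_left hyx)

theorem supClosed_dual_dotProductBilin [CommSemiring R] [IsOrderedRing R] {S : Set (N → R)}
    (hS : ∀ a ∈ S, {i | a i < 0}.Subsingleton) :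
    SupClosed (PointedCone.dual (dotProductBilin R R) S : Set (N → R)) :=
  fun _ hx _ hy a ha => supClosed_setOf_dotProduct_nonneg (hS a ha) (hx ha) (hy ha)

end OrderedSemiring

section LinearOrderedRing

variable {R : Type*} [CommRing R] [LinearOrder R] [IsStrictOrderedRing R]

-- Scaling both terms replaces the usual choice of a small `ε` and so avoids division and limits.
theorem exists_nonneg_pos_forall_mul_add_mul_nonneg {ι : Type*} (s : Finset ι) {f g : ι → R}
    (hf : ∀ i ∈ s, 0 ≤ f i) (hg : ∀ i ∈ s, f i = 0 → 0 ≤ g i) :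
    ∃ t c : R, 0 ≤ t ∧ 0 < c ∧ ∀ i ∈ s, 0 ≤ t * f i + c * g i := by
  classical
  induction s using Finset.induction_on with
  | empty => exact ⟨0, 1, le_rfl, one_pos, by simp⟩
  | insert b s _ ih =>
    rw [Finset.forall_mem_insert] at hf hg
    obtain ⟨t, c, ht, hc, hs⟩ := ih hf.2 hg.2
    rcases le_or_gt 0 (g b) with hgb | hgb
    · refine ⟨t, c, ht, hc, (Finset.forall_mem_insert ..).2 ⟨?_, hs⟩⟩
      exact add_nonneg (mul_nonneg ht hf.1) (mul_nonneg hc.le hgb)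
    · have hfb : 0 < f b := hf.1.lt_of_ne fun h => hgb.not_ge (hg.1 h.symm)
      have hcg : 0 ≤ c * -g b := mul_nonneg hc.le (neg_nonneg.2 hgb.le)
      refine ⟨t * f b + c * -g b, c * f b, add_nonneg (mul_nonneg ht hfb.le) hcg,
        mul_pos hc hfb, (Finset.forall_mem_insert ..).2 ⟨?_, fun i hi => ?_⟩⟩
      · calc 0 ≤ t * (f b * f b) := mul_nonneg ht (mul_self_nonneg _)
          _ = (t * f b + c * -g b) * f b + c * f b * g b := by ring
      · calc 0 ≤ f b * (t * f i + c * g i) + c * -g b * f i :=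
              add_nonneg (mul_nonneg hfb.le (hs i hi)) (mul_nonneg hcg (hf.2 i hi))
          _ = (t * f b + c * -g b) * f i + c * f b * g i := by ring

variable {N : Type*} [Fintype N] {a x v : N → R}

theorem subsingleton_setOf_neg_of_dotProduct_posPart_nonneg
    (h : ∀ v : N → R, a ⬝ᵥ v = 0 → 0 ≤ a ⬝ᵥ v⁺) : {i | a i < 0}.Subsingleton := by
  classical
  intro j (hj : a j < 0) k (hk : a k < 0)
  by_contra hjk
  set v : N → R := Pi.single j (-a k) + Pi.single k (a j) with hv
  have hav : a ⬝ᵥ v = 0 := by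
    rw [hv, dotProduct_add, dotProduct_single, dotProduct_single]
    ring
  have hpos : v⁺ = Pi.single j (-a k) := by
    ext i
    rcases eq_or_ne i j with rfl | hij
    · simp [hv, hjk, hk.le]
    · rcases eq_or_ne i k with rfl | hik
      · simp [hv, hij, hj.le]
      · simp [hv, hij, hik]
  have hneg : a ⬝ᵥ v⁺ < 0 := by
    rw [hpos, dotProduct_single]
    exact mul_neg_of_neg_of_pos hj (neg_pos.2 hk)
  exact hneg.not_ge (h v hav)

variable {S : Finset (N → R)}

theorem exists_smul_add_smul_mem_dual
    (hx : x ∈ PointedCone.dual (dotProductBilin R R) (S : Set (N → R)))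
    (hv : ∀ b ∈ S, b ⬝ᵥ x = 0 → 0 ≤ b ⬝ᵥ v) :
    ∃ t c : R, 0 ≤ t ∧ 0 < c ∧
      t • x + c • v ∈ PointedCone.dual (dotProductBilin R R) (S : Set (N → R)) := by
  obtain ⟨t, c, ht, hc, h⟩ :=
    exists_nonneg_pos_forall_mul_add_mul_nonneg S (fun b hb => hx hb) hv
  refine ⟨t, c, ht, hc, fun b hb => ?_⟩
  simpa using h b hb

theorem dotProduct_posPart_nonneg_of_supClosed
    (hC : SupClosed (PointedCone.dual (dotProductBilin R R) (S : Set (N → R)) : Set (N → R)))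
    (ha : a ∈ S) (hx : x ∈ PointedCone.dual (dotProductBilin R R) (S : Set (N → R)))
    (hax : a ⬝ᵥ x = 0) (hv : ∀ b ∈ S, b ⬝ᵥ x = 0 → 0 ≤ b ⬝ᵥ v) : 0 ≤ a ⬝ᵥ v⁺ := by
  obtain ⟨t, c, ht, hc, hxv⟩ := exists_smul_add_smul_mem_dual hx hv
  have hsup : (t • x + c • v) ⊔ t • x = t • x + c • v⁺ := by
    ext i
    simp [← max_add_add_left, mul_max_of_nonneg _ _ hc.le, posPart_def]
  have htx : t • x ∈ PointedCone.dual (dotProductBilin R R) (S : Set (N → R)) :=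
    Submodule.smul_mem _ (⟨t, ht⟩ : {r : R // 0 ≤ r}) hx
  have hmem : 0 ≤ a ⬝ᵥ (t • x + c • v⁺) := hsup ▸ hC hxv htx ha
  rw [dotProduct_add, dotProduct_smul, dotProduct_smul, hax, smul_zero, zero_add] at hmem
  exact nonneg_of_mul_nonneg_right hmem hc

theorem stmt7_general (hfacet : ∀ a ∈ S, ∃ x, a ⬝ᵥ x = 0 ∧ ∀ b ∈ S, b ≠ a → 0 < b ⬝ᵥ x) :
    SupClosed (PointedCone.dual (dotProductBilin R R) (S : Set (N → R)) : Set (N → R)) ↔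
      ∀ a ∈ S, {i | a i < 0}.Subsingleton := by
  refine ⟨fun hC a ha => ?_, supClosed_dual_dotProductBilin⟩
  obtain ⟨x, hax, hpos⟩ := hfacet a ha
  have hx : x ∈ PointedCone.dual (dotProductBilin R R) (S : Set (N → R)) := by
    intro b hb
    rcases eq_or_ne b a with rfl | hba
    · exact hax.ge
    · exact (hpos b hb hba).le
  refine subsingleton_setOf_neg_of_dotProduct_posPart_nonneg fun v hav =>
    dotProduct_posPart_nonneg_of_supClosed hC ha hx hax fun b hb hbx => ?_
  rcases eq_or_ne b a with rfl | hba
  · exact hav.ge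
  · exact absurd hbx (hpos b hb hba).ne'

end LinearOrderedRing

/-- A full-dimensional cone, given by an irredundant (facet-defining) system of
homogeneous linear inequalities, is closed under componentwise maximum if and only if
each inequality has at most one negative coefficient. -/
theorem stmt7 {N : Type*} [Fintype N] (S : Finset (N → ℝ))
    (hS0 : ∀ a ∈ S, a ≠ 0)
    (hfull : ∃ x : N → ℝ, ∀ a ∈ S, 0 < ∑ i, a i * x i)
    (hfacet : ∀ a ∈ S, ∃ x : N → ℝ,
      (∀ b ∈ S, 0 ≤ ∑ i, b i * x i) ∧
      (∑ i, a i * x i = 0) ∧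
      (∀ b ∈ S, b ≠ a → 0 < ∑ i, b i * x i)) :
    ((∀ x y : N → ℝ, (∀ a ∈ S, 0 ≤ ∑ i, a i * x i) → (∀ a ∈ S, 0 ≤ ∑ i, a i * y i) →
        ∀ a ∈ S, 0 ≤ ∑ i, a i * (x ⊔ y) i) ↔
      ∀ a ∈ S, {i : N | a i < 0}.Subsingleton) := by
  rw [← stmt7_general fun a ha => (hfacet a ha).imp fun _ hx => hx.2]
  exact ⟨fun h x hx y hy => h x y hx hy, fun h x y hx hy => h hx hy⟩
end

section
/- Let n ≥ 3 and let A ∈ Ê_n be nonzero. Then there exists a nonempty proper subset I of Fin n such that supp(δ(I)) ⊆ supp(A), i.e., A_{ij} ≠ 0 whenever i ∈ I and j ∉ I. (The oriented cut quasi-semimetrics are the elements of Ê_n with minimal nonempty support.) -/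
/-!
By the triangle inequality, the relation `d i j = 0` is a preorder on the points. Choose `a`, `b`
with `d a b ≠ 0`; then `{x | d a x = 0}` contains `a` but not `b`, and transitivity makes `d`
nonzero from each of its points to each point outside.
-/

section QuasiSemimetric

variable {α M : Type*}

/-- Quasi-semimetrics on an arbitrary type of points, with neither symmetry nor separation
required. Unlike in `QSM`, the indices in the inequalities are not assumed distinct. -/
structure IsQuasiSemimetric [Zero M] [Add M] [LE M] (d : α → α → M) : Prop where
  self_eq_zero : ∀ i, d i i = 0
  nonneg : ∀ i j, 0 ≤ d i j
  triangle : ∀ i j k, d i k ≤ d i j + d j k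

namespace IsQuasiSemimetric

variable [AddZeroClass M] [PartialOrder M] {d : α → α → M}

theorem of_ne [AddLeftMono M] (self_eq_zero : ∀ i, d i i = 0)
    (nonneg_of_ne : ∀ i j, i ≠ j → 0 ≤ d i j)
    (triangle_of_ne : ∀ i j k, i ≠ j → j ≠ k → i ≠ k → d i k ≤ d i j + d j k) :
    IsQuasiSemimetric d := by
  have nonneg (i j) : 0 ≤ d i j := by
    obtain rfl | hij := eq_or_ne i j
    · exact (self_eq_zero i).ge
    · exact nonneg_of_ne i j hij
  refine ⟨self_eq_zero, nonneg, fun i j k => ?_⟩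
  obtain rfl | hij := eq_or_ne i j
  · rw [self_eq_zero, zero_add]
  obtain rfl | hjk := eq_or_ne j k
  · rw [self_eq_zero, add_zero]
  obtain rfl | hik := eq_or_ne i k
  · rw [self_eq_zero]
    exact add_nonneg (nonneg i j) (nonneg j i)
  exact triangle_of_ne i j k hij hjk hik

theorem eq_zero_trans (hd : IsQuasiSemimetric d) {i j k : α} (hij : d i j = 0)
    (hjk : d j k = 0) : d i k = 0 := by
  refine le_antisymm ?_ (hd.nonneg i k)
  calc
    d i k ≤ d i j + d j k := hd.triangle i j k
    _ = 0 := by rw [hij, hjk, add_zero]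

end IsQuasiSemimetric

theorem stmt10_general [AddZeroClass M] [PartialOrder M] {d : α → α → M}
    (hd : IsQuasiSemimetric d) (hd0 : d ≠ 0) :
    ∃ I : Set α, I.Nonempty ∧ I ≠ Set.univ ∧ ∀ i ∈ I, ∀ j ∉ I, d i j ≠ 0 := by
  obtain ⟨a, ha⟩ := Function.ne_iff.mp hd0
  obtain ⟨b, hab⟩ := Function.ne_iff.mp ha
  exact ⟨{x | d a x = 0}, ⟨a, hd.self_eq_zero a⟩, (Set.ne_univ_iff_exists_notMem _).mpr ⟨b, hab⟩,
    fun _ hi _ hj hij => hj (hd.eq_zero_trans hi hij)⟩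

end QuasiSemimetric

/-- Every nonzero quasi-semimetric has support containing the support of some
oriented cut quasi-semimetric `δ(I)`. -/
theorem stmt10 (n : ℕ) (hn : 3 ≤ n) (A : Fin n → Fin n → ℝ)
    (hA : A ∈ QSM n) (hA0 : A ≠ 0) :
    ∃ I : Finset (Fin n), I.Nonempty ∧ I ≠ Finset.univ ∧
      ∀ i ∈ I, ∀ j ∉ I, A i j ≠ 0 := by
  obtain ⟨I, hI⟩ := stmt10_general (.of_ne hA.1 hA.2.1 hA.2.2) hA0
  lift I to Finset (Fin n) using I.toFinite
  exact ⟨I, mod_cast hI⟩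
end

section
/- Let n ≥ 3, let I be a nonempty proper subset of Fin n, and let A ∈ Ê_n satisfy supp(A) = supp(δ(I)), i.e., for all i ≠ j one has A_{ij} ≠ 0 if and only if i ∈ I and j ∉ I. Then there exists a real number c > 0 such that A = c · δ(I). -/
/-- The oriented cut quasi-semimetric `δ(I)`. -/
def cutQSM (n : ℕ) (I : Finset (Fin n)) : Fin n → Fin n → ℝ :=
  fun i j => if i ∈ I ∧ j ∉ I then 1 else 0

/-!
A pair at distance zero costs nothing in the triangle inequality. If `A` vanishes off the cut
`I × Iᶜ`, moving the first argument inside `I` or the second inside `Iᶜ` is therefore free, in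
either direction, so `A` takes a single value on the cut.
-/

section QuasiSemimetric

variable {X R : Type*}

/-- A quasi-semimetric on an arbitrary type: a nonnegative function vanishing on the diagonal and
satisfying the oriented triangle inequality. Unlike in `QSM`, the points are not required to be
distinct; `mem_QSM_iff` shows that this makes no difference. -/
structure IsQuasiSemimetric_s11 [AddZeroClass R] [LE R] (A : X → X → R) : Prop where
  self_eq_zero : ∀ x, A x x = 0
  nonneg : ∀ x y, 0 ≤ A x y
  triangle : ∀ x y z, A x z ≤ A x y + A y z

/-- The oriented cut quasi-semimetric `δ(I)` of an arbitrary set `I`, as the indicator function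
of `I × Iᶜ`. -/
noncomputable def orientedCut (R : Type*) [Zero R] [One R] (I : Set X) : X → X → R :=
  fun x y => (I ×ˢ Iᶜ).indicator 1 (x, y)

section Support

variable [AddZeroClass R] {A : X → X → R} {I : Set X}

theorem IsQuasiSemimetric_s11.le_of_eq_zero [Preorder R] (hA : IsQuasiSemimetric_s11 A) {x x' y y' : X}
    (hx : A x x' = 0) (hy : A y' y = 0) : A x y ≤ A x' y' :=
  calc
    A x y ≤ A x x' + A x' y := hA.triangle x x' y
    _ = A x' y := by rw [hx, zero_add]
    _ ≤ A x' y' + A y' y := hA.triangle x' y' y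
    _ = A x' y' := by rw [hy, add_zero]

theorem IsQuasiSemimetric_s11.eq_of_eq_zero_off_cut [PartialOrder R] (hA : IsQuasiSemimetric_s11 A)
    (hoff : ∀ x y, ¬(x ∈ I ∧ y ∉ I) → A x y = 0) {x x' y y' : X}
    (hx : x ∈ I) (hx' : x' ∈ I) (hy : y ∉ I) (hy' : y' ∉ I) : A x y = A x' y' := by
  have hI : ∀ {u v}, v ∈ I → A u v = 0 := fun hv => hoff _ _ fun h => h.2 hv
  have hIc : ∀ {u v}, u ∉ I → A u v = 0 := fun hu => hoff _ _ fun h => hu h.1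
  exact le_antisymm (hA.le_of_eq_zero (hI hx') (hIc hy')) (hA.le_of_eq_zero (hI hx) (hIc hy))

end Support

section Cut

variable [NonAssocSemiring R] [PartialOrder R] {A : X → X → R} {I : Set X}

theorem IsQuasiSemimetric_s11.eq_smul_orientedCut (hA : IsQuasiSemimetric_s11 A)
    (hoff : ∀ x y, ¬(x ∈ I ∧ y ∉ I) → A x y = 0) {a b : X} (ha : a ∈ I) (hb : b ∉ I) :
    A = A a b • orientedCut R I := by
  ext x y
  by_cases hxy : x ∈ I ∧ y ∉ I
  · simpa [orientedCut, hxy] using hA.eq_of_eq_zero_off_cut hoff hxy.1 ha hxy.2 hb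
  · simp [orientedCut, hxy, hoff x y hxy]

theorem stmt11_general [ZeroLEOneClass R] [Nontrivial R] (hA : IsQuasiSemimetric_s11 A)
    (hsupp : ∀ x y, x ≠ y → (A x y ≠ 0 ↔ x ∈ I ∧ y ∉ I)) :
    ∃ c : R, 0 < c ∧ A = c • orientedCut R I := by
  have hoff : ∀ x y, ¬(x ∈ I ∧ y ∉ I) → A x y = 0 := by
    intro x y hxy
    obtain rfl | hne := eq_or_ne x y
    · exact hA.self_eq_zero x
    · exact not_ne_iff.1 (mt (hsupp x y hne).1 hxy)
  by_cases hcut : ∃ a ∈ I, ∃ b, b ∉ I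
  · obtain ⟨a, ha, b, hb⟩ := hcut
    have hab : A a b ≠ 0 := (hsupp a b (ne_of_mem_of_not_mem ha hb)).2 ⟨ha, hb⟩
    exact ⟨A a b, (hA.nonneg a b).lt_of_ne' hab, hA.eq_smul_orientedCut hoff ha hb⟩
  · have hempty : ∀ x y, ¬(x ∈ I ∧ y ∉ I) := fun x y h => hcut ⟨x, h.1, y, h.2⟩
    refine ⟨1, one_pos, ?_⟩
    ext x y
    simp [orientedCut, hempty x y, hoff x y (hempty x y)]

end Cut

end QuasiSemimetric

theorem mem_QSM_iff {n : ℕ} {A : Fin n → Fin n → ℝ} : A ∈ QSM n ↔ IsQuasiSemimetric_s11 A := by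
  refine ⟨fun ⟨hself, hnonneg, htriangle⟩ => ?_, fun hA => ⟨hA.self_eq_zero,
    fun i j _ => hA.nonneg i j, fun i j k _ _ _ => hA.triangle i j k⟩⟩
  have hnonneg' : ∀ i j, 0 ≤ A i j := by
    intro i j
    obtain rfl | hij := eq_or_ne i j
    · exact (hself i).ge
    · exact hnonneg i j hij
  refine ⟨hself, hnonneg', fun i j k => ?_⟩
  obtain rfl | hij := eq_or_ne i j
  · rw [hself, zero_add]
  obtain rfl | hjk := eq_or_ne j k
  · rw [hself, add_zero]
  obtain rfl | hik := eq_or_ne i k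
  · rw [hself]
    exact add_nonneg (hnonneg' i j) (hnonneg' j i)
  exact htriangle i j k hij hjk hik

theorem cutQSM_eq_orientedCut (n : ℕ) (I : Finset (Fin n)) :
    cutQSM n I = orientedCut ℝ (I : Set (Fin n)) := by
  ext i j
  simp [cutQSM, orientedCut, Set.indicator_apply]

/-- A quasi-semimetric whose support equals the support of an oriented cut
quasi-semimetric `δ(I)` is a positive scalar multiple of `δ(I)`. -/
theorem stmt11 (n : ℕ) (hn : 3 ≤ n) (I : Finset (Fin n))
    (hI : I.Nonempty) (hI' : I ≠ Finset.univ)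
    (A : Fin n → Fin n → ℝ) (hA : A ∈ QSM n)
    (hsupp : ∀ i j : Fin n, i ≠ j → (A i j ≠ 0 ↔ (i ∈ I ∧ j ∉ I))) :
    ∃ c : ℝ, 0 < c ∧ A = c • cutQSM n I := by
  rw [cutQSM_eq_orientedCut]
  exact stmt11_general (mem_QSM_iff.1 hA) hsupp
end
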